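/- arXiv:2404.14391 — 2 statements merged into one kernel-verified Lean document; each statement's English description precedes it below -/
import Mathlib

section
/- Let Δ⃗=(Δ_1,…,Δ_d) be pairwise disjoint closed intervals. If u⃗ ∈ L¹(ω_{Δ⃗}) satisfies ℋ_{Δ⃗} u⃗ = u⃗, then u⃗ = 0⃗. Likewise, for intervals Δ*_i ⊆ Δ_i, if u⃗ ∈ C(Δ⃗) satisfies ℋ_{Δ⃗*,Δ⃗} u⃗ = u⃗, then u⃗ = 0⃗. -/
open MeasureTheory Set Filter Topology Polynomial

noncomputable section

/-- The arcsine distribution `dω_[a,b](x) = dx/(π √((x−a)(b−x)))` on `[a,b]`. -/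
def arcsineMeasure (a b : ℝ) : Measure ℝ :=
  (volume.restrict (Set.Icc a b)).withDensity
    fun x => ENNReal.ofReal (1 / (Real.pi * Real.sqrt ((x - a) * (b - x))))

/-- The branch of `√((z−a)(z−b))` holomorphic off `[a,b]` with `w(z) = z + O(1)` at `∞`. -/
def wBranch (a b : ℝ) (z : ℂ) : ℂ :=
  (z - a) * Complex.exp ((1 / 2 : ℂ) * Complex.log ((z - b) / (z - a)))

/-- Cauchy transform `∫ u(x)/(z−x) dω_[a,b](x)`. -/
def cauchyT (a b : ℝ) (u : ℝ → ℝ) (z : ℂ) : ℂ :=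
  ∫ x, (u x : ℂ) / (z - (x : ℂ)) ∂(arcsineMeasure a b)

/-- `H_Δ u`, the harmonic extension of `u` off `Δ = [a,b]`. -/
def harmExt (a b : ℝ) (u : ℝ → ℝ) (z : ℂ) : ℝ :=
  (wBranch a b z * cauchyT a b u z).re

/-- The outer function `Ω_Δ(f,z) := exp( w_Δ(z) ∫ log f(x)/(z−x) dω_Δ(x) )`. -/
def OmegaFun (a b : ℝ) (f : ℝ → ℝ) (z : ℂ) : ℂ :=
  Complex.exp (wBranch a b z * cauchyT a b (fun x => Real.log (f x)) z)

/-- The value of `Ω_Δ(f,·)` at infinity: `exp( ∫ log f dω_Δ )`. -/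
def OmegaInf (a b : ℝ) (f : ℝ → ℝ) : ℝ :=
  Real.exp (∫ x, Real.log (f x) ∂(arcsineMeasure a b))

/-- Radon–Nikodym derivative `μ′` of `μ` with respect to Lebesgue measure. -/
def lebDeriv (μ : Measure ℝ) (x : ℝ) : ℝ := (μ.rnDeriv volume x).toReal

/-- `v_Δ(x) = π μ′(x) √((x−a)(b−x))`, the density of `μ|_Δ` w.r.t. the arcsine law. -/
def vDens (μ : Measure ℝ) (a b : ℝ) (x : ℝ) : ℝ :=
  Real.pi * lebDeriv μ x * Real.sqrt ((x - a) * (b - x))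

/-- Szegő function `G(e^h μ|_[a,b], z)`. -/
def szegoG (μ : Measure ℝ) (a b : ℝ) (h : ℝ → ℝ) (z : ℂ) : ℂ :=
  OmegaFun a b (fun x => Real.sqrt (Real.exp (h x) * vDens μ a b x)) z

/-- Szegő function `G(e^h μ|_[a,b], ·)` at infinity. -/
def szegoGInf (μ : Measure ℝ) (a b : ℝ) (h : ℝ → ℝ) : ℝ :=
  OmegaInf a b fun x => Real.sqrt (Real.exp (h x) * vDens μ a b x)

/-- Support of a measure on `ℝ`. -/
def msupp (μ : Measure ℝ) : Set ℝ := {x | ∀ ε > 0, 0 < μ (Metric.ball x ε)}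

def suppInf (μ : Measure ℝ) : ℝ := sInf (msupp μ)
def suppSup (μ : Measure ℝ) : ℝ := sSup (msupp μ)

/-- `Δ(μ)`, the convex hull of the support of `μ`. -/
def convHullSupp (μ : Measure ℝ) : Set ℝ := Set.Icc (suppInf μ) (suppSup μ)

/-- Logarithmic potential `V^ω(x) = −∫ log|x−t| dω(t)`. -/
def logPot (ω : Measure ℝ) (x : ℝ) : ℝ := -∫ t, Real.log |x - t| ∂ω

/-- The Szegő condition `μ ∈ Sz([a,b])`. -/
def SzCond (μ : Measure ℝ) (a b : ℝ) : Prop :=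
  Integrable (fun x => Real.log (lebDeriv μ x)) (arcsineMeasure a b)

/-- The increasing affine map of `[a,b]` onto `[c,d]`. -/
def affIcc (a b c d : ℝ) (x : ℝ) : ℝ := c + ((d - c) / (b - a)) * (x - a)

/-- The uniform Szegő condition `μ ∈ USz([a,b])`. -/
def USzCond (μ : Measure ℝ) (a b : ℝ) : Prop :=
  SzCond μ a b ∧
  ∀ A B : ℕ → ℝ, (∀ n, A n < B n) → (∀ n, Set.Icc (A n) (B n) ⊆ convHullSupp μ) →
    Tendsto A atTop (𝓝 a) → Tendsto B atTop (𝓝 b) →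
    (∀ᶠ n in atTop, SzCond μ (A n) (B n)) ∧
    Tendsto (fun n => ∫ x,
        |Real.log (lebDeriv μ x) - Real.log (lebDeriv μ (affIcc a b (A n) (B n) x))|
          ∂(arcsineMeasure a b)) atTop (𝓝 0)

/-- `P` is the `n`-th monic orthogonal polynomial with respect to `ν`. -/
def IsMonicOP (ν : Measure ℝ) (n : ℕ) (P : Polynomial ℝ) : Prop :=
  P.Monic ∧ P.natDegree = n ∧ ∀ k < n, ∫ x, x ^ k * P.eval x ∂ν = 0

/-- The weighted measure `e^θ μ`. -/
def expWt (μ : Measure ℝ) (θ : ℝ → ℝ) : Measure ℝ :=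
  μ.withDensity fun x => ENNReal.ofReal (Real.exp (θ x))

/-- An Angelesco system of `d` measures, with `Δ(μ_i) = [lo i, hi i]`. -/
structure Angelesco (d : ℕ) (μ : Fin d → Measure ℝ) (lo hi : Fin d → ℝ) : Prop where
  two_le : 2 ≤ d
  bounded : ∀ i, Bornology.IsBounded (msupp (μ i))
  infinite : ∀ i, (msupp (μ i)).Infinite
  lo_eq : ∀ i, lo i = suppInf (μ i)
  hi_eq : ∀ i, hi i = suppSup (μ i)
  sep : ∀ i j, i < j → hi i < lo j

/-- The vector equilibrium measure `(ω_1,…,ω_d)` with parameter `c`,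
with `supp ω_i = [A i, B i] ⊆ [lo i, hi i]` and masses `c i`. -/
structure VecEquil (d : ℕ) (lo hi : Fin d → ℝ) (c : Fin d → ℝ)
    (ω : Fin d → Measure ℝ) (A B : Fin d → ℝ) : Prop where
  endpoints : ∀ i, lo i ≤ A i ∧ A i < B i ∧ B i ≤ hi i
  supp : ∀ i, msupp (ω i) = Set.Icc (A i) (B i)
  mass : ∀ i, ω i Set.univ = ENNReal.ofReal (c i)
  equil : ∀ j, ∃ ℓ : ℝ,
    (∀ x ∈ Set.Icc (A j) (B j), logPot (ω j) x + ∑ i, logPot (ω i) x = ℓ) ∧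
    (∀ x ∈ Set.Icc (lo j) (hi j) \ Set.Icc (A j) (B j),
        ℓ < logPot (ω j) x + ∑ i, logPot (ω i) x)

/-- The vector `(S_1,…,S_d)` of conjugate-symmetric outer functions in `H²(D_{Δ_i})`,
positive at infinity, with boundary moduli `g_i` satisfying
`|S_{i±}|² ∏_{j≠i} S_j = v_i` a.e. on `Δ_i` (outer functions positive at infinity are
recovered from their boundary moduli by `S_i = Ω_{Δ_i}(g_i, ·)`). -/
def IsSzegoVector (d : ℕ) (A B : Fin d → ℝ) (v : Fin d → ℝ → ℝ)
    (g : Fin d → ℝ → ℝ) (S : Fin d → ℂ → ℂ) : Prop :=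
  (∀ i x, 0 ≤ g i x) ∧
  (∀ i, Integrable (fun x => Real.log (g i x)) (arcsineMeasure (A i) (B i))) ∧
  (∀ i, S i = fun z => OmegaFun (A i) (B i) (g i) z) ∧
  (∀ i, ∀ᵐ x ∂(arcsineMeasure (A i) (B i)),
    (g i x) ^ 2 * ∏ j ∈ Finset.univ.erase i, (S j (x : ℂ)).re = v i x)

/-- The operator `ℋ` with component `i` equal to `−(1/2) Σ_{j≠i} H_{[A j, B j]} u_j`. -/
def calH (d : ℕ) (A B : Fin d → ℝ) (u : Fin d → ℝ → ℝ) (i : Fin d) (x : ℝ) : ℝ :=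
  -(1 / 2) * ∑ j ∈ Finset.univ.erase i, harmExt (A j) (B j) (u j) (x : ℂ)

/-- sup norm over `[a,b]`. -/
def supIcc (a b : ℝ) (f : ℝ → ℝ) : ℝ := sSup ((fun x => |f x|) '' Set.Icc a b)

/-- Norm of `C(Δ⃗)`. -/
def vecCNorm (d : ℕ) (A B : Fin d → ℝ) (u : Fin d → ℝ → ℝ) : ℝ :=
  ∑ i, supIcc (A i) (B i) (u i)

/-- Norm of `C¹(Δ⃗)`. -/
def vecC1Norm (d : ℕ) (A B : Fin d → ℝ) (u : Fin d → ℝ → ℝ) : ℝ :=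
  ∑ i, (supIcc (A i) (B i) (u i) +
    supIcc (A i) (B i) (derivWithin (u i) (Set.Icc (A i) (B i))))

/-- membership in `C(Δ⃗)`. -/
def memVecC (d : ℕ) (A B : Fin d → ℝ) (u : Fin d → ℝ → ℝ) : Prop :=
  ∀ i, ContinuousOn (u i) (Set.Icc (A i) (B i))

/-- membership in `C¹(Δ⃗)`. -/
def memVecC1 (d : ℕ) (A B : Fin d → ℝ) (u : Fin d → ℝ → ℝ) : Prop :=
  ∀ i, ContDiffOn ℝ 1 (u i) (Set.Icc (A i) (B i))

/-- `|w_Δ(x)|` for real `x`. -/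
def wAbs (p q x : ℝ) : ℝ := Real.sqrt |(x - p) * (x - q)|

/-- Riemann–Liouville type fractional integral of order 1/2. -/
def fracInt (γ : ℝ) (θ : ℝ → ℝ) (x : ℝ) : ℝ :=
  (Real.sqrt Real.pi)⁻¹ * ∫ t in γ..x, θ t / Real.sqrt |x - t|




/-- normalized Lebesgue measure on `(0,π)` -/
def sg : Measure ℝ := ENNReal.ofReal (1 / Real.pi) • volume.restrict (Set.Ioo 0 Real.pi)

/-- parametrization of the interval -/
def xp (a b θ : ℝ) : ℝ := (a + b) / 2 + (b - a) / 2 * Real.cos θ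

lemma xp_continuous (a b : ℝ) : Continuous (xp a b) := by
  unfold xp; fun_prop

lemma xp_image {a b : ℝ} (h : a < b) : xp a b '' Set.Ioo 0 Real.pi = Set.Ioo a b := by
  ext x
  constructor
  · rintro ⟨θ, hθ, rfl⟩
    have h1 : Real.cos θ < 1 := by
      have := Real.strictAntiOn_cos (a := 0) (b := θ) ⟨le_rfl, Real.pi_pos.le⟩ ⟨hθ.1.le, hθ.2.le⟩ hθ.1
      simpa using this
    have h2 : -1 < Real.cos θ := by
      have := Real.strictAntiOn_cos (a := θ) (b := Real.pi) ⟨hθ.1.le, hθ.2.le⟩ ⟨Real.pi_pos.le, le_rfl⟩ hθ.2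
      simpa using this
    unfold xp
    constructor <;> nlinarith
  · rintro ⟨h1, h2⟩
    have hr : 0 < b - a := by linarith
    refine ⟨Real.arccos ((2 * x - a - b) / (b - a)), ⟨?_, ?_⟩, ?_⟩
    · rw [Real.arccos_pos, div_lt_one hr]; linarith
    · have : Real.arccos ((2 * x - a - b) / (b - a)) ≠ Real.pi := by
        intro h
        rw [Real.arccos_eq_pi, div_le_iff₀ hr] at h
        linarith
      exact lt_of_le_of_ne (Real.arccos_le_pi _) this
    · unfold xp
      rw [Real.cos_arccos]
      · field_simp; ring
      · rw [le_div_iff₀ hr]; linarith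
      · rw [div_le_one hr]; linarith

lemma arcsine_map {a b : ℝ} (h : a < b) : arcsineMeasure a b = Measure.map (xp a b) sg := by
  ext s hs
  rw [Measure.map_apply (xp_continuous a b).measurable hs]
  unfold arcsineMeasure sg
  rw [withDensity_apply _ hs, ← lintegral_indicator hs, Measure.restrict_congr_set Ioo_ae_eq_Icc.symm,
    ← xp_image h, lintegral_image_eq_lintegral_abs_deriv_mul (f' := fun θ => (b - a) / 2 * (-Real.sin θ))
      measurableSet_Ioo]
  · rw [Measure.smul_apply, ← lintegral_indicator_one ((xp_continuous a b).measurable hs), smul_eq_mul,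
      ← lintegral_const_mul']
    · apply setLIntegral_congr_fun measurableSet_Ioo
      intro θ hθ
      have hs : 0 < Real.sin θ := Real.sin_pos_of_mem_Ioo hθ
      have e1 : (xp a b θ - a) * (b - xp a b θ) = ((b - a) / 2 * Real.sin θ) ^ 2 := by
        unfold xp; rw [mul_pow, Real.sin_sq]; ring
      have hp : 0 < (b - a) / 2 * Real.sin θ := by
        apply mul_pos _ hs; linarith
      by_cases hm : xp a b θ ∈ s
      · have hm' : θ ∈ xp a b ⁻¹' s := hm
        simp only [Set.indicator_of_mem hm, Set.indicator_of_mem hm', Pi.one_apply]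
        rw [e1, Real.sqrt_sq hp.le, ← ENNReal.ofReal_mul (abs_nonneg _), mul_one]
        congr 1
        rw [mul_neg, abs_neg, abs_of_pos hp]
        have := Real.pi_pos
        have hba : b - a ≠ 0 := by linarith
        field_simp
      · have hm' : θ ∉ xp a b ⁻¹' s := hm
        simp only [Set.indicator_of_notMem hm, Set.indicator_of_notMem hm', mul_zero]
    · exact ENNReal.ofReal_ne_top
  · intro θ _
    unfold xp
    exact (((Real.hasDerivAt_cos θ).const_mul _).const_add _).hasDerivWithinAt
  · intro x hx y hy hxy
    unfold xp at hxy
    apply Real.injOn_cos ⟨hx.1.le, hx.2.le⟩ ⟨hy.1.le, hy.2.le⟩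
    have : (b - a) / 2 ≠ 0 := by linarith
    have h3 := add_left_cancel hxy
    exact mul_left_cancel₀ this h3

instance sg_prob : IsProbabilityMeasure sg := by
  constructor
  unfold sg
  rw [Measure.smul_apply, Measure.restrict_apply_univ, Real.volume_Ioo, smul_eq_mul,
    ← ENNReal.ofReal_mul (by positivity)]
  have := Real.pi_pos
  simp [this.ne']

lemma integral_sg {E : Type*} [NormedAddCommGroup E] [NormedSpace ℝ E] (f : ℝ → E) :
    ∫ θ, f θ ∂sg = (1 / Real.pi) • ∫ θ in (0:ℝ)..Real.pi, f θ := by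
  unfold sg
  rw [integral_smul_measure, intervalIntegral.integral_of_le Real.pi_pos.le,
    integral_Ioc_eq_integral_Ioo, ENNReal.toReal_ofReal (by positivity)]

lemma integral_cos_sg {k : ℤ} (hk : k ≠ 0) : ∫ θ, Real.cos (k * θ) ∂sg = 0 := by
  rw [integral_sg, intervalIntegral.integral_comp_mul_left (fun x => Real.cos x) (by exact_mod_cast hk)]
  simp [Real.sin_int_mul_pi]

lemma intg_of_cont {E : Type*} [NormedAddCommGroup E] {f : ℝ → E} (hf : Continuous f) : Integrable f sg := by
  unfold sg
  refine Integrable.smul_measure ?_ ENNReal.ofReal_ne_top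
  exact (hf.integrableOn_Icc (a := 0) (b := Real.pi)).mono_set Ioo_subset_Icc_self

lemma integral_cos_mul_cos {n m : ℕ} (hm : 1 ≤ m) :
    ∫ θ, Real.cos (n * θ) * Real.cos (m * θ) ∂sg = if n = m then 1 / 2 else 0 := by
  have e : ∀ θ : ℝ, Real.cos (n * θ) * Real.cos (m * θ) =
      1 / 2 * Real.cos (((n:ℤ) - m : ℤ) * θ) + 1 / 2 * Real.cos (((n:ℤ) + m : ℤ) * θ) := by
    intro θ
    push_cast
    rw [sub_mul, add_mul, Real.cos_sub, Real.cos_add]; ring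
  simp_rw [e]
  rw [integral_add (intg_of_cont (by fun_prop)) (intg_of_cont (by fun_prop)), integral_const_mul,
    integral_const_mul, integral_cos_sg (k := (n:ℤ) + m) (by omega)]
  split_ifs with h
  · subst h; simp
  · rw [integral_cos_sg (by omega)]; simp

lemma integral_cos_nat {m : ℕ} (hm : 1 ≤ m) : ∫ θ, Real.cos (m * θ) ∂sg = 0 := by
  have := integral_cos_sg (k := (m:ℤ)) (by omega)
  simpa using this

lemma ae_sg_mem : ∀ᵐ θ ∂sg, θ ∈ Set.Ioo 0 Real.pi := by
  unfold sg
  exact Measure.ae_smul_measure (ae_restrict_mem measurableSet_Ioo) _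



def sqz (a b : ℝ) (z : ℂ) : ℂ := Complex.exp ((1 / 2 : ℂ) * Complex.log ((z - b) / (z - a)))

def qf (a b : ℝ) (z : ℂ) : ℂ := (1 - sqz a b z) / (1 + sqz a b z)

lemma sqz_sq {a b : ℝ} {z : ℂ} (ha : z ≠ a) (hb : z ≠ b) :
    sqz a b z ^ 2 * (z - a) = z - b := by
  have ha' : z - a ≠ 0 := sub_ne_zero.2 ha
  have hb' : z - b ≠ 0 := sub_ne_zero.2 hb
  unfold sqz
  rw [← Complex.exp_nat_mul]
  push_cast
  rw [show (2:ℂ) * (1 / 2 * Complex.log ((z - b) / (z - a))) = Complex.log ((z - b) / (z - a)) by ring,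
    Complex.exp_log (div_ne_zero hb' ha')]
  field_simp

lemma sqz_re (a b : ℝ) (z : ℂ) : 0 ≤ (sqz a b z).re := by
  unfold sqz
  rw [Complex.exp_re]
  refine mul_nonneg (Real.exp_pos _).le (Real.cos_nonneg_of_mem_Icc ?_)
  have e : ((1 / 2 : ℂ) * Complex.log ((z - b) / (z - a))).im = ((z - b) / (z - a)).arg / 2 := by
    rw [show (1 / 2 : ℂ) = ((1 / 2 : ℝ) : ℂ) by push_cast; rfl, Complex.im_ofReal_mul, Complex.log_im]; ring
  rw [e]
  have h1 := Complex.neg_pi_lt_arg ((z - b) / (z - a))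
  have h2 := Complex.arg_le_pi ((z - b) / (z - a))
  constructor <;> linarith

lemma sqz_re_pos {a b : ℝ} {z : ℂ} (h : (z - b) / (z - a) ∈ Complex.slitPlane) : 0 < (sqz a b z).re := by
  unfold sqz
  rw [Complex.exp_re]
  refine mul_pos (Real.exp_pos _) (Real.cos_pos_of_mem_Ioo ?_)
  have e : ((1 / 2 : ℂ) * Complex.log ((z - b) / (z - a))).im = ((z - b) / (z - a)).arg / 2 := by
    rw [show (1 / 2 : ℂ) = ((1 / 2 : ℝ) : ℂ) by push_cast; rfl, Complex.im_ofReal_mul, Complex.log_im]; ring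
  rw [e]
  have h1 := Complex.neg_pi_lt_arg ((z - b) / (z - a))
  have h2 := lt_of_le_of_ne (Complex.arg_le_pi ((z - b) / (z - a))) (Complex.mem_slitPlane_iff_arg.1 h).1
  constructor <;> linarith

lemma one_add_sqz (a b : ℝ) (z : ℂ) : 1 + sqz a b z ≠ 0 := by
  intro h
  have := congrArg Complex.re h
  have h2 := sqz_re a b z
  simp at this
  linarith

lemma norm_qf_le (a b : ℝ) (z : ℂ) : ‖qf a b z‖ ≤ 1 := by
  unfold qf
  rw [norm_div, div_le_one (norm_pos_iff.2 (one_add_sqz a b z))]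
  have h2 := sqz_re a b z
  refine (sq_le_sq₀ (norm_nonneg _) (norm_nonneg _)).1 ?_
  rw [Complex.sq_norm, Complex.sq_norm, Complex.normSq_apply, Complex.normSq_apply]
  simp
  nlinarith

lemma norm_qf_lt {a b : ℝ} {z : ℂ} (h : (z - b) / (z - a) ∈ Complex.slitPlane) : ‖qf a b z‖ < 1 := by
  unfold qf
  rw [norm_div, div_lt_one (norm_pos_iff.2 (one_add_sqz a b z))]
  have h2 := sqz_re_pos h
  apply lt_of_pow_lt_pow_left₀ 2 (norm_nonneg _)
  rw [Complex.sq_norm, Complex.sq_norm, Complex.normSq_apply, Complex.normSq_apply]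
  simp
  nlinarith

lemma qf_ne {a b : ℝ} {z : ℂ} (hab : a < b) (ha : z ≠ a) (hb : z ≠ b) : qf a b z ≠ 0 := by
  unfold qf
  refine div_ne_zero ?_ (one_add_sqz a b z)
  intro h
  have h1 : sqz a b z = 1 := (sub_eq_zero.1 h).symm
  have h2 := sqz_sq ha hb
  rw [h1] at h2
  have h3 : (a:ℂ) = b := by linear_combination -h2
  exact hab.ne (by exact_mod_cast h3)

lemma qf_x {a b : ℝ} {z : ℂ} (ha : z ≠ a) (hb : z ≠ b) (θ : ℝ) :
    4 * qf a b z * (z - xp a b θ) = (b - a) * (1 - 2 * qf a b z * Real.cos θ + qf a b z ^ 2) := by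
  have h1 := one_add_sqz a b z
  have h2 := sqz_sq ha hb
  unfold qf xp
  push_cast
  set s := sqz a b z
  set c := Complex.cos θ
  field_simp
  linear_combination (-8) * h2

lemma qf_w {a b : ℝ} {z : ℂ} (ha : z ≠ a) (hb : z ≠ b) :
    4 * qf a b z * wBranch a b z = (b - a) * (1 - qf a b z ^ 2) := by
  have h1 := one_add_sqz a b z
  have h2 := sqz_sq ha hb
  have h3 : wBranch a b z = (z - a) * sqz a b z := rfl
  rw [h3]
  unfold qf
  set s := sqz a b z
  field_simp
  linear_combination (-4 * s) * h2

lemma slit_im {a b : ℝ} (hab : a < b) {z : ℂ} (hz : 0 < z.im) : 0 < ((z - b) / (z - a)).im := by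
  have h0 : z - a ≠ 0 := by
    intro h; have := congrArg Complex.im h; simp at this; linarith
  have : (z - b) / (z - a) = 1 - (b - a : ℝ) * (z - a)⁻¹ := by
    push_cast; field_simp; ring
  rw [this, Complex.sub_im, Complex.im_ofReal_mul, Complex.inv_im]
  have h1 : 0 < Complex.normSq (z - a) := Complex.normSq_pos.2 h0
  have : 0 < (b - a) * (z.im / Complex.normSq (z - a)) := by
    apply mul_pos (by linarith) (by positivity)
  simp
  rw [neg_div, mul_neg]
  simpa using this

lemma slit_real {a b x : ℝ} (hab : a < b) (hx : x ∉ Set.Icc a b) :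
    (((x:ℂ) - b) / (x - a)) ∈ Complex.slitPlane := by
  rw [← Complex.ofReal_sub, ← Complex.ofReal_sub, ← Complex.ofReal_div, Complex.ofReal_mem_slitPlane]
  by_cases h : x < a
  · exact div_pos_of_neg_of_neg (by linarith) (by linarith)
  · have : b < x := by
      by_contra h'
      exact hx ⟨by linarith, by linarith⟩
    exact div_pos (by linarith) (by linarith)

lemma qf_tendsto {a b x : ℝ} (hab : a < b) (ha : x ≠ a) (hb : x ≠ b) :
    Tendsto (fun e : ℝ => qf a b (x + e * Complex.I)) (𝓝[>] 0) (𝓝 (qf a b x)) := by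
  have h0 : (x:ℂ) - a ≠ 0 := by rw [sub_ne_zero]; exact_mod_cast ha
  have t1 : Tendsto (fun e : ℝ => ((x + e * Complex.I : ℂ) - b) / ((x + e * Complex.I : ℂ) - a))
      (𝓝[>] 0) (𝓝[{z | 0 ≤ z.im}] (((x:ℂ) - b) / (x - a))) := by
    rw [tendsto_nhdsWithin_iff]
    constructor
    · have : ContinuousAt (fun e : ℝ => ((x + e * Complex.I : ℂ) - b) / ((x + e * Complex.I : ℂ) - a)) 0 := by
        refine ContinuousAt.div (by fun_prop) (by fun_prop) (by simpa using h0)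
      have h := this.tendsto.mono_left (nhdsWithin_le_nhds (s := Set.Ioi 0))
      simpa using h
    · filter_upwards [self_mem_nhdsWithin] with e he
      refine (slit_im hab ?_).le
      simpa using he
  have t2 : Tendsto Complex.log (𝓝[{z | 0 ≤ z.im}] (((x:ℂ) - b) / (x - a)))
      (𝓝 (Complex.log (((x:ℂ) - b) / (x - a)))) := by
    by_cases hs : (((x:ℂ) - b) / (x - a)) ∈ Complex.slitPlane
    · exact (continuousAt_clog hs).tendsto.mono_left nhdsWithin_le_nhds
    · have e : ((x:ℂ) - b) / (x - a) = (((x - b) / (x - a) : ℝ) : ℂ) := by push_cast; rfl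
      apply Complex.continuousWithinAt_log_of_re_neg_of_im_zero
      · rw [e, Complex.ofReal_mem_slitPlane] at hs
        rw [e, Complex.ofReal_re]
        refine lt_of_le_of_ne (not_lt.1 hs) ?_
        exact div_ne_zero (sub_ne_zero.2 hb) (sub_ne_zero.2 ha)
      · rw [e, Complex.ofReal_im]
  have t3 : Tendsto (fun e : ℝ => sqz a b (x + e * Complex.I)) (𝓝[>] 0) (𝓝 (sqz a b x)) := by
    unfold sqz
    exact (Complex.continuous_exp.tendsto _).comp ((t2.comp t1).const_mul _)
  exact (tendsto_const_nhds.sub t3).div (tendsto_const_nhds.add t3) (one_add_sqz a b x)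

lemma qf_measurable (a b : ℝ) : Measurable (qf a b) := by
  unfold qf sqz
  fun_prop

lemma xp_ne {a b θ : ℝ} (h : a < b) (hθ : θ ∈ Set.Ioo 0 Real.pi) : xp a b θ ≠ a ∧ xp a b θ ≠ b := by
  have : xp a b θ ∈ Set.Ioo a b := by rw [← xp_image h]; exact ⟨θ, hθ, rfl⟩
  exact ⟨this.1.ne', this.2.ne⟩

lemma xp_mem {a b : ℝ} (h : a < b) (θ : ℝ) : xp a b θ ∈ Set.Icc a b := by
  unfold xp
  have h1 := Real.cos_le_one θ
  have h2 := Real.neg_one_le_cos θ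
  constructor <;> nlinarith

lemma qf_self {a b θ : ℝ} (h : a < b) (hθ : θ ∈ Set.Ioo 0 Real.pi) (n : ℕ) :
    (qf a b (xp a b θ) ^ n).re = Real.cos (n * θ) := by
  obtain ⟨ha, hb⟩ := xp_ne h hθ
  have h1 := qf_x (z := (xp a b θ : ℂ)) (a := a) (b := b) (by exact_mod_cast ha) (by exact_mod_cast hb) θ
  set q := qf a b (xp a b θ)
  have h2 : (b - a : ℂ) ≠ 0 := by rw [sub_ne_zero]; exact_mod_cast h.ne'
  have h3 : 1 - 2 * q * Real.cos θ + q ^ 2 = 0 := by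
    rw [sub_self, mul_zero] at h1
    exact (mul_eq_zero.1 h1.symm).resolve_left h2
  have h4 : (q - Complex.exp (θ * Complex.I)) * (q - Complex.exp (-θ * Complex.I)) = 0 := by
    have e1 : Complex.exp (θ * Complex.I) * Complex.exp (-θ * Complex.I) = 1 := by
      rw [← Complex.exp_add]; simp
    have e2 : Complex.exp (θ * Complex.I) + Complex.exp (-θ * Complex.I) = 2 * Real.cos θ := by
      push_cast; exact (Complex.two_cos _).symm
    linear_combination h3 - q * e2 + e1
  rcases mul_eq_zero.1 h4 with h5 | h5
  · rw [sub_eq_zero.1 h5, ← Complex.exp_nat_mul, ← mul_assoc]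
    rw [show ((n:ℂ) * θ) = ((n * θ : ℝ) : ℂ) by push_cast; rfl, Complex.exp_ofReal_mul_I_re]
  · rw [sub_eq_zero.1 h5, ← Complex.exp_nat_mul, ← mul_assoc]
    rw [show ((n:ℂ) * -θ) = ((-(n * θ) : ℝ) : ℂ) by push_cast; ring, Complex.exp_ofReal_mul_I_re, Real.cos_neg]



/-- cosine coefficients -/
def cf (a b : ℝ) (u : ℝ → ℝ) (n : ℕ) : ℝ := ∫ θ, u (xp a b θ) * Real.cos (n * θ) ∂sg

lemma zeta_facts (q : ℂ) (hq : ‖q‖ < 1) (θ : ℝ) :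
    ∃ ζ ζ' : ℂ, ‖ζ‖ < 1 ∧ ‖ζ'‖ < 1 ∧ (1 - ζ) * (1 - ζ') = 1 - 2 * q * Real.cos θ + q ^ 2 ∧
      (∀ n : ℕ, ζ ^ n + ζ' ^ n = 2 * q ^ n * (Real.cos (n * θ) : ℝ)) ∧ ζ * ζ' = q ^ 2 := by
  have e1 : Complex.exp (θ * Complex.I) * Complex.exp (-θ * Complex.I) = 1 := by
    rw [← Complex.exp_add]; simp
  have e2 : ∀ n : ℕ, Complex.exp (θ * Complex.I) ^ n + Complex.exp (-θ * Complex.I) ^ n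
      = 2 * (Real.cos (n * θ) : ℝ) := by
    intro n
    rw [← Complex.exp_nat_mul, ← Complex.exp_nat_mul]
    push_cast
    rw [Complex.two_cos]
    congr 2 <;> ring
  have e3 := e2 1
  simp only [pow_one, Nat.cast_one, one_mul] at e3
  refine ⟨q * Complex.exp (θ * Complex.I), q * Complex.exp (-θ * Complex.I), ?_, ?_, ?_, ?_, ?_⟩
  · rw [norm_mul, Complex.norm_exp_ofReal_mul_I, mul_one]; exact hq
  · rw [norm_mul, ← Complex.ofReal_neg, Complex.norm_exp_ofReal_mul_I, mul_one]; exact hq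
  · linear_combination (-q) * e3 + q ^ 2 * e1
  · intro n
    rw [mul_pow, mul_pow]
    linear_combination q ^ n * e2 n
  · linear_combination q ^ 2 * e1

lemma poisson_hasSum {q : ℂ} (hq : ‖q‖ < 1) (θ : ℝ) :
    HasSum (fun n : ℕ => 2 * q ^ (n + 1) * (Real.cos ((n + 1 : ℕ) * θ) : ℝ))
      ((1 - q ^ 2) / (1 - 2 * q * Real.cos θ + q ^ 2) - 1) := by
  obtain ⟨ζ, ζ', h1, h2, h3, h4, h5⟩ := zeta_facts q hq θ
  have k1 : 1 - ζ ≠ 0 := by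
    intro h; rw [← sub_eq_zero.1 h] at h1; simp at h1
  have k2 : 1 - ζ' ≠ 0 := by
    intro h; rw [← sub_eq_zero.1 h] at h2; simp at h2
  have := ((hasSum_geometric_of_norm_lt_one h1).mul_left ζ).add
    ((hasSum_geometric_of_norm_lt_one h2).mul_left ζ')
  have e1 : (fun n : ℕ => 2 * q ^ (n + 1) * ((Real.cos ((n + 1 : ℕ) * θ) : ℝ) : ℂ)) =
      fun n => ζ * ζ ^ n + ζ' * ζ' ^ n := by
    ext n
    rw [← h4]; ring
  have e2 : (1 - q ^ 2) / (1 - 2 * q * Real.cos θ + q ^ 2) - 1 = ζ * (1 - ζ)⁻¹ + ζ' * (1 - ζ')⁻¹ := by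
    rw [← h3, ← h5]; field_simp; ring
  rw [e1, e2]
  exact this

lemma harmExt_hasSum {a b : ℝ} (hab : a < b) {u : ℝ → ℝ} (hu : Integrable u (arcsineMeasure a b)) {x : ℝ}
    (hx : x ∉ Set.Icc a b) :
    HasSum (fun n : ℕ => 2 * (qf a b x ^ (n + 1)).re * cf a b u (n + 1))
      (harmExt a b u x - cf a b u 0) := by
  set q := qf a b x with hq
  have hq1 : ‖q‖ < 1 := norm_qf_lt (slit_real hab hx)
  have ha : (x:ℂ) ≠ a := by
    intro h; apply hx; rw [Complex.ofReal_inj] at h; subst h; exact ⟨le_rfl, hab.le⟩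
  have hb : (x:ℂ) ≠ b := by
    intro h; apply hx; rw [Complex.ofReal_inj] at h; subst h; exact ⟨hab.le, le_rfl⟩
  have hq0 : q ≠ 0 := qf_ne hab ha hb
  have hu' := hu
  rw [arcsine_map hab] at hu'
  have hU : Integrable (fun θ => u (xp a b θ)) sg := hu'.comp_measurable (xp_continuous a b).measurable
  have hker : ∀ θ : ℝ, wBranch a b x / (x - xp a b θ) = (1 - q ^ 2) / (1 - 2 * q * Real.cos θ + q ^ 2) := by
    intro θ
    have h1 := qf_x ha hb θ
    have h2 := qf_w ha hb
    have h3 : (x:ℂ) - xp a b θ ≠ 0 := by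
      rw [sub_ne_zero]; intro h; rw [Complex.ofReal_inj] at h; rw [h] at hx; exact hx (xp_mem hab θ)
    have hba : (b - a : ℂ) ≠ 0 := by rw [sub_ne_zero]; exact_mod_cast hab.ne'
    rw [← hq] at h1 h2
    have h4 : 1 - 2 * q * Real.cos θ + q ^ 2 ≠ 0 := by
      intro h
      rw [h, mul_zero] at h1
      exact mul_ne_zero (mul_ne_zero (by norm_num) hq0) h3 h1
    rw [div_eq_div_iff h3 h4]
    apply mul_left_cancel₀ (mul_ne_zero hba (mul_ne_zero (by norm_num : (4:ℂ) ≠ 0) hq0))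
    linear_combination ((b - a) * (1 - 2 * q * Real.cos θ + q ^ 2)) * h2 - ((b-a)*(1 - q^2)) * h1
  have hC : wBranch a b x * cauchyT a b u x = ∫ θ, (u (xp a b θ) : ℂ) *
      ((1 - q ^ 2) / (1 - 2 * q * Real.cos θ + q ^ 2)) ∂sg := by
    unfold cauchyT
    rw [arcsine_map hab, integral_map (xp_continuous a b).aemeasurable, ← integral_const_mul]
    · congr 1; ext θ
      rw [← hker]; ring
    · have : AEStronglyMeasurable u (Measure.map (xp a b) sg) := hu'.aestronglyMeasurable
      have h2 : AEStronglyMeasurable (fun t : ℝ => ((x:ℂ) - t)⁻¹) (Measure.map (xp a b) sg) := by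
        apply Measurable.aestronglyMeasurable; fun_prop
      simp_rw [div_eq_mul_inv]
      exact (Complex.continuous_ofReal.comp_aestronglyMeasurable this).mul h2
  have hUc : Integrable (fun θ => (u (xp a b θ) : ℂ)) sg := hU.ofReal
  have key : HasSum (fun n : ℕ => ∫ θ, (u (xp a b θ) : ℂ) * (2 * q ^ (n + 1) * (Real.cos ((n + 1 : ℕ) * θ) : ℝ)) ∂sg)
      (∫ θ, (u (xp a b θ) : ℂ) * ((1 - q ^ 2) / (1 - 2 * q * Real.cos θ + q ^ 2) - 1) ∂sg) := by
    have hsm : Summable (fun n : ℕ => 2 * ‖q‖ ^ (n + 1)) := by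
      refine ((summable_geometric_of_lt_one (norm_nonneg q) hq1).mul_left (2 * ‖q‖)).congr ?_
      intro n; ring
    apply hasSum_integral_of_dominated_convergence (fun n θ => ‖u (xp a b θ)‖ * (2 * ‖q‖ ^ (n + 1)))
    · intro n
      refine hUc.aestronglyMeasurable.mul (Continuous.aestronglyMeasurable (by fun_prop))
    · intro n
      refine Eventually.of_forall fun θ => ?_
      rw [norm_mul, Complex.norm_real, norm_mul, norm_mul, norm_pow, Complex.norm_real]
      have : ‖Real.cos ((n + 1 : ℕ) * θ)‖ ≤ 1 := Real.abs_cos_le_one _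
      have h0 : 0 ≤ ‖q‖ ^ (n+1) := by positivity
      apply mul_le_mul_of_nonneg_left _ (norm_nonneg _)
      simp only [Complex.norm_ofNat]
      nlinarith
    · exact Eventually.of_forall fun θ => hsm.mul_left _
    · simp_rw [tsum_mul_left]
      exact hU.norm.mul_const _
    · exact Eventually.of_forall fun θ => (poisson_hasSum hq1 θ).mul_left _
  have key2 := Complex.hasSum_re key
  convert key2 using 1
  · ext n
    have : ∀ θ : ℝ, (u (xp a b θ) : ℂ) * (2 * q ^ (n + 1) * (Real.cos ((n + 1 : ℕ) * θ) : ℝ)) =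
      (2 * q ^ (n + 1)) * ((u (xp a b θ) * Real.cos ((n + 1 : ℕ) * θ) : ℝ) : ℂ) := by
      intro θ; push_cast; ring
    simp_rw [this]
    rw [integral_const_mul, integral_complex_ofReal]
    unfold cf
    rw [Complex.re_mul_ofReal]
    congr 1
    simp
  · simp_rw [mul_sub, mul_one]
    have hI : Integrable (fun θ => (u (xp a b θ) : ℂ) *
      ((1 - q ^ 2) / (1 - 2 * q * Real.cos θ + q ^ 2))) sg := by
      refine hUc.mul_bdd (c := ‖wBranch a b x‖ / (Metric.infDist x (Set.Icc a b))) ?_ ?_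
      · apply Measurable.aestronglyMeasurable; fun_prop
      · refine Eventually.of_forall fun θ => ?_
        rw [← hker, norm_div]
        have hd : 0 < Metric.infDist x (Set.Icc a b) :=
          (isClosed_Icc.notMem_iff_infDist_pos ⟨a, le_rfl, hab.le⟩).1 hx
        gcongr
        rw [← Complex.ofReal_sub, Complex.norm_real, ← dist_eq_norm]
        exact Metric.infDist_le_dist_of_mem (xp_mem hab θ)
    rw [integral_sub hI hUc, ← hC, Complex.sub_re, integral_complex_ofReal]
    unfold cf harmExt
    simp

lemma cf_bound {a b : ℝ} (hab : a < b) {u : ℝ → ℝ} (hu : Integrable u (arcsineMeasure a b)) (n : ℕ) :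
    |cf a b u n| ≤ ∫ θ, |u (xp a b θ)| ∂sg := by
  rw [arcsine_map hab] at hu
  have hU : Integrable (fun θ => u (xp a b θ)) sg := hu.comp_measurable (xp_continuous a b).measurable
  unfold cf
  refine (abs_integral_le_integral_abs).trans (integral_mono_of_nonneg ?_ hU.abs ?_)
  · exact Eventually.of_forall fun θ => abs_nonneg _
  · refine Eventually.of_forall fun θ => ?_
    simp only [abs_mul]
    exact mul_le_of_le_one_right (abs_nonneg _) (Real.abs_cos_le_one _)

lemma neg_log_hasSum {ζ : ℂ} (h : ‖ζ‖ < 1) :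
    HasSum (fun n : ℕ => (ζ ^ n).re / n) (-Real.log ‖1 - ζ‖) := by
  have := Complex.hasSum_re (Complex.hasSum_taylorSeries_neg_log h)
  simpa [Complex.log_re] using this

lemma log_hasSum {a b : ℝ} (hab : a < b) {z : ℂ} (hz : 0 < z.im) (φ : ℝ) :
    HasSum (fun n : ℕ => 2 * (qf a b z ^ n).re / n * Real.cos (n * φ))
      (-Real.log ‖z - xp a b φ‖ + Real.log (‖(b - a : ℂ)‖ / ‖4 * qf a b z‖)) := by
  have hne : ∀ y : ℝ, z ≠ y := by rintro y rfl; simp at hz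
  have hq0 := qf_ne hab (hne a) (hne b)
  have hq1 : ‖qf a b z‖ < 1 := norm_qf_lt (Or.inr (slit_im hab hz).ne')
  have hx := qf_x (hne a) (hne b) φ
  set q := qf a b z
  have hba : (b - a : ℂ) ≠ 0 := by rw [sub_ne_zero]; exact_mod_cast hab.ne'
  have hzx : z - xp a b φ ≠ 0 := sub_ne_zero.2 (hne _)
  have h4q : 4 * q ≠ 0 := mul_ne_zero (by norm_num) hq0
  obtain ⟨ζ, ζ', h1, h2, h3, h4, h5⟩ := zeta_facts q hq1 φ
  have k1 : 1 - ζ ≠ 0 := by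
    intro h; rw [← sub_eq_zero.1 h] at h1; simp at h1
  have k2 : 1 - ζ' ≠ 0 := by
    intro h; rw [← sub_eq_zero.1 h] at h2; simp at h2
  convert (neg_log_hasSum h1).add (neg_log_hasSum h2) using 1
  · ext n
    rw [← add_div, ← Complex.add_re, h4, Complex.re_mul_ofReal]
    simp
    ring
  · rw [← h3] at hx
    have := congrArg (fun w => Real.log ‖w‖) hx
    simp only [norm_mul (4 * q), norm_mul (b - a : ℂ), norm_mul (1 - ζ)] at this
    rw [Real.log_mul (norm_ne_zero_iff.2 h4q) (norm_ne_zero_iff.2 hzx),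
      Real.log_mul (norm_ne_zero_iff.2 hba) (mul_ne_zero (norm_ne_zero_iff.2 k1) (norm_ne_zero_iff.2 k2)),
      Real.log_mul (norm_ne_zero_iff.2 k1) (norm_ne_zero_iff.2 k2)] at this
    rw [Real.log_div (norm_ne_zero_iff.2 hba) (norm_ne_zero_iff.2 h4q)]
    linarith

lemma log_cont {a b : ℝ} {z : ℂ} (hz : 0 < z.im) : Continuous (fun φ => Real.log ‖z - xp a b φ‖) := by
  apply Continuous.log
  · have := xp_continuous a b
    fun_prop
  · intro φ
    rw [norm_ne_zero_iff, sub_ne_zero]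
    intro h
    rw [h] at hz; simp at hz

lemma log_cos {a b : ℝ} (hab : a < b) {z : ℂ} (hz : 0 < z.im) {m : ℕ} (hm : 1 ≤ m) :
    ∫ φ, -Real.log ‖z - xp a b φ‖ * Real.cos (m * φ) ∂sg = (qf a b z ^ m).re / m := by
  have hq1 : ‖qf a b z‖ < 1 := norm_qf_lt (Or.inr (slit_im hab hz).ne')
  set q := qf a b z
  set C := Real.log (‖(b - a : ℂ)‖ / ‖4 * q‖)
  have hsm : Summable (fun n : ℕ => 2 * ‖q‖ ^ n) :=
    (summable_geometric_of_lt_one (norm_nonneg q) hq1).mul_left 2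
  have key : HasSum (fun n : ℕ => ∫ φ, (2 * (q ^ n).re / n * Real.cos (n * φ)) * Real.cos (m * φ) ∂sg)
      (∫ φ, (-Real.log ‖z - xp a b φ‖ + C) * Real.cos (m * φ) ∂sg) := by
    apply hasSum_integral_of_dominated_convergence (fun n θ => (2 * ‖q‖ ^ n))
    · intro n
      exact Continuous.aestronglyMeasurable (by fun_prop)
    · intro n
      refine Eventually.of_forall fun θ => ?_
      rw [norm_mul, norm_mul, norm_div, norm_mul]
      have h1 : ‖Real.cos (n * θ)‖ ≤ 1 := Real.abs_cos_le_one _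
      have h2 : ‖Real.cos (m * θ)‖ ≤ 1 := Real.abs_cos_le_one _
      have h3 : ‖(q ^ n).re‖ ≤ ‖q‖ ^ n := by rw [← norm_pow]; exact Complex.abs_re_le_norm _
      have h4 : ‖(2:ℝ)‖ * ‖(q ^ n).re‖ / ‖(n:ℝ)‖ ≤ 2 * ‖q‖ ^ n := by
        rcases Nat.eq_zero_or_pos n with rfl | hn
        · simp
        · have : (1:ℝ) ≤ ‖(n:ℝ)‖ := by simpa using Nat.succ_le_of_lt hn
          have h5 : ‖(2:ℝ)‖ * ‖(q ^ n).re‖ ≤ 2 * ‖q‖ ^ n := by simpa using h3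
          exact (div_le_self (by positivity) this).trans h5
      calc _ ≤ ‖(2:ℝ)‖ * ‖(q ^ n).re‖ / ‖(n:ℝ)‖ * 1 * 1 := by gcongr
        _ ≤ _ := by simpa using h4
    · exact Eventually.of_forall fun θ => hsm
    · exact integrable_const _
    · exact Eventually.of_forall fun θ => (log_hasSum hab hz θ).mul_right _
  have e1 : ∀ n : ℕ, ∫ φ, (2 * (q ^ n).re / n * Real.cos (n * φ)) * Real.cos (m * φ) ∂sg =
      if n = m then (q ^ m).re / m else 0 := by
    intro n
    simp_rw [mul_assoc]
    rw [integral_const_mul, integral_cos_mul_cos hm]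
    split_ifs with h
    · subst h; ring
    · simp
  simp_rw [e1] at key
  have h2 := (hasSum_ite_eq m ((q ^ m).re / m)).unique key
  rw [h2]
  simp_rw [add_mul]
  have := log_cont (a := a) (b := b) hz
  rw [integral_add (intg_of_cont (by fun_prop)) (intg_of_cont (by fun_prop)), integral_const_mul,
    integral_cos_nat hm]
  simp



/-- Cayley transform at height `h` -/
def cay (h t : ℝ) : ℂ := ((t : ℂ) + (h - 1) * Complex.I) / (t + (h + 1) * Complex.I)

lemma cay_den {h : ℝ} (hh : 0 < h) (t : ℝ) : (t : ℂ) + (h + 1) * Complex.I ≠ 0 := by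
  intro H
  have := congrArg Complex.im H
  simp at this
  linarith

lemma cay_cont {h : ℝ} (hh : 0 < h) : Continuous (cay h) := by
  unfold cay
  exact Continuous.div (by fun_prop) (by fun_prop) (cay_den hh)

lemma cay_norm {h : ℝ} (hh : 0 < h) (t : ℝ) : ‖cay h t‖ < 1 := by
  unfold cay
  rw [norm_div, div_lt_one (norm_pos_iff.2 (cay_den hh t))]
  apply lt_of_pow_lt_pow_left₀ 2 (norm_nonneg _)
  rw [Complex.sq_norm, Complex.sq_norm, Complex.normSq_apply, Complex.normSq_apply]
  simp
  nlinarith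

lemma cay_log {h : ℝ} (hh : 0 < h) (x t : ℝ) :
    -Real.log ‖1 - cay h x * (starRingEnd ℂ) (cay h t)‖ =
      -Real.log ‖((x:ℂ) + (2 * h : ℝ) * Complex.I) - t‖ - Real.log 2
        + Real.log ‖(x : ℂ) + (h + 1) * Complex.I‖ + Real.log ‖(t : ℂ) + (h + 1) * Complex.I‖ := by
  have hx := cay_den hh x
  have ht := cay_den hh t
  have ht' : (starRingEnd ℂ) ((t : ℂ) + (h + 1) * Complex.I) ≠ 0 := by
    rwa [Ne, map_eq_zero]
  have e : (1 - cay h x * (starRingEnd ℂ) (cay h t)) * (((x : ℂ) + (h + 1) * Complex.I) *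
      (starRingEnd ℂ) ((t : ℂ) + (h + 1) * Complex.I)) =
      (-2 * Complex.I) * (((x:ℂ) + (2 * h : ℝ) * Complex.I) - t) := by
    have hc : (starRingEnd ℂ) ((t : ℂ) + (h + 1) * Complex.I) = (t : ℂ) - (h + 1) * Complex.I := by
      simp [map_add, Complex.conj_ofReal, Complex.conj_I]; ring
    have hc2 : (starRingEnd ℂ) ((t : ℂ) + (h - 1) * Complex.I) = (t : ℂ) - (h - 1) * Complex.I := by
      simp [map_add, Complex.conj_ofReal, Complex.conj_I]; ring
    rw [hc] at ht'
    unfold cay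
    rw [map_div₀, hc, hc2]
    have e0 : ((x : ℂ) + (h + 1) * Complex.I) * ((t : ℂ) - (h + 1) * Complex.I)
        - ((x : ℂ) + (h - 1) * Complex.I) * ((t : ℂ) - (h - 1) * Complex.I)
        = (-2 * Complex.I) * (((x:ℂ) + (2 * h : ℝ) * Complex.I) - t) := by
      push_cast
      linear_combination 0 * Complex.I_sq
    rw [← e0]
    have gen : ∀ P Q R S : ℂ, P ≠ 0 → Q ≠ 0 → (1 - R / P * (S / Q)) * (P * Q) = P * Q - R * S := by
      intro P Q R S hP hQ
      field_simp
    exact gen _ _ _ _ hx ht'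
  have h1 : 1 - cay h x * (starRingEnd ℂ) (cay h t) ≠ 0 := by
    intro H
    have h2 : ‖cay h x * (starRingEnd ℂ) (cay h t)‖ < 1 := by
      rw [norm_mul, RCLike.norm_conj]
      exact mul_lt_one_of_nonneg_of_lt_one_left (norm_nonneg _) (cay_norm hh x) (cay_norm hh t).le
    rw [← sub_eq_zero.1 H] at h2
    simp at h2
  have h3 : ((x:ℂ) + (2 * h : ℝ) * Complex.I) - t ≠ 0 := by
    intro H
    have := congrArg Complex.im H
    simp at this
    linarith
  have := congrArg (fun w => Real.log ‖w‖) e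
  simp only [norm_mul (1 - cay h x * (starRingEnd ℂ) (cay h t)), norm_mul ((x : ℂ) + (h + 1) * Complex.I),
    norm_mul (-2 * Complex.I), RCLike.norm_conj] at this
  rw [Real.log_mul (norm_ne_zero_iff.2 h1) (mul_ne_zero (norm_ne_zero_iff.2 hx) (norm_ne_zero_iff.2 ht)),
    Real.log_mul (norm_ne_zero_iff.2 hx) (norm_ne_zero_iff.2 ht),
    Real.log_mul (by simp) (norm_ne_zero_iff.2 h3)] at this
  have h4 : ‖-2 * Complex.I‖ = 2 := by simp
  rw [h4] at this
  linarith

lemma re_mul_conj_pow (z w : ℂ) (n : ℕ) : ((z * (starRingEnd ℂ) w) ^ n).re =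
    (z ^ n).re * (w ^ n).re + (z ^ n).im * (w ^ n).im := by
  rw [mul_pow, ← map_pow, Complex.mul_re, Complex.conj_re, Complex.conj_im]; ring

lemma term_bound (z w : ℂ) (n : ℕ) (hw : ‖w‖ ≤ 1) :
    |((z ^ n).re * (w ^ n).re + (z ^ n).im * (w ^ n).im) / n| ≤ ‖z‖ ^ n := by
  rw [← re_mul_conj_pow]
  have h1 : |((z * (starRingEnd ℂ) w) ^ n).re| ≤ ‖z‖ ^ n := by
    refine (Complex.abs_re_le_norm _).trans ?_
    rw [norm_pow, norm_mul, RCLike.norm_conj]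
    gcongr
    exact mul_le_of_le_one_right (norm_nonneg _) hw
  rcases Nat.eq_zero_or_pos n with rfl | hn
  · simp
  · rw [abs_div]
    refine (div_le_self (abs_nonneg _) ?_).trans h1
    rw [Nat.abs_cast]; exact_mod_cast hn

/-- the inner expansion -/
lemma inner_hasSum {h a b : ℝ} (hh : 0 < h) {β : ℝ → ℝ} (hβ : Continuous β) (hβ0 : ∫ φ, β φ ∂sg = 0) (x : ℝ) :
    HasSum (fun n : ℕ => (((cay h x) ^ n).re * (∫ φ, ((cay h (xp a b φ)) ^ n).re * β φ ∂sg)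
        + ((cay h x) ^ n).im * (∫ φ, ((cay h (xp a b φ)) ^ n).im * β φ ∂sg)) / n)
      ((∫ φ, -Real.log ‖((x:ℂ) + (2 * h : ℝ) * Complex.I) - xp a b φ‖ * β φ ∂sg) +
        ∫ φ, Real.log ‖(xp a b φ : ℂ) + (h + 1) * Complex.I‖ * β φ ∂sg) := by
  have hcc : Continuous (fun φ => cay h (xp a b φ)) := (cay_cont hh).comp (xp_continuous a b)
  have key : HasSum (fun n : ℕ => ∫ φ, (((cay h x) ^ n).re * ((cay h (xp a b φ)) ^ n).re
      + ((cay h x) ^ n).im * ((cay h (xp a b φ)) ^ n).im) / n * β φ ∂sg)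
      (∫ φ, -Real.log ‖1 - cay h x * (starRingEnd ℂ) (cay h (xp a b φ))‖ * β φ ∂sg) := by
    have hsm : Summable (fun n : ℕ => ‖cay h x‖ ^ n) :=
      summable_geometric_of_lt_one (norm_nonneg _) (cay_norm hh x)
    apply hasSum_integral_of_dominated_convergence (fun n φ => ‖cay h x‖ ^ n * |β φ|)
    · intro n
      exact Continuous.aestronglyMeasurable (by fun_prop)
    · intro n
      refine Eventually.of_forall fun φ => ?_
      rw [norm_mul]
      exact mul_le_mul_of_nonneg_right (term_bound _ _ n (cay_norm hh _).le) (abs_nonneg _)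
    · exact Eventually.of_forall fun θ => hsm.mul_right _
    · simp_rw [tsum_mul_right]
      exact intg_of_cont (by fun_prop)
    · refine Eventually.of_forall fun φ => HasSum.mul_right _ ?_
      have h2 : ‖cay h x * (starRingEnd ℂ) (cay h (xp a b φ))‖ < 1 := by
        rw [norm_mul, RCLike.norm_conj]
        exact mul_lt_one_of_nonneg_of_lt_one_left (norm_nonneg _) (cay_norm hh x) (cay_norm hh _).le
      simpa only [re_mul_conj_pow] using neg_log_hasSum h2
  have hx := xp_continuous a b
  have e1 : ∀ n : ℕ, ∫ φ, (((cay h x) ^ n).re * ((cay h (xp a b φ)) ^ n).re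
      + ((cay h x) ^ n).im * ((cay h (xp a b φ)) ^ n).im) / n * β φ ∂sg =
      (((cay h x) ^ n).re * (∫ φ, ((cay h (xp a b φ)) ^ n).re * β φ ∂sg)
        + ((cay h x) ^ n).im * (∫ φ, ((cay h (xp a b φ)) ^ n).im * β φ ∂sg)) / n := by
    intro n
    rw [← integral_const_mul, ← integral_const_mul,
      ← integral_add (intg_of_cont (by fun_prop)) (intg_of_cont (by fun_prop)), ← integral_div]
    congr 1; ext φ; ring
  simp_rw [e1] at key
  convert key using 1
  have c1 : Continuous (fun φ => Real.log ‖((x:ℂ) + (2 * h : ℝ) * Complex.I) - xp a b φ‖) :=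
    log_cont (by simp; linarith)
  have c2 : Continuous (fun φ => Real.log ‖(xp a b φ : ℂ) + (h + 1) * Complex.I‖) := by
    apply Continuous.log (by fun_prop)
    intro φ
    exact norm_ne_zero_iff.2 (cay_den hh _)
  have e2 : ∀ φ, -Real.log ‖1 - cay h x * (starRingEnd ℂ) (cay h (xp a b φ))‖ * β φ =
      (-Real.log ‖((x:ℂ) + (2 * h : ℝ) * Complex.I) - xp a b φ‖ * β φ +
        Real.log ‖(xp a b φ : ℂ) + (h + 1) * Complex.I‖ * β φ) +
        (Real.log ‖(x : ℂ) + (h + 1) * Complex.I‖ - Real.log 2) * β φ := by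
    intro φ
    rw [cay_log hh]; ring
  simp_rw [e2]
  rw [integral_add (intg_of_cont (by fun_prop)) (intg_of_cont (by fun_prop)),
    integral_add (intg_of_cont (by fun_prop)) (intg_of_cont (by fun_prop)), integral_const_mul, hβ0]
  simp

lemma outer_hasSum {h a b a' b' : ℝ} (hh : 0 < h) {β γ V : ℝ → ℝ} (hβ : Continuous β)
    (hβ0 : ∫ φ, β φ ∂sg = 0) (hγ : Continuous γ) (hγ0 : ∫ φ, γ φ ∂sg = 0)
    (hV : ∀ θ, ∫ φ, -Real.log ‖((xp a' b' θ : ℂ) + (2 * h : ℝ) * Complex.I) - xp a b φ‖ * β φ ∂sg = V θ)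
    (hVi : Integrable (fun θ => V θ * γ θ) sg) :
    HasSum (fun n : ℕ => ((∫ φ, ((cay h (xp a' b' φ)) ^ n).re * γ φ ∂sg) * (∫ φ, ((cay h (xp a b φ)) ^ n).re * β φ ∂sg)
        + (∫ φ, ((cay h (xp a' b' φ)) ^ n).im * γ φ ∂sg) * (∫ φ, ((cay h (xp a b φ)) ^ n).im * β φ ∂sg)) / n)
      (∫ θ, V θ * γ θ ∂sg) := by
  set K := ∫ φ, Real.log ‖(xp a b φ : ℂ) + (h + 1) * Complex.I‖ * β φ ∂sg
  have hcc : Continuous (fun φ => cay h (xp a b φ)) := (cay_cont hh).comp (xp_continuous a b)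
  have hcc' : Continuous (fun φ => cay h (xp a' b' φ)) := (cay_cont hh).comp (xp_continuous a' b')
  set R : ℕ → ℝ := fun n => ∫ φ, ((cay h (xp a b φ)) ^ n).re * β φ ∂sg with hR
  set S : ℕ → ℝ := fun n => ∫ φ, ((cay h (xp a b φ)) ^ n).im * β φ ∂sg with hS
  obtain ⟨κ, hκ0, hκ1, hκ⟩ : ∃ κ : ℝ, 0 ≤ κ ∧ κ < 1 ∧ ∀ θ ∈ Set.Icc 0 Real.pi, ‖cay h (xp a' b' θ)‖ ≤ κ := by
    obtain ⟨θ₀, h1, h2⟩ := (isCompact_Icc (a := (0:ℝ)) (b := Real.pi)).exists_isMaxOn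
      ⟨0, le_rfl, Real.pi_pos.le⟩ hcc'.norm.continuousOn
    exact ⟨_, norm_nonneg _, cay_norm hh _, fun θ hθ => h2 hθ⟩
  set M := ∫ φ, |β φ| ∂sg
  have hM : 0 ≤ M := integral_nonneg fun _ => abs_nonneg _
  have hRS : ∀ (f : ℝ → ℝ), Continuous f → (∀ φ, |f φ| ≤ 1) → |∫ φ, f φ * β φ ∂sg| ≤ M := by
    intro f hf h1
    refine (abs_integral_le_integral_abs).trans (integral_mono (intg_of_cont (by fun_prop))
      (intg_of_cont (by fun_prop)) ?_)
    intro φ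
    simp only [abs_mul]
    exact mul_le_of_le_one_left (abs_nonneg _) (h1 _)
  have hpow : ∀ (n : ℕ) t, ‖cay h t ^ n‖ ≤ 1 := fun n t => by
    rw [norm_pow]; exact pow_le_one₀ (norm_nonneg _) (cay_norm hh _).le
  have hRb : ∀ n, |R n| ≤ M := fun n => hRS _ (by fun_prop) fun φ =>
    (Complex.abs_re_le_norm _).trans (hpow n _)
  have hSb : ∀ n, |S n| ≤ M := fun n => hRS _ (by fun_prop) fun φ =>
    (Complex.abs_im_le_norm _).trans (hpow n _)
  have key : HasSum (fun n : ℕ => ∫ θ, (((cay h (xp a' b' θ)) ^ n).re * R n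
      + ((cay h (xp a' b' θ)) ^ n).im * S n) / n * γ θ ∂sg)
      (∫ θ, (V θ + K) * γ θ ∂sg) := by
    have hsm : Summable (fun n : ℕ => (2 * M) * κ ^ n) :=
      (summable_geometric_of_lt_one hκ0 hκ1).mul_left _
    apply hasSum_integral_of_dominated_convergence (fun n φ => (2 * M) * κ ^ n * |γ φ|)
    · intro n
      exact Continuous.aestronglyMeasurable (by fun_prop)
    · intro n
      filter_upwards [ae_sg_mem] with θ hθ
      rw [norm_mul]
      refine mul_le_mul_of_nonneg_right ?_ (abs_nonneg _)
      have h1 : ‖cay h (xp a' b' θ) ^ n‖ ≤ κ ^ n := by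
        rw [norm_pow]; exact pow_le_pow_left₀ (norm_nonneg _) (hκ _ ⟨hθ.1.le, hθ.2.le⟩) _
      have h2 := (Complex.abs_re_le_norm _).trans h1
      have h3 := (Complex.abs_im_le_norm _).trans h1
      have h4 : |((cay h (xp a' b' θ)) ^ n).re * R n + ((cay h (xp a' b' θ)) ^ n).im * S n| ≤ 2 * M * κ ^ n := by
        refine (abs_add_le _ _).trans ?_
        rw [abs_mul, abs_mul]
        have := mul_le_mul h2 (hRb n) (abs_nonneg _) (by positivity)
        have := mul_le_mul h3 (hSb n) (abs_nonneg _) (by positivity)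
        linarith
      rw [Real.norm_eq_abs, abs_div]
      rcases Nat.eq_zero_or_pos n with rfl | hn
      · simp; linarith
      · refine (div_le_self (abs_nonneg _) ?_).trans h4
        rw [Nat.abs_cast]; exact_mod_cast hn
    · exact Eventually.of_forall fun θ => hsm.mul_right _
    · simp_rw [tsum_mul_right]
      exact intg_of_cont (by fun_prop)
    · refine Eventually.of_forall fun θ => HasSum.mul_right _ ?_
      have := inner_hasSum (a := a) (b := b) hh hβ hβ0 (xp a' b' θ)
      rw [hV] at this
      exact this
  have e1 : ∀ n : ℕ, ∫ θ, (((cay h (xp a' b' θ)) ^ n).re * R n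
      + ((cay h (xp a' b' θ)) ^ n).im * S n) / n * γ θ ∂sg =
      ((∫ φ, ((cay h (xp a' b' φ)) ^ n).re * γ φ ∂sg) * R n
        + (∫ φ, ((cay h (xp a' b' φ)) ^ n).im * γ φ ∂sg) * S n) / n := by
    intro n
    rw [← integral_mul_const, ← integral_mul_const,
      ← integral_add (intg_of_cont (by fun_prop)) (intg_of_cont (by fun_prop)), ← integral_div]
    congr 1; ext φ; ring
  simp_rw [e1] at key
  convert key using 1
  simp_rw [add_mul]
  rw [integral_add hVi (intg_of_cont (by fun_prop)), integral_const_mul, hγ0]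
  simp

lemma psd {d : ℕ} {A B : Fin d → ℝ} {h : ℝ} (hh : 0 < h) {β : Fin d → ℝ → ℝ} {V : Fin d → Fin d → ℝ → ℝ}
    (hβ : ∀ i, Continuous (β i)) (hβ0 : ∀ i, ∫ φ, β i φ ∂sg = 0)
    (hV : ∀ i j θ, ∫ φ, -Real.log ‖((xp (A i) (B i) θ : ℂ) + (2 * h : ℝ) * Complex.I) - xp (A j) (B j) φ‖ * β j φ ∂sg = V i j θ)
    (hVi : ∀ i j, Integrable (fun θ => V i j θ * β i θ) sg) :
    0 ≤ ∑ i, ∑ j, ∫ θ, V i j θ * β i θ ∂sg := by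
  have H := hasSum_sum (s := Finset.univ) fun i _ => hasSum_sum (s := Finset.univ) fun j _ =>
    outer_hasSum hh (hβ j) (hβ0 j) (hβ i) (hβ0 i) (hV i j) (hVi i j)
  refine H.nonneg fun n => ?_
  have : ∀ (r s : Fin d → ℝ), ∑ i, ∑ j, (r i * r j + s i * s j) / (n:ℝ) =
      ((∑ i, r i) ^ 2 + (∑ i, s i) ^ 2) / n := by
    intro r s
    rw [sq, sq, Finset.sum_mul_sum, Finset.sum_mul_sum, ← Finset.sum_add_distrib, Finset.sum_div]
    refine Finset.sum_congr rfl fun i _ => ?_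
    rw [← Finset.sum_add_distrib, Finset.sum_div]
  rw [this (fun i => ∫ φ, ((cay h (xp (A i) (B i) φ)) ^ n).re * β i φ ∂sg)
    (fun i => ∫ φ, ((cay h (xp (A i) (B i) φ)) ^ n).im * β i φ ∂sg)]
  positivity



/-- cosine polynomial with coefficients `(n+1) c (n+1)` -/
def bt (c : ℕ → ℝ) (N : ℕ) (θ : ℝ) : ℝ :=
  ∑ n ∈ Finset.range N, (((n + 1 : ℕ) : ℝ) * c (n + 1)) * Real.cos ((n + 1 : ℕ) * θ)

/-- truncated expansion at a complex point -/
def tr (a b : ℝ) (c : ℕ → ℝ) (N : ℕ) (z : ℂ) : ℝ :=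
  ∑ n ∈ Finset.range N, c (n + 1) * (qf a b z ^ (n + 1)).re

lemma bt_cont (c : ℕ → ℝ) (N : ℕ) : Continuous (bt c N) := by
  unfold bt; fun_prop

lemma integral_mul_bt (c : ℕ → ℝ) (N : ℕ) {f : ℝ → ℝ} (hf : Integrable f sg) :
    ∫ θ, f θ * bt c N θ ∂sg =
      ∑ n ∈ Finset.range N, (((n + 1 : ℕ) : ℝ) * c (n + 1)) * ∫ θ, f θ * Real.cos ((n + 1 : ℕ) * θ) ∂sg := by
  unfold bt
  simp_rw [Finset.mul_sum]
  rw [integral_finsetSum]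
  · refine Finset.sum_congr rfl fun n _ => ?_
    rw [← integral_const_mul]
    congr 1; ext θ; ring
  · intro n _
    apply hf.mul_bdd (c := |((n + 1 : ℕ) : ℝ) * c (n + 1)|)
    · exact Continuous.aestronglyMeasurable (by fun_prop)
    · refine Eventually.of_forall fun θ => ?_
      rw [norm_mul]
      exact mul_le_of_le_one_right (norm_nonneg _) (Real.abs_cos_le_one _)

lemma integral_bt (c : ℕ → ℝ) (N : ℕ) : ∫ θ, bt c N θ ∂sg = 0 := by
  have := integral_mul_bt c N (f := fun _ => 1) (integrable_const _)
  simp only [one_mul] at this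
  rw [this]
  exact Finset.sum_eq_zero fun n _ => by rw [integral_cos_nat (by omega)]; simp

lemma bt_bound {c : ℕ → ℝ} {M : ℝ} (hc : ∀ n, |c n| ≤ M) (N : ℕ) (θ : ℝ) :
    |bt c N θ| ≤ (N : ℝ) ^ 2 * M := by
  have hM : 0 ≤ M := (abs_nonneg _).trans (hc 0)
  unfold bt
  refine (Finset.abs_sum_le_sum_abs _ _).trans ?_
  have : ∀ n ∈ Finset.range N, |(((n + 1 : ℕ) : ℝ) * c (n + 1)) * Real.cos ((n + 1 : ℕ) * θ)| ≤ N * M := by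
    intro n hn
    rw [abs_mul, abs_mul, Nat.abs_cast]
    refine (mul_le_of_le_one_right (by positivity) (Real.abs_cos_le_one _)).trans ?_
    apply mul_le_mul _ (hc _) (abs_nonneg _) (by positivity)
    exact_mod_cast Finset.mem_range.1 hn
  refine (Finset.sum_le_card_nsmul _ _ _ this).trans ?_
  simp
  exact le_of_eq (by ring)

lemma tr_measurable (a b : ℝ) (c : ℕ → ℝ) (N : ℕ) : Measurable (tr a b c N) := by
  unfold tr
  have := qf_measurable a b
  refine Finset.measurable_sum _ fun n _ => ?_
  exact (Complex.measurable_re.comp (this.pow_const _)).const_mul _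

lemma tr_bound (a b : ℝ) (c : ℕ → ℝ) (N : ℕ) (z : ℂ) :
    |tr a b c N z| ≤ ∑ n ∈ Finset.range N, |c (n + 1)| := by
  unfold tr
  refine (Finset.abs_sum_le_sum_abs _ _).trans (Finset.sum_le_sum fun n _ => ?_)
  rw [abs_mul]
  refine mul_le_of_le_one_right (abs_nonneg _) ((Complex.abs_re_le_norm _).trans ?_)
  rw [norm_pow]
  exact pow_le_one₀ (norm_nonneg _) (norm_qf_le _ _ _)

lemma xp_measurable_shift (a b h : ℝ) : Measurable (fun θ => ((xp a b θ : ℂ) + (h : ℝ) * Complex.I)) := by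
  have := xp_continuous a b
  exact Continuous.measurable (by fun_prop)

lemma tr_int (a b a' b' : ℝ) (c c' : ℕ → ℝ) (N : ℕ) (h : ℝ) :
    Integrable (fun θ => tr a b c N ((xp a' b' θ : ℂ) + (h : ℝ) * Complex.I) * bt c' N θ) sg := by
  refine (intg_of_cont (bt_cont c' N)).bdd_mul (c := ∑ n ∈ Finset.range N, |c (n + 1)|) ?_ ?_
  · exact ((tr_measurable a b c N).comp (xp_measurable_shift a' b' h)).aestronglyMeasurable
  · exact Eventually.of_forall fun θ => tr_bound _ _ _ _ _

lemma tr_log {a b : ℝ} (hab : a < b) (c : ℕ → ℝ) (N : ℕ) {z : ℂ} (hz : 0 < z.im) :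
    ∫ φ, -Real.log ‖z - xp a b φ‖ * bt c N φ ∂sg = tr a b c N z := by
  rw [integral_mul_bt c N (f := fun φ => -Real.log ‖z - xp a b φ‖) (intg_of_cont (log_cont hz).neg)]
  unfold tr
  refine Finset.sum_congr rfl fun n _ => ?_
  rw [log_cos hab hz (by omega)]
  have : ((n + 1 : ℕ) : ℝ) ≠ 0 := by positivity
  field_simp

lemma pos_lim {d : ℕ} {A B : Fin d → ℝ} (hAB : ∀ i, A i < B i)
    (hdisj : ∀ i j, i ≠ j → Disjoint (Set.Icc (A i) (B i)) (Set.Icc (A j) (B j)))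
    (c : Fin d → ℕ → ℝ) (N : ℕ) :
    0 ≤ ∑ i, ∑ j, ∫ θ, tr (A j) (B j) (c j) N (xp (A i) (B i) θ) * bt (c i) N θ ∂sg := by
  have key : ∀ h : ℝ, 0 < h → 0 ≤ ∑ i, ∑ j, ∫ θ,
      tr (A j) (B j) (c j) N ((xp (A i) (B i) θ : ℂ) + (2 * h : ℝ) * Complex.I) * bt (c i) N θ ∂sg := by
    intro h hh
    refine psd (A := A) (B := B) hh (β := fun i => bt (c i) N)
      (V := fun i j θ => tr (A j) (B j) (c j) N ((xp (A i) (B i) θ : ℂ) + (2 * h : ℝ) * Complex.I))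
      (fun i => bt_cont _ _) (fun i => integral_bt _ _) ?_ (fun i j => tr_int _ _ _ _ _ _ _ _)
    intro i j θ
    exact tr_log (hAB j) _ _ (by simp; linarith)
  have hlim : Tendsto (fun h : ℝ => ∑ i, ∑ j, ∫ θ,
      tr (A j) (B j) (c j) N ((xp (A i) (B i) θ : ℂ) + (2 * h : ℝ) * Complex.I) * bt (c i) N θ ∂sg)
      (𝓝[>] 0) (𝓝 (∑ i, ∑ j, ∫ θ, tr (A j) (B j) (c j) N (xp (A i) (B i) θ) * bt (c i) N θ ∂sg)) := by
    refine tendsto_finsetSum _ fun i _ => tendsto_finsetSum _ fun j _ => ?_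
    apply tendsto_integral_filter_of_dominated_convergence
      (fun θ => (∑ n ∈ Finset.range N, |c j (n + 1)|) * |bt (c i) N θ|)
    · exact Eventually.of_forall fun h => (tr_int _ _ _ _ _ _ _ _).aestronglyMeasurable
    · refine Eventually.of_forall fun h => Eventually.of_forall fun θ => ?_
      rw [norm_mul]
      exact mul_le_mul_of_nonneg_right (tr_bound _ _ _ _ _) (abs_nonneg _)
    · have := bt_cont (c i) N
      exact intg_of_cont (by fun_prop)
    · filter_upwards [ae_sg_mem] with θ hθ
      refine Tendsto.mul_const _ ?_
      unfold tr
      refine tendsto_finsetSum _ fun n _ => Tendsto.const_mul _ ?_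
      have hne : xp (A i) (B i) θ ≠ A j ∧ xp (A i) (B i) θ ≠ B j := by
        by_cases hij : i = j
        · subst hij; exact xp_ne (hAB i) hθ
        · have h1 := Set.disjoint_left.1 (hdisj i j hij) (xp_mem (hAB i) θ)
          constructor
          · intro h; rw [h] at h1; exact h1 ⟨le_rfl, (hAB j).le⟩
          · intro h; rw [h] at h1; exact h1 ⟨(hAB j).le, le_rfl⟩
      have h2 : Tendsto (fun h : ℝ => 2 * h) (𝓝[>] 0) (𝓝[>] 0) := by
        apply tendsto_nhdsWithin_of_tendsto_nhds_of_eventually_within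
        · have : Tendsto (fun h : ℝ => 2 * h) (𝓝 0) (𝓝 (2 * 0)) := tendsto_id.const_mul 2
          rw [mul_zero] at this
          exact this.mono_left nhdsWithin_le_nhds
        · filter_upwards [self_mem_nhdsWithin] with h hh
          have : (0:ℝ) < h := hh
          simp [this]
      have h3 := (qf_tendsto (hAB j) hne.1 hne.2).comp h2
      exact (Complex.continuous_re.tendsto _).comp (h3.pow (n + 1))
  refine ge_of_tendsto hlim ?_
  filter_upwards [self_mem_nhdsWithin] with h hh
  exact key h hh

lemma diag {a b : ℝ} (hab : a < b) (c : ℕ → ℝ) (N : ℕ) :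
    ∫ θ, tr a b c N (xp a b θ) * bt c N θ ∂sg =
      (1 / 2) * ∑ n ∈ Finset.range N, ((n + 1 : ℕ) : ℝ) * c (n + 1) ^ 2 := by
  have e : ∫ θ, tr a b c N (xp a b θ) * bt c N θ ∂sg =
      ∫ θ, (∑ n ∈ Finset.range N, c (n + 1) * Real.cos ((n + 1 : ℕ) * θ)) * bt c N θ ∂sg := by
    apply integral_congr_ae
    filter_upwards [ae_sg_mem] with θ hθ
    unfold tr
    simp_rw [qf_self hab hθ]
  rw [e, integral_mul_bt c N (f := fun θ => ∑ n ∈ Finset.range N, c (n + 1) * Real.cos ((n + 1 : ℕ) * θ))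
    (intg_of_cont (by fun_prop)), Finset.mul_sum]
  refine Finset.sum_congr rfl fun n hn => ?_
  have : ∫ θ, (∑ m ∈ Finset.range N, c (m + 1) * Real.cos ((m + 1 : ℕ) * θ)) * Real.cos ((n + 1 : ℕ) * θ) ∂sg
      = c (n + 1) / 2 := by
    simp_rw [Finset.sum_mul, mul_assoc]
    rw [integral_finsetSum _ (fun m _ => intg_of_cont (by fun_prop))]
    simp_rw [integral_const_mul]
    rw [Finset.sum_eq_single n]
    · rw [integral_cos_mul_cos (by omega)]; simp; ring
    · intro m _ hmn
      rw [integral_cos_mul_cos (by omega), if_neg (by omega)]; simp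
    · intro h; exact absurd hn h
  rw [this]; ring

lemma offdiag {a b a' b' : ℝ} (hab : a < b) (hab' : a' < b') (hd : Disjoint (Set.Icc a' b') (Set.Icc a b))
    {u : ℝ → ℝ} (hu : Integrable u (arcsineMeasure a b)) :
    Measurable (fun θ => harmExt a b u (xp a' b' θ)) ∧ ∃ C κ : ℝ, 0 ≤ κ ∧ κ < 1 ∧ ∀ (N : ℕ) θ,
      |harmExt a b u (xp a' b' θ) - cf a b u 0 - 2 * tr a b (cf a b u) N (xp a' b' θ)| ≤ C * κ ^ N := by
  have hnot : ∀ θ, xp a' b' θ ∉ Set.Icc a b := fun θ => Set.disjoint_left.1 hd (xp_mem hab' θ)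
  have hs := fun θ => harmExt_hasSum hab hu (hnot θ)
  have htr : ∀ θ N, ∑ n ∈ Finset.range N, 2 * (qf a b (xp a' b' θ) ^ (n + 1)).re * cf a b u (n + 1) =
      2 * tr a b (cf a b u) N (xp a' b' θ) := by
    intro θ N
    unfold tr
    rw [Finset.mul_sum]
    exact Finset.sum_congr rfl fun n _ => by ring
  constructor
  · have : Measurable (fun θ => harmExt a b u (xp a' b' θ) - cf a b u 0) := by
      refine measurable_of_tendsto_metrizable (f := fun N θ => 2 * tr a b (cf a b u) N (xp a' b' θ)) ?_ ?_
      · intro N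
        refine ((tr_measurable a b _ N).comp ?_).const_mul 2
        exact Complex.measurable_ofReal.comp (xp_continuous a' b').measurable
      · rw [tendsto_pi_nhds]
        intro θ
        have := (hs θ).tendsto_sum_nat
        simpa only [htr] using this
    have := this.add_const (cf a b u 0)
    simpa using this
  · obtain ⟨κ, hκ0, hκ1, hκ⟩ : ∃ κ : ℝ, 0 ≤ κ ∧ κ < 1 ∧ ∀ x ∈ Set.Icc a' b', ‖qf a b (x : ℂ)‖ ≤ κ := by
      have hc : ContinuousOn (fun x : ℝ => ‖qf a b (x : ℂ)‖) (Set.Icc a' b') := by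
        apply ContinuousOn.norm
        unfold qf
        have hz : ContinuousOn (fun x : ℝ => sqz a b (x : ℂ)) (Set.Icc a' b') := by
          unfold sqz
          apply ContinuousOn.cexp
          apply ContinuousOn.mul continuousOn_const
          apply ContinuousOn.clog
          · apply ContinuousOn.div (by fun_prop) (by fun_prop)
            intro x hx h
            have h1 := Set.disjoint_left.1 hd hx
            have : x = a := by exact_mod_cast sub_eq_zero.1 h
            rw [this] at h1
            exact h1 ⟨le_rfl, hab.le⟩
          · intro x hx
            exact slit_real hab (Set.disjoint_left.1 hd hx)
        exact (continuousOn_const.sub hz).div (continuousOn_const.add hz) fun x _ => one_add_sqz _ _ _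
      obtain ⟨x₀, h1, h2⟩ := (isCompact_Icc (a := a') (b := b')).exists_isMaxOn
        ⟨a', le_rfl, hab'.le⟩ hc
      exact ⟨_, norm_nonneg _, norm_qf_lt (slit_real hab (Set.disjoint_left.1 hd h1)), fun x hx => h2 hx⟩
    set M := ∫ θ, |u (xp a b θ)| ∂sg
    have hM : 0 ≤ M := integral_nonneg fun _ => abs_nonneg _
    refine ⟨2 * M / (1 - κ), κ, hκ0, hκ1, fun N θ => ?_⟩
    have hb : ∀ n, ‖2 * (qf a b (xp a' b' θ) ^ (n + 1)).re * cf a b u (n + 1)‖ ≤ (2 * M) * κ ^ n := by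
      intro n
      have h1 : |(qf a b (xp a' b' θ) ^ (n + 1)).re| ≤ κ ^ n := by
        refine (Complex.abs_re_le_norm _).trans ?_
        rw [norm_pow]
        refine (pow_le_pow_left₀ (norm_nonneg _) (hκ _ (xp_mem hab' θ)) _).trans ?_
        exact pow_le_pow_of_le_one hκ0 hκ1.le (by omega)
      rw [Real.norm_eq_abs, abs_mul, abs_mul, abs_two]
      have := mul_le_mul h1 (cf_bound hab hu (n + 1)) (abs_nonneg _) (by positivity)
      linarith
    have := norm_sub_le_of_geometric_bound_of_hasSum hκ1 hb (hs θ) N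
    rw [htr, norm_sub_rev, Real.norm_eq_abs] at this
    refine this.trans (le_of_eq ?_)
    ring



lemma coeff_zero {d : ℕ} {A B : Fin d → ℝ} (hAB : ∀ i, A i < B i)
    (hdisj : ∀ i j, i ≠ j → Disjoint (Set.Icc (A i) (B i)) (Set.Icc (A j) (B j)))
    {u : Fin d → ℝ → ℝ} (hu : ∀ i, Integrable (u i) (arcsineMeasure (A i) (B i)))
    (hfix : ∀ i, ∀ᵐ x ∂(arcsineMeasure (A i) (B i)), calH d A B u i x = u i x) (i : Fin d) (m : ℕ) :
    cf (A i) (B i) (u i) (m + 1) = 0 := by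
  set c : Fin d → ℕ → ℝ := fun i => cf (A i) (B i) (u i) with hc
  set E : Fin d → ℕ → ℝ := fun i N => ∑ n ∈ Finset.range N, ((n + 1 : ℕ) : ℝ) * c i (n + 1) ^ 2 with hE
  have hU : ∀ i, Integrable (fun θ => u i (xp (A i) (B i) θ)) sg := by
    intro i
    have := hu i
    rw [arcsine_map (hAB i)] at this
    exact this.comp_measurable (xp_continuous _ _).measurable
  set M : Fin d → ℝ := fun i => ∫ θ, |u i (xp (A i) (B i) θ)| ∂sg with hM
  have hcM : ∀ i n, |c i n| ≤ M i := fun i n => cf_bound (hAB i) (hu i) n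
  have hM0 : ∀ i, 0 ≤ M i := fun i => (abs_nonneg _).trans (hcM i 0)
  -- off-diagonal data
  have hoff : ∀ i j, ∃ C κ : ℝ, 0 ≤ κ ∧ κ < 1 ∧ (i ≠ j → Measurable (fun θ => harmExt (A j) (B j) (u j) (xp (A i) (B i) θ)) ∧
      ∀ (N : ℕ) θ, |harmExt (A j) (B j) (u j) (xp (A i) (B i) θ) - c j 0
        - 2 * tr (A j) (B j) (c j) N (xp (A i) (B i) θ)| ≤ C * κ ^ N) := by
    intro i j
    by_cases hij : i = j
    · exact ⟨0, 0, le_rfl, one_pos, fun h => absurd hij h⟩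
    · obtain ⟨h1, C, κ, h2, h3, h4⟩ := offdiag (hAB j) (hAB i) (hdisj i j hij) (hu j)
      exact ⟨C, κ, h2, h3, fun _ => ⟨h1, h4⟩⟩
  choose C κ hκ0 hκ1 hoff using hoff
  have hHi : ∀ i j, i ≠ j → Integrable (fun θ => harmExt (A j) (B j) (u j) (xp (A i) (B i) θ)) sg := by
    intro i j hij
    obtain ⟨h1, h2⟩ := hoff i j hij
    refine Integrable.of_bound h1.aestronglyMeasurable (C i j + |c j 0|) (Eventually.of_forall fun θ => ?_)
    have := h2 0 θ
    simp [tr] at this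
    rw [Real.norm_eq_abs]
    have h3 := abs_add_le (harmExt (A j) (B j) (u j) (xp (A i) (B i) θ) - c j 0) (c j 0)
    rw [sub_add_cancel] at h3
    linarith
  have hbt : ∀ i N, ∀ f : ℝ → ℝ, Integrable f sg → Integrable (fun θ => f θ * bt (c i) N θ) sg := by
    intro i N f hf
    exact hf.mul_bdd (c := (N:ℝ) ^ 2 * M i) (bt_cont _ _).aestronglyMeasurable
      (Eventually.of_forall fun θ => bt_bound (hcM i) N θ)
  have herr : ∀ i j, i ≠ j → ∀ N, |(∫ θ, harmExt (A j) (B j) (u j) (xp (A i) (B i) θ) * bt (c i) N θ ∂sg)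
      - 2 * ∫ θ, tr (A j) (B j) (c j) N (xp (A i) (B i) θ) * bt (c i) N θ ∂sg|
      ≤ C i j * κ i j ^ N * ((N:ℝ) ^ 2 * M i) := by
    intro i j hij N
    obtain ⟨h1, h2⟩ := hoff i j hij
    have ht : Integrable (fun θ => tr (A j) (B j) (c j) N (xp (A i) (B i) θ) * bt (c i) N θ) sg := by
      simpa using tr_int (A j) (B j) (A i) (B i) (c j) (c i) N 0
    have e : (∫ θ, harmExt (A j) (B j) (u j) (xp (A i) (B i) θ) * bt (c i) N θ ∂sg)
      - 2 * ∫ θ, tr (A j) (B j) (c j) N (xp (A i) (B i) θ) * bt (c i) N θ ∂sg =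
      ∫ θ, (harmExt (A j) (B j) (u j) (xp (A i) (B i) θ) - c j 0
        - 2 * tr (A j) (B j) (c j) N (xp (A i) (B i) θ)) * bt (c i) N θ ∂sg := by
      have e1 : ∀ θ, (harmExt (A j) (B j) (u j) (xp (A i) (B i) θ) - c j 0
        - 2 * tr (A j) (B j) (c j) N (xp (A i) (B i) θ)) * bt (c i) N θ =
        (harmExt (A j) (B j) (u j) (xp (A i) (B i) θ) * bt (c i) N θ - c j 0 * bt (c i) N θ)
        - 2 * (tr (A j) (B j) (c j) N (xp (A i) (B i) θ) * bt (c i) N θ) := fun θ => by ring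
      simp_rw [e1]
      have i1 := hbt i N _ (hHi i j hij)
      have i2 : Integrable (fun θ => c j 0 * bt (c i) N θ) sg := (intg_of_cont (bt_cont _ _)).const_mul _
      have i3 : Integrable (fun θ => harmExt (A j) (B j) (u j) (xp (A i) (B i) θ) * bt (c i) N θ
          - c j 0 * bt (c i) N θ) sg := i1.sub i2
      rw [integral_sub i3 (ht.const_mul 2), integral_sub i1 i2, integral_const_mul, integral_const_mul,
        integral_bt]
      ring
    rw [e]
    have := norm_integral_le_of_norm_le_const (μ := sg) (C := C i j * κ i j ^ N * ((N:ℝ) ^ 2 * M i))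
      (f := fun θ => (harmExt (A j) (B j) (u j) (xp (A i) (B i) θ) - c j 0
        - 2 * tr (A j) (B j) (c j) N (xp (A i) (B i) θ)) * bt (c i) N θ) (Eventually.of_forall fun θ => by
        rw [norm_mul]
        exact mul_le_mul (h2 N θ) (bt_bound (hcM i) N θ) (norm_nonneg _) ((abs_nonneg _).trans (h2 N θ)))
    simpa using this
  set ε : ℕ → ℝ := fun N => ∑ i, ∑ j ∈ Finset.univ.erase i, C i j * κ i j ^ N * ((N:ℝ) ^ 2 * M i) with hε
  have hmain : ∀ N, ∑ i, E i N ≤ ε N := by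
    intro N
    have e1 : ∀ i, E i N = -(1 / 2) * ∑ j ∈ Finset.univ.erase i,
        ∫ θ, harmExt (A j) (B j) (u j) (xp (A i) (B i) θ) * bt (c i) N θ ∂sg := by
      intro i
      have h1 : E i N = ∫ θ, u i (xp (A i) (B i) θ) * bt (c i) N θ ∂sg := by
        rw [integral_mul_bt _ _ (hU i)]
        refine Finset.sum_congr rfl fun n _ => ?_
        change _ = _ * c i (n + 1)
        ring
      have h2 : ∀ᵐ θ ∂sg, calH d A B u i (xp (A i) (B i) θ) = u i (xp (A i) (B i) θ) := by
        have := hfix i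
        rw [arcsine_map (hAB i)] at this
        exact ae_of_ae_map (xp_continuous _ _).aemeasurable this
      rw [h1, ← integral_finsetSum _ (fun j hj => hbt i N _ (hHi i j (Finset.ne_of_mem_erase hj).symm)),
        ← integral_const_mul]
      apply integral_congr_ae
      filter_upwards [h2] with θ hθ
      rw [← hθ, calH, ← Finset.sum_mul]; ring
    have hp := pos_lim hAB hdisj c N
    have hsplit : ∀ i, ∑ j, ∫ θ, tr (A j) (B j) (c j) N (xp (A i) (B i) θ) * bt (c i) N θ ∂sg =
        (1 / 2) * E i N + ∑ j ∈ Finset.univ.erase i, ∫ θ, tr (A j) (B j) (c j) N (xp (A i) (B i) θ) * bt (c i) N θ ∂sg := by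
      intro i
      rw [← Finset.add_sum_erase _ _ (Finset.mem_univ i), diag (hAB i)]
    simp_rw [hsplit] at hp
    have hpi : ∀ i, E i N + (∑ j ∈ Finset.univ.erase i, ∫ θ, tr (A j) (B j) (c j) N (xp (A i) (B i) θ) * bt (c i) N θ ∂sg)
        ≤ (1 / 2) * ∑ j ∈ Finset.univ.erase i, C i j * κ i j ^ N * ((N:ℝ) ^ 2 * M i) := by
      intro i
      rw [e1 i, Finset.mul_sum, Finset.mul_sum, ← Finset.sum_add_distrib]
      refine Finset.sum_le_sum fun j hj => ?_
      have := (abs_le.1 (herr i j (Finset.ne_of_mem_erase hj).symm N)).1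
      linarith
    have hs := Finset.sum_le_sum fun i (_ : i ∈ Finset.univ) => hpi i
    rw [Finset.sum_add_distrib, ← Finset.mul_sum] at hs hp
    have : ε N = ∑ i, ∑ j ∈ Finset.univ.erase i, C i j * κ i j ^ N * ((N:ℝ) ^ 2 * M i) := rfl
    rw [← this] at hs
    linarith
  have hlim : Tendsto ε atTop (𝓝 0) := by
    have : Tendsto ε atTop (𝓝 (∑ i : Fin d, ∑ j ∈ Finset.univ.erase i, (C i j * M i) * 0)) := by
      refine tendsto_finsetSum _ fun i _ => tendsto_finsetSum _ fun j _ => ?_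
      have h := (tendsto_pow_const_mul_const_pow_of_abs_lt_one 2
        (by rw [abs_of_nonneg (hκ0 i j)]; exact hκ1 i j : |κ i j| < 1)).const_mul (C i j * M i)
      refine h.congr fun N => ?_
      ring
    simpa using this
  have hEle : ∀ᶠ N in atTop, ((m + 1 : ℕ) : ℝ) * c i (m + 1) ^ 2 ≤ ε N := by
    filter_upwards [eventually_gt_atTop m] with N hN
    refine le_trans ?_ (hmain N)
    have h1 : ((m + 1 : ℕ) : ℝ) * c i (m + 1) ^ 2 ≤ E i N :=
      Finset.single_le_sum (f := fun n => ((n + 1 : ℕ) : ℝ) * c i (n + 1) ^ 2) (fun n _ => by positivity)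
        (Finset.mem_range.2 hN)
    refine h1.trans ?_
    exact Finset.single_le_sum (f := fun i => E i N) (fun i _ => Finset.sum_nonneg fun n _ => by positivity)
      (Finset.mem_univ i)
  have h0 := ge_of_tendsto hlim hEle
  have hpos : (0:ℝ) < ((m + 1 : ℕ) : ℝ) := by positivity
  have h2 : c i (m + 1) ^ 2 ≤ 0 := by
    by_contra h
    push Not at h
    have := mul_pos hpos h
    linarith
  exact pow_eq_zero_iff (two_ne_zero) |>.1 (le_antisymm h2 (sq_nonneg _))

lemma arcsine_ae_mem (a b : ℝ) : ∀ᵐ x ∂(arcsineMeasure a b), x ∈ Set.Icc a b := by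
  have : ∀ᵐ x ∂(volume.restrict (Set.Icc a b)), x ∈ Set.Icc a b := ae_restrict_mem measurableSet_Icc
  exact (withDensity_absolutelyContinuous _ _).ae_le this

lemma part1 {d : ℕ} {A B : Fin d → ℝ} (hAB : ∀ i, A i < B i)
    (hdisj : ∀ i j, i ≠ j → Disjoint (Set.Icc (A i) (B i)) (Set.Icc (A j) (B j)))
    {u : Fin d → ℝ → ℝ} (hu : ∀ i, Integrable (u i) (arcsineMeasure (A i) (B i)))
    (hfix : ∀ i, ∀ᵐ x ∂(arcsineMeasure (A i) (B i)), calH d A B u i x = u i x) (i : Fin d) :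
    ∀ᵐ x ∂(arcsineMeasure (A i) (B i)), u i x = 0 := by
  have hz := coeff_zero hAB hdisj hu hfix
  set c : Fin d → ℝ := fun j => cf (A j) (B j) (u j) 0 with hc
  have hext : ∀ j x, x ∉ Set.Icc (A j) (B j) → harmExt (A j) (B j) (u j) (x : ℝ) = c j := by
    intro j x hx
    have h1 := harmExt_hasSum (hAB j) (hu j) hx
    simp only [hz, mul_zero] at h1
    have := h1.unique hasSum_zero
    linarith
  have hcst : ∀ i, ∀ᵐ x ∂(arcsineMeasure (A i) (B i)), u i x = -(1 / 2) * ∑ j ∈ Finset.univ.erase i, c j := by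
    intro i
    filter_upwards [hfix i, arcsine_ae_mem (A i) (B i)] with x h1 h2
    rw [← h1, calH]
    congr 1
    refine Finset.sum_congr rfl fun j hj => hext j x ?_
    exact Set.disjoint_left.1 (hdisj i j (Finset.ne_of_mem_erase hj).symm) h2
  have hci : ∀ i, c i = -(1 / 2) * ∑ j ∈ Finset.univ.erase i, c j := by
    intro i
    have h2 := hcst i
    rw [arcsine_map (hAB i)] at h2
    have h3 := ae_of_ae_map (xp_continuous _ _).aemeasurable h2
    have h4 : c i = ∫ θ, u i (xp (A i) (B i) θ) ∂sg := by simp [hc, cf]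
    rw [h4, integral_congr_ae h3]
    simp
  set S := ∑ j, c j with hS
  have hcS : ∀ i, c i = -S := by
    intro i
    have h1 := hci i
    have h2 := Finset.add_sum_erase Finset.univ c (Finset.mem_univ i)
    rw [← hS] at h2
    linarith
  have hS0 : S = 0 := by
    have : S = ∑ j : Fin d, -S := by rw [hS]; exact Finset.sum_congr rfl fun j _ => hcS j
    simp at this
    have hd : (0:ℝ) ≤ d := by positivity
    have h2 : (1 + (d:ℝ)) * S = 0 := by linarith
    rcases mul_eq_zero.1 h2 with h | h
    · linarith
    · exact h
  filter_upwards [hcst i] with x hx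
  rw [hx, ← hci, hcS, hS0, neg_zero]

lemma cont_int {a b : ℝ} (hab : a < b) {u : ℝ → ℝ} (hu : ContinuousOn u (Set.Icc a b)) :
    Integrable u (arcsineMeasure a b) := by
  have hco : Continuous (fun θ => u (xp a b θ)) := by
    exact hu.comp_continuous (xp_continuous a b) (xp_mem hab)
  have hm : AEStronglyMeasurable u (arcsineMeasure a b) := by
    have h1 : AEStronglyMeasurable u (volume.restrict (Set.Icc a b)) :=
      hu.aestronglyMeasurable measurableSet_Icc
    exact h1.mono_ac (withDensity_absolutelyContinuous _ _)
  rw [arcsine_map hab] at hm ⊢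
  exact (integrable_map_measure hm (xp_continuous a b).aemeasurable).2 (intg_of_cont hco)


/-- Lemma 3.5: the only fixed point of `ℋ_{Δ⃗}` on `L¹(ω_{Δ⃗})` is the zero
vector, and likewise for `ℋ_{Δ⃗*,Δ⃗}` on `C(Δ⃗)`. -/
theorem calH_fixed_point_trivial
    (d : ℕ) (A B : Fin d → ℝ) (hAB : ∀ i, A i < B i)
    (hdisj : ∀ i j, i ≠ j → Disjoint (Set.Icc (A i) (B i)) (Set.Icc (A j) (B j))) :
    -- `L¹` version for `ℋ_{Δ⃗}`
    (∀ u : Fin d → ℝ → ℝ,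
      (∀ i, Integrable (u i) (arcsineMeasure (A i) (B i))) →
      (∀ i, ∀ᵐ x ∂(arcsineMeasure (A i) (B i)), calH d A B u i x = u i x) →
      ∀ i, ∀ᵐ x ∂(arcsineMeasure (A i) (B i)), u i x = 0) ∧
    -- continuous version for `ℋ_{Δ⃗*,Δ⃗}` with `Δ*_i ⊆ Δ_i`
    (∀ Astar Bstar : Fin d → ℝ,
      (∀ i, A i ≤ Astar i ∧ Astar i < Bstar i ∧ Bstar i ≤ B i) →
      ∀ u : Fin d → ℝ → ℝ,
      (∀ i, ContinuousOn (u i) (Set.Icc (A i) (B i))) →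
      (∀ i, ∀ x ∈ Set.Icc (A i) (B i), calH d Astar Bstar u i x = u i x) →
      ∀ i, ∀ x ∈ Set.Icc (A i) (B i), u i x = 0) := by
  refine ⟨fun u hu hfix i => part1 hAB hdisj hu hfix i, ?_⟩
  intro As Bs hs u hu hfix i x hx
  have hsub : ∀ i, Set.Icc (As i) (Bs i) ⊆ Set.Icc (A i) (B i) := fun i =>
    Set.Icc_subset_Icc (hs i).1 (hs i).2.2
  have h0 : ∀ j, ∀ᵐ x ∂(arcsineMeasure (As j) (Bs j)), u j x = 0 :=
    part1 (fun i => (hs i).2.1) (fun i j hij => (hdisj i j hij).mono (hsub i) (hsub j))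
      (fun i => cont_int (hs i).2.1 ((hu i).mono (hsub i)))
      (fun i => by
        filter_upwards [arcsine_ae_mem (As i) (Bs i)] with x hx
        exact hfix i x (hsub i hx))
  rw [← hfix i x hx, calH]
  have h1 : ∀ j, harmExt (As j) (Bs j) (u j) (x : ℂ) = 0 := by
    intro j
    have : cauchyT (As j) (Bs j) (u j) (x : ℂ) = 0 := by
      unfold cauchyT
      apply integral_eq_zero_of_ae
      filter_upwards [h0 j] with y hy
      simp [hy]
    simp [harmExt, this]
  simp [h1]

end
end

section
/- Let Δ⃗=(Δ_1,…,Δ_d) be pairwise disjoint closed intervals and let 𝔅 be any of the Banach spaces L¹(ω_{Δ⃗}), C(Δ⃗), or C¹(Δ⃗). Then ℋ_{Δ⃗} is a bounded compact linear operator on 𝔅 and I − ℋ_{Δ⃗} is invertible on 𝔅; in particular, for every a⃗ ∈ 𝔅 the equation u⃗ = ℋ_{Δ⃗}u⃗ + a⃗ has the unique solution u⃗ = (I − ℋ_{Δ⃗})^{−1}a⃗. Similarly, for intervals Δ*_i⊆Δ_i, the operator ℋ_{Δ⃗*,Δ⃗} is a bounded compact linear operator on C(Δ⃗) and on C¹(Δ⃗),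 and I − ℋ_{Δ⃗*,Δ⃗} is invertible there. -/
open MeasureTheory Set Filter Topology Polynomial

noncomputable section

/-- Bundled claims for Lemma 3.6 on a Banach space of vector functions with membership
predicate `mem` and norm `nrm`: the operator `ℋ` (built from the intervals `[A' i, B' i]`
and evaluated on `[A i, B i]`) is bounded, compact, and `I − ℋ` is invertible, i.e. for
every `a` the equation `u = ℋu + a` is uniquely solvable. -/
def OpGoodOn (d : ℕ) (A' B' A B : Fin d → ℝ)
    (mem : (Fin d → ℝ → ℝ) → Prop) (nrm : (Fin d → ℝ → ℝ) → ℝ) : Prop :=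
  -- boundedness
  (∃ M : ℝ, ∀ u, mem u → nrm (fun i x => calH d A' B' u i x) ≤ M * nrm u) ∧
  -- compactness
  (∀ u : ℕ → Fin d → ℝ → ℝ, (∀ n, mem (u n)) → (∀ n, nrm (u n) ≤ 1) →
    ∃ φ : ℕ → ℕ, StrictMono φ ∧ ∃ v : Fin d → ℝ → ℝ, mem v ∧
      Tendsto (fun n => nrm fun i x => calH d A' B' (u (φ n)) i x - v i x) atTop (𝓝 0)) ∧
  -- invertibility of `I − ℋ`
  (∀ a, mem a → ∃ u, mem u ∧
    (∀ i, ∀ x ∈ Set.Icc (A i) (B i), u i x = calH d A' B' u i x + a i x) ∧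
    ∀ u', mem u' →
      (∀ i, ∀ x ∈ Set.Icc (A i) (B i), u' i x = calH d A' B' u' i x + a i x) →
      ∀ i, ∀ x ∈ Set.Icc (A i) (B i), u' i x = u i x)

/-- The segment `[a,b]` seen in `ℂ`. -/
def cutS (a b : ℝ) : Set ℂ := (fun t : ℝ => (t : ℂ)) '' Icc a b

lemma mem_cutS {a b : ℝ} {z : ℂ} : z ∈ cutS a b ↔ z.im = 0 ∧ a ≤ z.re ∧ z.re ≤ b := by
  constructor
  · rintro ⟨t, ht, rfl⟩
    simpa using ht
  · rintro ⟨h0, h1, h2⟩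
    exact ⟨z.re, ⟨h1, h2⟩, by apply Complex.ext <;> simp [h0]⟩

lemma ofReal_mem_cutS {a b x : ℝ} : (x : ℂ) ∈ cutS a b ↔ x ∈ Icc a b := by
  rw [mem_cutS]; simp

lemma isCompact_cutS (a b : ℝ) : IsCompact (cutS a b) :=
  isCompact_Icc.image Complex.continuous_ofReal

lemma isClosed_cutS (a b : ℝ) : IsClosed (cutS a b) := (isCompact_cutS a b).isClosed

lemma convex_cutS (a b : ℝ) : Convex ℝ (cutS a b) :=
  (convex_Icc a b).is_linear_image Complex.ofRealCLM.toLinearMap.isLinear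

lemma ars_ac (a b : ℝ) : arcsineMeasure a b ≪ volume.restrict (Icc a b) :=
  withDensity_absolutelyContinuous _ _

lemma ars_ae_mem (a b : ℝ) : ∀ᵐ x ∂(arcsineMeasure a b), x ∈ Icc a b :=
  (ars_ac a b).ae_le (ae_restrict_mem measurableSet_Icc)

/-- integrability and value of the basic integral -/
lemma basic_integral {a b x : ℝ} (hab : a < b) (hx : b < x) :
    IntervalIntegrable (fun t => 1 / ((x - t) * Real.sqrt ((t - a) * (b - t)))) volume a b ∧
    ∫ t in a..b, 1 / ((x - t) * Real.sqrt ((t - a) * (b - t))) =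
      Real.pi / Real.sqrt ((x - a) * (x - b)) := by
  set W := Real.sqrt ((x - a) * (x - b)) with hW
  have hxa : 0 < x - a := by linarith
  have hxb : 0 < x - b := by linarith
  have hba : 0 < b - a := by linarith
  have hWp : 0 < W := Real.sqrt_pos.2 (mul_pos hxa hxb)
  have hW2 : W ^ 2 = (x - a) * (x - b) := Real.sq_sqrt (mul_pos hxa hxb).le
  let s : ℝ → ℝ := fun t => 2 * (x - b) * (t - a) / ((b - a) * (x - t)) - 1
  have hcont : ContinuousOn (fun t => W⁻¹ * Real.arcsin (s t)) (Icc a b) := by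
    apply ContinuousOn.mul continuousOn_const
    apply Real.continuous_arcsin.comp_continuousOn
    apply ContinuousOn.sub _ continuousOn_const
    apply ContinuousOn.div (by fun_prop) (by fun_prop)
    intro t ht
    have : 0 < x - t := by linarith [ht.2]
    positivity
  have hder : ∀ t ∈ Ioo a b, HasDerivAt (fun t => W⁻¹ * Real.arcsin (s t))
      (1 / ((x - t) * Real.sqrt ((t - a) * (b - t)))) t := by
    intro t ht
    have hxt : 0 < x - t := by linarith [ht.2]
    have hta : 0 < t - a := by linarith [ht.1]
    have hbt : 0 < b - t := by linarith [ht.2]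
    have h1 : 1 - s t = 2 * (x - a) * (b - t) / ((b - a) * (x - t)) := by
      simp only [s]; field_simp; ring
    have h2 : 1 + s t = 2 * (x - b) * (t - a) / ((b - a) * (x - t)) := by
      simp only [s]; ring
    have h1p : 0 < 1 - s t := by rw [h1]; positivity
    have h2p : 0 < 1 + s t := by rw [h2]; positivity
    have hs : HasDerivAt s (2 * W ^ 2 / ((b - a) * (x - t) ^ 2)) t := by
      have e1 : HasDerivAt (fun t => 2 * (x - b) * (t - a)) (2 * (x - b)) t := by
        simpa using ((hasDerivAt_id t).sub_const a).const_mul (2 * (x - b))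
      have e2 : HasDerivAt (fun t => (b - a) * (x - t)) (-(b - a)) t := by
        simpa using ((hasDerivAt_id t).const_sub x).const_mul (b - a)
      have := (e1.div e2 (by positivity)).sub_const 1
      refine this.congr_deriv ?_
      rw [hW2]; field_simp; ring
    set q := Real.sqrt ((t - a) * (b - t)) with hq
    have hqp : 0 < q := Real.sqrt_pos.2 (mul_pos hta hbt)
    have hq2 : q ^ 2 = (t - a) * (b - t) := Real.sq_sqrt (mul_pos hta hbt).le
    have hsq : Real.sqrt (1 - s t ^ 2) = 2 * W * q / ((b - a) * (x - t)) := by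
      rw [Real.sqrt_eq_iff_mul_self_eq_of_pos (by positivity)]
      have : 1 - s t ^ 2 = (1 - s t) * (1 + s t) := by ring
      rw [this, h1, h2]
      have : 2 * W * q / ((b - a) * (x - t)) * (2 * W * q / ((b - a) * (x - t)))
        = 4 * W ^ 2 * q ^ 2 / ((b - a) * (x - t)) ^ 2 := by field_simp; ring
      rw [this, hW2, hq2]; field_simp; ring
    have := (((Real.hasDerivAt_arcsin (by linarith) (by linarith)).comp t hs).const_mul W⁻¹)
    refine this.congr_deriv ?_
    rw [hsq]; field_simp
  have hint : IntervalIntegrable (fun t => 1 / ((x - t) * Real.sqrt ((t - a) * (b - t))))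
      volume a b := by
    rw [intervalIntegrable_iff, uIoc_of_le hab.le]
    apply intervalIntegral.integrableOn_deriv_of_nonneg hcont hder
    intro t ht
    have hxt : 0 < x - t := by linarith [ht.2]
    positivity
  refine ⟨hint, ?_⟩
  rw [intervalIntegral.integral_eq_sub_of_hasDerivAt_of_le hab.le hcont hder hint]
  have hb : s b = 1 := by simp only [s]; field_simp; ring
  have ha : s a = -1 := by simp only [s]; simp
  rw [hb, ha, Real.arcsin_one, Real.arcsin_neg_one]
  field_simp; ring

lemma dens_intervalIntegrable {a b : ℝ} (hab : a < b) :
    IntegrableOn (fun t => 1 / (Real.pi * Real.sqrt ((t - a) * (b - t)))) (Icc a b) := by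
  rw [integrableOn_Icc_iff_integrableOn_Ioc, ← uIoc_of_le hab.le, ← intervalIntegrable_iff]
  have h := (basic_integral hab (lt_add_one b)).1
  have h2 := h.mul_continuousOn (g := fun t => (b + 1 - t) / Real.pi) (by fun_prop)
  refine h2.congr ?_
  intro t ht
  rw [uIoc_of_le hab.le] at ht
  have : b + 1 - t ≠ 0 := by linarith [ht.2]
  simp only
  have hp := Real.pi_ne_zero
  by_cases h0 : Real.sqrt ((t - a) * (b - t)) = 0
  · simp [h0]
  · field_simp

lemma ars_finite {a b : ℝ} (hab : a < b) : IsFiniteMeasure (arcsineMeasure a b) := by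
  apply isFiniteMeasure_withDensity_ofReal
  exact (dens_intervalIntegrable hab).2

lemma ars_integral (a b : ℝ) (f : ℝ → ℂ) :
    ∫ x, f x ∂(arcsineMeasure a b) =
      ∫ x in Icc a b, (1 / (Real.pi * Real.sqrt ((x - a) * (b - x)))) • f x := by
  unfold arcsineMeasure
  rw [integral_withDensity_eq_integral_toReal_smul (by fun_prop)
    (Filter.Eventually.of_forall fun _ => ENNReal.ofReal_lt_top)]
  congr 1
  ext x
  rw [ENNReal.toReal_ofReal (by positivity)]

lemma ars_cauchy {a b x : ℝ} (hab : a < b) (hx : b < x) :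
    ∫ t, 1 / ((x : ℂ) - (t : ℂ)) ∂(arcsineMeasure a b) =
      ((1 / Real.sqrt ((x - a) * (x - b)) : ℝ) : ℂ) := by
  rw [ars_integral]
  have : ∀ t : ℝ, (1 / (Real.pi * Real.sqrt ((t - a) * (b - t)))) • (1 / ((x : ℂ) - (t : ℂ))) =
      ((1 / Real.pi * (1 / ((x - t) * Real.sqrt ((t - a) * (b - t)))) : ℝ) : ℂ) := by
    intro t
    rw [Complex.real_smul]
    push_cast
    rw [one_div_mul_one_div, one_div_mul_one_div]
    ring
  simp_rw [this]
  rw [integral_complex_ofReal, integral_Icc_eq_integral_Ioc,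
    ← intervalIntegral.integral_of_le hab.le, intervalIntegral.integral_const_mul,
    (basic_integral hab hx).2]
  congr 1
  have hp := Real.pi_ne_zero
  field_simp

lemma integrable_of_continuousOn {a b : ℝ} (hab : a < b) {u : ℝ → ℝ}
    (hu : ContinuousOn u (Icc a b)) : Integrable u (arcsineMeasure a b) := by
  have := ars_finite hab
  obtain ⟨C, hC⟩ := isCompact_Icc.exists_bound_of_continuousOn hu
  refine Integrable.of_bound ((hu.aestronglyMeasurable measurableSet_Icc).mono_ac (ars_ac a b)) C ?_
  filter_upwards [ars_ae_mem a b] with t ht using hC t ht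

/-- holomorphic dependence of parametric integrals -/
lemma diffOn_integral {μ : Measure ℝ} {U : Set ℂ} (hU : IsOpen U) {F : ℂ → ℝ → ℂ} {bd : ℝ → ℝ}
    (hbd : Integrable bd μ) (hm : ∀ z ∈ U, AEStronglyMeasurable (F z) μ)
    (hd : ∀ᵐ t ∂μ, DifferentiableOn ℂ (fun z => F z t) U)
    (hb : ∀ᵐ t ∂μ, ∀ z ∈ U, ‖F z t‖ ≤ bd t) :
    DifferentiableOn ℂ (fun z => ∫ t, F z t ∂μ) U := by
  intro z₀ hz₀
  obtain ⟨r, hr, hrU⟩ := Metric.isOpen_iff.1 hU z₀ hz₀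
  have hr2 : 0 < r / 2 := by positivity
  have hsub : ∀ z ∈ Metric.ball z₀ (r / 2), Metric.closedBall z (r / 4) ⊆ U := by
    intro z hz w hw
    apply hrU
    rw [Metric.mem_ball] at hz ⊢
    rw [Metric.mem_closedBall] at hw
    have := dist_triangle w z z₀
    linarith
  have hsub' : Metric.ball z₀ (r / 2) ⊆ U := fun z hz =>
    hsub z hz (Metric.mem_closedBall_self (by positivity))
  have hm' : AEStronglyMeasurable (fun t => deriv (fun z => F z t) z₀) μ := by
    let e : ℕ → ℂ := fun n => ((r / 2 * (1 / 2) ^ (n + 1) : ℝ) : ℂ)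
    have he0 : ∀ n, 0 < r / 2 * (1 / 2 : ℝ) ^ (n + 1) := fun n => by positivity
    have heU : ∀ n, z₀ + e n ∈ U := by
      intro n
      apply hsub'
      rw [Metric.mem_ball, dist_eq_norm, add_sub_cancel_left, Complex.norm_real,
        Real.norm_of_nonneg (he0 n).le]
      have : (1 / 2 : ℝ) ^ (n + 1) < 1 := pow_lt_one₀ (by norm_num) (by norm_num) (by simp)
      nlinarith
    have het : Tendsto (fun n => z₀ + e n) atTop (𝓝[≠] z₀) := by
      apply tendsto_nhdsWithin_iff.2
      constructor
      · have h1 : Tendsto (fun n : ℕ => r / 2 * (1 / 2 : ℝ) ^ (n + 1)) atTop (𝓝 0) := by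
          have := ((tendsto_pow_atTop_nhds_zero_of_lt_one (r := (1 / 2 : ℝ)) (by norm_num)
            (by norm_num)).comp (tendsto_add_atTop_nat 1)).const_mul (r / 2)
          simpa using! this
        have h2 : Tendsto e atTop (𝓝 0) := by
          have := (Complex.continuous_ofReal.tendsto 0).comp h1
          rw [Complex.ofReal_zero] at this
          exact this
        simpa using h2.const_add z₀
      · refine Eventually.of_forall fun n => ?_
        have : e n ≠ 0 := by
          simp only [e]; exact_mod_cast (he0 n).ne'
        simpa using this
    refine aestronglyMeasurable_of_tendsto_ae atTop
      (f := fun n t => slope (fun z => F z t) z₀ (z₀ + e n)) (fun n => ?_) ?_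
    · simp only [slope_def_field, div_eq_mul_inv]
      exact AEStronglyMeasurable.mul_const ((hm _ (heU n)).sub (hm _ hz₀)) _
    · filter_upwards [hd] with t ht
      have := (ht.differentiableAt (hU.mem_nhds hz₀)).hasDerivAt
      exact (hasDerivAt_iff_tendsto_slope.1 this).comp het
  have key := hasDerivAt_integral_of_dominated_loc_of_deriv_le (μ := μ) (F := F) (x₀ := z₀)
    (s := Metric.ball z₀ (r / 2)) (F' := fun z t => deriv (fun z => F z t) z)
    (bound := fun t => bd t / (r / 4)) (Metric.ball_mem_nhds _ hr2)
    (by filter_upwards [hU.mem_nhds hz₀] with z hz using hm z hz)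
    (hbd.mono' (hm z₀ hz₀) (by filter_upwards [hb] with t ht using ht z₀ hz₀))
    hm' ?_ (hbd.div_const _) ?_
  · exact key.2.differentiableAt.differentiableWithinAt
  · filter_upwards [hd, hb] with t ht hbt z hz
    apply Complex.norm_deriv_le_of_forall_mem_sphere_norm_le (by positivity)
    · apply DifferentiableOn.diffContOnCl
      apply ht.mono
      rw [closure_ball _ (by positivity)]
      exact hsub z hz
    · intro w hw
      exact hbt w (hsub z hz (Metric.sphere_subset_closedBall hw))
  · filter_upwards [hd] with t ht z hz
    exact (ht.differentiableAt (hU.mem_nhds (hsub' hz))).hasDerivAt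

lemma sub_ne_zero_of_notMem {a b : ℝ} {z : ℂ} (hz : z ∉ cutS a b) {t : ℝ} (ht : t ∈ Icc a b) :
    z - t ≠ 0 := by
  intro h
  apply hz
  rw [sub_eq_zero.1 h]
  exact ofReal_mem_cutS.2 ht

lemma ratio_slit {a b : ℝ} (hab : a < b) {z : ℂ} (hz : z ∉ cutS a b) :
    (z - b) / (z - a) ∈ Complex.slitPlane := by
  have ha := sub_ne_zero_of_notMem hz (left_mem_Icc.2 hab.le)
  have hb := sub_ne_zero_of_notMem hz (right_mem_Icc.2 hab.le)
  by_contra hn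
  rw [Complex.mem_slitPlane_iff_not_le_zero, not_not] at hn
  obtain ⟨s, hs, hse⟩ : ∃ s : ℝ, s ≤ 0 ∧ (z - b) / (z - a) = s := by
    rw [Complex.le_def] at hn
    refine ⟨((z - b) / (z - a)).re, by simpa using hn.1, ?_⟩
    apply Complex.ext <;> simp
    simpa using hn.2
  rw [div_eq_iff ha] at hse
  apply hz
  have hs1 : (1 - s) ≠ 0 := by linarith
  have : z = (((b - s * a) / (1 - s) : ℝ) : ℂ) := by
    have hs1' : (1 - s : ℂ) ≠ 0 := by exact_mod_cast hs1
    push_cast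
    rw [eq_div_iff hs1']
    linear_combination hse
  rw [this, ofReal_mem_cutS]
  have hs1p : 0 < 1 - s := by linarith
  constructor
  · rw [le_div_iff₀ hs1p]; nlinarith
  · rw [div_le_iff₀ hs1p]; nlinarith

lemma wBranch_sq {a b : ℝ} (hab : a < b) {z : ℂ} (hz : z ∉ cutS a b) :
    wBranch a b z ^ 2 = (z - a) * (z - b) := by
  have ha := sub_ne_zero_of_notMem hz (left_mem_Icc.2 hab.le)
  have hb := sub_ne_zero_of_notMem hz (right_mem_Icc.2 hab.le)
  unfold wBranch
  rw [mul_pow, ← Complex.exp_nat_mul]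
  have : ((2 : ℕ) : ℂ) * (1 / 2 * Complex.log ((z - b) / (z - a)))
    = Complex.log ((z - b) / (z - a)) := by push_cast; ring
  rw [this, Complex.exp_log (div_ne_zero hb ha)]
  field_simp

lemma wBranch_differentiableOn {a b : ℝ} (hab : a < b) :
    DifferentiableOn ℂ (wBranch a b) (cutS a b)ᶜ := by
  intro z hz
  have ha := sub_ne_zero_of_notMem hz (left_mem_Icc.2 hab.le)
  apply DifferentiableAt.differentiableWithinAt
  unfold wBranch
  have h1 : DifferentiableAt ℂ (fun z : ℂ => (z - b) / (z - a)) z :=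
    DifferentiableAt.div (by fun_prop) (by fun_prop) ha
  have h2 := h1.clog (ratio_slit hab hz)
  exact DifferentiableAt.mul (by fun_prop) ((h2.const_mul _).cexp)

lemma wBranch_real {a b x : ℝ} (hab : a < b) (hx : x ∉ Icc a b) :
    ∃ s : ℝ, 0 < s ∧ wBranch a b x = (((x - a) * s : ℝ) : ℂ) := by
  have hpos : 0 < (x - b) / (x - a) := by
    rw [mem_Icc, not_and_or, not_le, not_le] at hx
    rcases hx with h | h
    · exact div_pos_of_neg_of_neg (by linarith) (by linarith)
    · exact div_pos (by linarith) (by linarith)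
  refine ⟨Real.exp (1 / 2 * Real.log ((x - b) / (x - a))), Real.exp_pos _, ?_⟩
  unfold wBranch
  push_cast
  rw [Complex.ofReal_log hpos.le]
  push_cast
  rfl

/-- the analytic completion of `harmExt` -/
def fH (a b : ℝ) (u : ℝ → ℝ) (z : ℂ) : ℂ := wBranch a b z * cauchyT a b u z

lemma harmExt_eq (a b : ℝ) (u : ℝ → ℝ) (z : ℂ) : harmExt a b u z = (fH a b u z).re := rfl

lemma fH_real {a b x : ℝ} (hab : a < b) (hx : x ∉ Icc a b) (u : ℝ → ℝ) :
    fH a b u x = ((harmExt a b u x : ℝ) : ℂ) := by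
  obtain ⟨s, -, hs⟩ := wBranch_real hab hx
  have hc : cauchyT a b u x = ((∫ t, u t / (x - t) ∂(arcsineMeasure a b) : ℝ) : ℂ) := by
    unfold cauchyT
    rw [← integral_complex_ofReal]
    push_cast; rfl
  rw [harmExt_eq, fH, hs, hc, ← Complex.ofReal_mul, Complex.ofReal_re]

lemma kernel_meas (a b : ℝ) (z : ℂ) (u : ℝ → ℝ)
    (hu : AEStronglyMeasurable u (arcsineMeasure a b)) :
    AEStronglyMeasurable (fun t : ℝ => (u t : ℂ) / (z - (t : ℂ))) (arcsineMeasure a b) := by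
  have h1 : AEStronglyMeasurable (fun t : ℝ => (u t : ℂ)) (arcsineMeasure a b) :=
    Complex.continuous_ofReal.comp_aestronglyMeasurable hu
  have h2 : Measurable (fun t : ℝ => (z - (t : ℂ))) := by fun_prop
  exact (h1.aemeasurable.div h2.aemeasurable).aestronglyMeasurable

lemma kernel_bound {a b δ : ℝ} (hδ : 0 < δ) {z : ℂ} (hz : ∀ t ∈ Icc a b, δ ≤ ‖z - (t : ℂ)‖)
    (u : ℝ → ℝ) : ∀ t ∈ Icc a b, ‖(u t : ℂ) / (z - (t : ℂ))‖ ≤ |u t| / δ := by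
  intro t ht
  rw [norm_div, Complex.norm_real, Real.norm_eq_abs]
  gcongr
  exact hz t ht

lemma exists_dist {a b : ℝ} {z : ℂ} (hz : z ∉ cutS a b) :
    ∃ δ > 0, ∀ w ∈ Metric.ball z δ, ∀ t ∈ Icc a b, δ ≤ ‖w - (t : ℂ)‖ := by
  obtain ⟨ε, hε, h⟩ := Metric.isOpen_iff.1 (isClosed_cutS a b).isOpen_compl z hz
  refine ⟨ε / 2, by positivity, fun w hw t ht => ?_⟩
  by_contra hn
  push Not at hn
  have : (t : ℂ) ∈ Metric.ball z ε := by
    rw [Metric.mem_ball] at hw ⊢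
    have := dist_triangle (t : ℂ) w z
    rw [dist_comm (t : ℂ) w, dist_eq_norm w (t : ℂ)] at this
    linarith
  exact h this (ofReal_mem_cutS.2 ht)

lemma kernel_integrable {a b : ℝ} {z : ℂ} (hz : z ∉ cutS a b) {u : ℝ → ℝ}
    (hu : Integrable u (arcsineMeasure a b)) :
    Integrable (fun t : ℝ => (u t : ℂ) / (z - (t : ℂ))) (arcsineMeasure a b) := by
  obtain ⟨δ, hδ, h⟩ := exists_dist hz
  refine (hu.abs.div_const δ).mono' (kernel_meas a b z u hu.1) ?_
  filter_upwards [ars_ae_mem a b] with t ht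
  exact kernel_bound hδ (h z (Metric.mem_ball_self hδ)) u t ht

lemma cauchyT_differentiableOn {a b : ℝ} {u : ℝ → ℝ}
    (hu : Integrable u (arcsineMeasure a b)) :
    DifferentiableOn ℂ (cauchyT a b u) (cutS a b)ᶜ := by
  intro z hz
  obtain ⟨δ, hδ, h⟩ := exists_dist hz
  apply DifferentiableAt.differentiableWithinAt
  have : DifferentiableOn ℂ (cauchyT a b u) (Metric.ball z δ) := by
    apply diffOn_integral Metric.isOpen_ball (hu.abs.div_const δ)
    · intro w _; exact kernel_meas a b w u hu.1
    · filter_upwards [ars_ae_mem a b] with t ht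
      intro w hw
      apply DifferentiableAt.differentiableWithinAt
      apply DifferentiableAt.div (by fun_prop) (by fun_prop)
      intro h0
      have := h w hw t ht
      rw [h0, norm_zero] at this
      linarith
    · filter_upwards [ars_ae_mem a b] with t ht w hw
      exact kernel_bound hδ (h w hw) u t ht
  exact this.differentiableAt (Metric.ball_mem_nhds z hδ)

lemma fH_differentiableOn {a b : ℝ} (hab : a < b) {u : ℝ → ℝ}
    (hu : Integrable u (arcsineMeasure a b)) :
    DifferentiableOn ℂ (fH a b u) (cutS a b)ᶜ :=
  (wBranch_differentiableOn hab).mul (cauchyT_differentiableOn hu)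

lemma fH_bound {a b δ : ℝ} (hδ : 0 < δ) {z : ℂ} (hz : ∀ t ∈ Icc a b, δ ≤ ‖z - (t : ℂ)‖)
    {u : ℝ → ℝ} (hu : Integrable u (arcsineMeasure a b)) :
    ‖fH a b u z‖ ≤ ‖wBranch a b z‖ / δ * ∫ t, |u t| ∂(arcsineMeasure a b) := by
  unfold fH
  rw [norm_mul]
  have : ‖cauchyT a b u z‖ ≤ ∫ t, |u t| / δ ∂(arcsineMeasure a b) := by
    apply norm_integral_le_of_norm_le (hu.abs.div_const δ)
    filter_upwards [ars_ae_mem a b] with t ht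
    exact kernel_bound hδ hz u t ht
  rw [integral_div] at this
  calc _ ≤ ‖wBranch a b z‖ * ((∫ t, |u t| ∂(arcsineMeasure a b)) / δ) := by gcongr
    _ = _ := by ring

lemma fH_sub {a b : ℝ} {z : ℂ} (hz : z ∉ cutS a b) {u v : ℝ → ℝ}
    (hu : Integrable u (arcsineMeasure a b)) (hv : Integrable v (arcsineMeasure a b)) :
    fH a b (fun t => u t - v t) z = fH a b u z - fH a b v z := by
  unfold fH cauchyT
  rw [← mul_sub, ← integral_sub (kernel_integrable hz hu) (kernel_integrable hz hv)]
  congr 2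
  ext t; push_cast; ring

lemma fH_add {a b : ℝ} {z : ℂ} (hz : z ∉ cutS a b) {u v : ℝ → ℝ}
    (hu : Integrable u (arcsineMeasure a b)) (hv : Integrable v (arcsineMeasure a b)) :
    fH a b (fun t => u t + v t) z = fH a b u z + fH a b v z := by
  unfold fH cauchyT
  rw [← mul_add, ← integral_add (kernel_integrable hz hu) (kernel_integrable hz hv)]
  congr 2
  ext t; push_cast; ring

lemma fH_smul {a b : ℝ} {z : ℂ} {u : ℝ → ℝ} (c : ℝ) :
    fH a b (fun t => c * u t) z = c * fH a b u z := by
  unfold fH cauchyT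
  rw [mul_left_comm]
  congr 1
  rw [← integral_const_mul]
  congr 1
  ext t; push_cast; ring

lemma fH_congr {a b : ℝ} {z : ℂ} {u v : ℝ → ℝ} (h : ∀ᵐ t ∂(arcsineMeasure a b), u t = v t) :
    fH a b u z = fH a b v z := by
  unfold fH cauchyT
  congr 1
  apply integral_congr_ae
  filter_upwards [h] with t ht
  rw [ht]

lemma fH_congr_Icc {a b : ℝ} {z : ℂ} {u v : ℝ → ℝ} (h : ∀ t ∈ Icc a b, u t = v t) :
    fH a b u z = fH a b v z :=
  fH_congr (by filter_upwards [ars_ae_mem a b] with t ht using h t ht)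

/-- complement of the cut is preconnected -/
lemma isPreconnected_compl_cutS (a b : ℝ) : IsPreconnected (cutS a b)ᶜ := by
  have h1 : IsPreconnected {z : ℂ | 0 < z.im} := (convex_halfSpace_im_gt 0).isPreconnected
  have h2 : IsPreconnected {z : ℂ | z.im < 0} := (convex_halfSpace_im_lt 0).isPreconnected
  have h3 : IsPreconnected {z : ℂ | b < z.re} := (convex_halfSpace_re_gt b).isPreconnected
  have h4 : IsPreconnected {z : ℂ | z.re < a} := (convex_halfSpace_re_lt a).isPreconnected
  have h13 := h1.union (⟨b + 1, 1⟩ : ℂ) (by simp) (by simp) h3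
  have h132 := h13.union (⟨b + 1, -1⟩ : ℂ) (by simp) (by simp) h2
  have h := h132.union (⟨a - 1, 1⟩ : ℂ) (by simp) (by simp) h4
  convert h using 1
  ext z
  simp only [mem_compl_iff, mem_cutS, mem_union, mem_ofPred_eq]
  constructor
  · intro hz
    by_contra hn
    push Not at hn
    exact hz ⟨le_antisymm hn.1.1.1 hn.1.2, hn.2, hn.1.1.2⟩
  · rintro (((h | h) | h) | h) ⟨h0, ha, hb⟩ <;> linarith

/-- identity principle from a half line -/
lemma eqOn_of_halfline {a b R : ℝ} (hR : b ≤ R) {f g : ℂ → ℂ}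
    (hf : DifferentiableOn ℂ f (cutS a b)ᶜ) (hg : DifferentiableOn ℂ g (cutS a b)ᶜ)
    (h : ∀ x : ℝ, R < x → f x = g x) : EqOn f g (cutS a b)ᶜ := by
  have ho : IsOpen (cutS a b)ᶜ := (isClosed_cutS a b).isOpen_compl
  have hz : ((R + 1 : ℝ) : ℂ) ∈ (cutS a b)ᶜ := by
    rw [mem_compl_iff, ofReal_mem_cutS, mem_Icc]; intro h; linarith [h.2]
  apply (hf.analyticOnNhd ho).eqOn_of_preconnected_of_frequently_eq (hg.analyticOnNhd ho)
    (isPreconnected_compl_cutS a b) hz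
  have ht : Tendsto (fun x : ℝ => (x : ℂ)) (𝓝[>] (R + 1)) (𝓝[≠] ((R + 1 : ℝ) : ℂ)) := by
    apply tendsto_nhdsWithin_iff.2
    constructor
    · exact (Complex.continuous_ofReal.tendsto _).mono_left nhdsWithin_le_nhds
    · filter_upwards [self_mem_nhdsWithin] with x hx
      simp only [mem_compl_iff, mem_singleton_iff, Complex.ofReal_inj]
      exact (ne_of_gt hx)
  apply ht.frequently
  apply Eventually.frequently
  filter_upwards [self_mem_nhdsWithin] with x hx
  have : R + 1 < x := hx
  exact h x (by linarith)

lemma fH_one {a b : ℝ} (hab : a < b) {z : ℂ} (hz : z ∉ cutS a b) :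
    fH a b (fun _ => 1) z = 1 := by
  have := ars_finite hab
  apply eqOn_of_halfline le_rfl (fH_differentiableOn hab (integrable_const 1))
    (differentiableOn_const 1) _ hz
  intro x hx
  have hxa : 0 < x - a := by linarith
  have hxb : 0 < x - b := by linarith
  have hxn : x ∉ Icc a b := fun h => by linarith [h.2]
  have hc : cauchyT a b (fun _ => 1) x = ((1 / Real.sqrt ((x - a) * (x - b)) : ℝ) : ℂ) := by
    unfold cauchyT
    rw [← ars_cauchy hab hx]
    simp
  obtain ⟨s, hs, hw⟩ := wBranch_real hab hxn
  have hsq := wBranch_sq hab (fun h => hxn (ofReal_mem_cutS.1 h))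
  rw [hw] at hsq
  have hsq' : ((x - a) * s) ^ 2 = (x - a) * (x - b) := by exact_mod_cast hsq
  rw [fH, hw, hc, ← hsq', Real.sqrt_sq (by positivity), ← Complex.ofReal_mul]
  have : 0 < (x - a) * s := by positivity
  rw [mul_one_div_cancel this.ne']
  simp

lemma fH_const {a b : ℝ} (hab : a < b) {z : ℂ} (hz : z ∉ cutS a b) (c : ℝ) :
    fH a b (fun _ => c) z = c := by
  have := fH_smul (a := a) (b := b) (z := z) (u := fun _ => 1) c
  simp only [mul_one] at this
  rw [this, fH_one hab hz, mul_one]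

lemma exists_G {a b : ℝ} (hab : a < b) {V : Set ℂ} (hV : IsOpen V) (hcV : cutS a b ⊆ V)
    {U : ℂ → ℂ} (hU : DifferentiableOn ℂ U V) {u : ℝ → ℝ}
    (hui : Integrable u (arcsineMeasure a b)) (hu : ∀ t ∈ Icc a b, U t = u t) :
    ∃ N : Set ℂ, IsOpen N ∧ cutS a b ⊆ N ∧ N ⊆ V ∧ ∃ G : ℂ → ℂ, DifferentiableOn ℂ G N ∧
      ∀ z ∈ N, z ∉ cutS a b → (fH a b u z - U z) ^ 2 = (z - a) * (z - b) * G z ^ 2 := by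
  have := ars_finite hab
  obtain ⟨ε, hε, hεV⟩ := (isCompact_cutS a b).exists_cthickening_subset_open hV hcV
  have hNsub : Metric.thickening ε (cutS a b) ⊆ Metric.cthickening ε (cutS a b) :=
    Metric.thickening_subset_cthickening _ _
  have hcN : cutS a b ⊆ Metric.thickening ε (cutS a b) := Metric.self_subset_thickening hε _
  set N := Metric.thickening ε (cutS a b) with hN
  have hNo : IsOpen N := Metric.isOpen_thickening
  have hNV : N ⊆ V := hNsub.trans hεV
  have hNconv : Convex ℝ N := (convex_cutS a b).thickening ε
  have hKc : IsCompact (Metric.cthickening ε (cutS a b)) := (isCompact_cutS a b).cthickening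
  obtain ⟨M, hM⟩ := hKc.exists_bound_of_continuousOn (f := deriv U)
    ((hU.deriv hV).continuousOn.mono hεV)
  have hUN : ∀ z ∈ N, DifferentiableAt ℂ U z := fun z hz =>
    hU.differentiableAt (hV.mem_nhds (hNV hz))
  have hLip : ∀ x ∈ N, ∀ y ∈ N, ‖U y - U x‖ ≤ M * ‖y - x‖ := fun x hx y hy =>
    hNconv.norm_image_sub_le_of_norm_deriv_le hUN (fun z hz => hM z (hNsub hz)) hx hy
  have htN : ∀ t ∈ Icc a b, (t : ℂ) ∈ N := fun t ht => hcN (ofReal_mem_cutS.2 ht)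
  refine ⟨N, hNo, hcN, hNV, fun z => ∫ t, dslope U (t : ℂ) z ∂(arcsineMeasure a b), ?_, ?_⟩
  · apply diffOn_integral hNo (bd := fun _ => M) (integrable_const M)
    · intro z hz
      have hcomm : ∀ t : ℝ, dslope U (t : ℂ) z = dslope U z (t : ℂ) := by
        intro t
        by_cases h : z = t
        · rw [← h]
        · rw [dslope_of_ne _ h, dslope_of_ne _ (Ne.symm h), slope_comm]
      simp_rw [hcomm]
      have hc : ContinuousOn (dslope U z) N :=
        (continuousOn_dslope (hNo.mem_nhds hz)).2 ⟨(hU.mono hNV).continuousOn, hUN z hz⟩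
      have hc2 : ContinuousOn (fun t : ℝ => dslope U z (t : ℂ)) (Icc a b) :=
        hc.comp Complex.continuous_ofReal.continuousOn htN
      exact (hc2.aestronglyMeasurable measurableSet_Icc).mono_ac (ars_ac a b)
    · filter_upwards [ars_ae_mem a b] with t ht
      exact (Complex.differentiableOn_dslope (hNo.mem_nhds (htN t ht))).2 (hU.mono hNV)
    · filter_upwards [ars_ae_mem a b] with t ht z hz
      by_cases h : z = t
      · rw [h, dslope_same]
        exact hM _ (hNsub (htN t ht))
      · rw [dslope_of_ne _ h, slope_def_field, norm_div]
        have hpos : 0 < ‖z - t‖ := norm_pos_iff.2 (sub_ne_zero.2 h)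
        rw [div_le_iff₀ hpos]
        exact hLip _ (htN t ht) _ hz
  · intro z hz hzc
    have e1 : fH a b u z - U z =
        - (wBranch a b z * ∫ t, dslope U (t : ℂ) z ∂(arcsineMeasure a b)) := by
      have h1 := fH_one hab hzc
      have : fH a b u z - U z = fH a b u z - U z * fH a b (fun _ => 1) z := by rw [h1, mul_one]
      rw [this]
      unfold fH cauchyT
      have hk := kernel_integrable hzc hui
      have hk1 := kernel_integrable hzc (u := fun _ => 1) (integrable_const 1)
      rw [mul_left_comm, ← integral_const_mul (U z), ← mul_sub,
        ← integral_sub hk (hk1.const_mul (U z)), ← mul_neg, ← integral_neg]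
      congr 1
      apply integral_congr_ae
      filter_upwards [ars_ae_mem a b] with t ht
      have hne := sub_ne_zero_of_notMem hzc ht
      rw [dslope_of_ne _ (sub_ne_zero.1 hne), slope_def_field, hu t ht]
      push_cast
      field_simp
      ring
    rw [e1, neg_sq, mul_pow, wBranch_sq hab hzc]

lemma even_poly (p : ℂ[X]) {N : Set ℂ} {α γ : ℂ → ℂ} (hα : DifferentiableOn ℂ α N)
    (hγ : DifferentiableOn ℂ γ N) :
    ∃ q : ℂ → ℂ, DifferentiableOn ℂ q N ∧
      ∀ z β, β ^ 2 = γ z → q z = p.eval (α z + β) + p.eval (α z - β) := by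
  induction p using Polynomial.induction_on' with
  | add p₁ p₂ h₁ h₂ =>
    obtain ⟨q₁, d₁, e₁⟩ := h₁
    obtain ⟨q₂, d₂, e₂⟩ := h₂
    refine ⟨fun z => q₁ z + q₂ z, d₁.add d₂, fun z β h => ?_⟩
    simp only [e₁ z β h, e₂ z β h, eval_add]; ring
  | monomial n c =>
    have key : ∀ n : ℕ, ∃ q : ℂ → ℂ, DifferentiableOn ℂ q N ∧
        ∀ z β, β ^ 2 = γ z → q z = (α z + β) ^ n + (α z - β) ^ n := by
      intro n
      induction n using Nat.twoStepInduction with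
      | zero => exact ⟨fun _ => 2, differentiableOn_const 2, fun z β h => by norm_num⟩
      | one => exact ⟨fun z => 2 * α z, hα.const_mul 2, fun z β h => by ring⟩
      | more n h₁ h₂ =>
        obtain ⟨q₁, d₁, e₁⟩ := h₁
        obtain ⟨q₂, d₂, e₂⟩ := h₂
        refine ⟨fun z => 2 * α z * q₂ z - (α z ^ 2 - γ z) * q₁ z,
          ((hα.const_mul 2).mul d₂).sub (((hα.pow 2).sub hγ).mul d₁), fun z β h => ?_⟩
        simp only [e₁ z β h, e₂ z β h, ← h]; ring
    obtain ⟨q, d, e⟩ := key n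
    refine ⟨fun z => c * q z, d.const_mul c, fun z β h => ?_⟩
    simp only [e z β h, eval_monomial]; ring

/-- gluing and Liouville -/
lemma glue_liouville {K : Set ℂ} (hK : Dense Kᶜ) {S : ℂ → ℂ}
    (hS : ∀ z₀ : ℂ, ∃ N : Set ℂ, IsOpen N ∧ z₀ ∈ N ∧ ∃ q : ℂ → ℂ, DifferentiableOn ℂ q N ∧
      ∀ z ∈ N, z ∉ K → S z = q z) {R C : ℝ} (hb : ∀ z, z ∉ K → R ≤ ‖z‖ → ‖S z‖ ≤ C) :
    ∀ z w, z ∉ K → w ∉ K → S z = S w := by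
  let E : ℂ → ℂ := fun z => limUnder (𝓝[Kᶜ] z) S
  have hne : ∀ z, (𝓝[Kᶜ] z).NeBot := fun z => mem_closure_iff_nhdsWithin_neBot.1 (hK z)
  have hE : ∀ z₀ : ℂ, ∃ N : Set ℂ, IsOpen N ∧ z₀ ∈ N ∧ ∃ q : ℂ → ℂ, DifferentiableOn ℂ q N ∧
      (∀ z ∈ N, E z = q z) ∧ ∀ z ∈ N, z ∉ K → S z = q z := by
    intro z₀
    obtain ⟨N, hN, hz, q, hq, hqS⟩ := hS z₀
    refine ⟨N, hN, hz, q, hq, fun z hzN => ?_, hqS⟩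
    have := hne z
    apply Tendsto.limUnder_eq
    have h1 : Tendsto q (𝓝[Kᶜ] z) (𝓝 (q z)) :=
      ((hq.differentiableAt (hN.mem_nhds hzN)).continuousAt.tendsto).mono_left nhdsWithin_le_nhds
    apply h1.congr'
    filter_upwards [self_mem_nhdsWithin, mem_nhdsWithin_of_mem_nhds (hN.mem_nhds hzN)] with y h h'
    exact (hqS y h' h).symm
  have hES : ∀ z, z ∉ K → E z = S z := by
    intro z hz
    obtain ⟨N, hN, hzN, q, hq, hEq, hqS⟩ := hE z
    rw [hEq z hzN, hqS z hzN hz]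
  have hdiff : Differentiable ℂ E := by
    intro z
    obtain ⟨N, hN, hzN, q, hq, hEq, hqS⟩ := hE z
    apply (hq.differentiableAt (hN.mem_nhds hzN)).congr_of_eventuallyEq
    filter_upwards [hN.mem_nhds hzN] with y hy using hEq y hy
  have hbE : ∀ z, R < ‖z‖ → ‖E z‖ ≤ C := by
    intro z hz
    have := hne z
    have ht : Tendsto (fun y => ‖E y‖) (𝓝[Kᶜ] z) (𝓝 ‖E z‖) :=
      (hdiff.continuous.norm.tendsto z).mono_left nhdsWithin_le_nhds
    apply le_of_tendsto ht
    have ho : IsOpen {y : ℂ | R < ‖y‖} := isOpen_lt continuous_const continuous_norm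
    filter_upwards [self_mem_nhdsWithin, mem_nhdsWithin_of_mem_nhds (ho.mem_nhds hz)] with y h h'
    rw [hES y h]
    exact hb y h (le_of_lt h')
  obtain ⟨C', hC'⟩ := (isCompact_closedBall (0 : ℂ) R).exists_bound_of_continuousOn
    hdiff.continuous.continuousOn
  have hbd : Bornology.IsBounded (range E) := by
    rw [isBounded_iff_forall_norm_le]
    refine ⟨max C C', ?_⟩
    rintro _ ⟨z, rfl⟩
    rcases le_or_gt ‖z‖ R with h | h
    · exact (hC' z (by simpa using h)).trans (le_max_right _ _)
    · exact (hbE z h).trans (le_max_left _ _)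
  intro z w hz hw
  rw [← hES z hz, ← hES w hw]
  exact hdiff.apply_eq_apply_of_bounded hbd z w

lemma fH_bdd_infty {a b : ℝ} (hab : a < b) {u : ℝ → ℝ}
    (hu : Integrable u (arcsineMeasure a b)) :
    ∃ R C : ℝ, ∀ z : ℂ, R ≤ ‖z‖ → ‖fH a b u z‖ ≤ C := by
  set r := |a| + |b| + 1 with hr
  refine ⟨2 * r, 4 * ∫ t, |u t| ∂(arcsineMeasure a b), fun z hz => ?_⟩
  have ha0 := abs_nonneg a
  have hb0 := abs_nonneg b
  have hzpos : 0 < ‖z‖ := by linarith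
  have hδ : ∀ t ∈ Icc a b, ‖z‖ / 2 ≤ ‖z - (t : ℂ)‖ := by
    intro t ht
    have h1 := norm_sub_norm_le z (t : ℂ)
    rw [Complex.norm_real, Real.norm_eq_abs] at h1
    have : |t| ≤ |a| + |b| := by
      rw [abs_le]
      constructor
      · linarith [ht.1, neg_abs_le a]
      · linarith [ht.2, le_abs_self b]
    linarith
  have hzc : z ∉ cutS a b := by
    rintro ⟨t, ht, rfl⟩
    have := hδ t ht
    simp only [sub_self, norm_zero] at this
    linarith
  have hw : ‖wBranch a b z‖ ≤ 2 * ‖z‖ := by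
    have h2 : ‖wBranch a b z‖ ^ 2 ≤ (2 * ‖z‖) ^ 2 := by
      rw [← norm_pow, wBranch_sq hab hzc, norm_mul]
      have e1 : ‖z - (a : ℂ)‖ ≤ 2 * ‖z‖ := by
        have := norm_sub_le z (a : ℂ)
        rw [Complex.norm_real, Real.norm_eq_abs] at this
        linarith
      have e2 : ‖z - (b : ℂ)‖ ≤ 2 * ‖z‖ := by
        have := norm_sub_le z (b : ℂ)
        rw [Complex.norm_real, Real.norm_eq_abs] at this
        linarith
      rw [sq]
      gcongr
    exact (pow_le_pow_iff_left₀ (norm_nonneg _) (by positivity) two_ne_zero).1 h2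
  refine (fH_bound (by positivity) hδ hu).trans ?_
  gcongr
  rw [div_le_iff₀ (by positivity)]
  linarith

lemma cut_disj {d : ℕ} {A B : Fin d → ℝ}
    (hdisj : ∀ i j, i ≠ j → Disjoint (Icc (A i) (B i)) (Icc (A j) (B j))) {i j : Fin d}
    (hij : i ≠ j) {z : ℂ} (hz : z ∈ cutS (A i) (B i)) : z ∉ cutS (A j) (B j) := by
  obtain ⟨t, ht, rfl⟩ := hz
  intro h
  exact Set.disjoint_left.1 (hdisj i j hij) ht (ofReal_mem_cutS.1 h)

lemma poly_bound (p : ℂ[X]) (r : ℝ) : ∃ C : ℝ, ∀ x : ℂ, ‖x‖ ≤ r → ‖p.eval x‖ ≤ C := by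
  obtain ⟨C, hC⟩ := (isCompact_closedBall (0 : ℂ) r).exists_bound_of_continuousOn
    p.continuous.continuousOn
  exact ⟨C, fun x hx => hC x (by simpa using hx)⟩

/-- The analytic function whose real part is `calH`. -/
def FH (d : ℕ) (A B : Fin d → ℝ) (u : Fin d → ℝ → ℝ) (i : Fin d) (z : ℂ) : ℂ :=
  -(1 / 2) * ∑ j ∈ Finset.univ.erase i, fH (A j) (B j) (u j) z

lemma calH_eq (d : ℕ) (A B : Fin d → ℝ) (u : Fin d → ℝ → ℝ) (i : Fin d) (x : ℝ) :
    calH d A B u i x = (FH d A B u i x).re := by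
  unfold calH FH
  have : (-(1 / 2) : ℂ) = ((-(1 / 2) : ℝ) : ℂ) := by push_cast; rfl
  rw [this, Complex.re_ofReal_mul, Complex.re_sum]
  rfl

lemma FH_real {d : ℕ} {A B : Fin d → ℝ} (hAB : ∀ i, A i < B i) (u : Fin d → ℝ → ℝ) (i : Fin d)
    {x : ℝ} (hx : ∀ j, j ≠ i → x ∉ Icc (A j) (B j)) :
    FH d A B u i x = ((calH d A B u i x : ℝ) : ℂ) := by
  unfold calH FH
  push_cast
  congr 1
  apply Finset.sum_congr rfl
  intro j hj
  exact fH_real (hAB j) (hx j (Finset.ne_of_mem_erase hj)) (u j)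

/-- all symmetric polynomial functions of the branches are constant -/
lemma sym_const {d : ℕ} {A B : Fin d → ℝ} (hAB : ∀ i, A i < B i)
    (hdisj : ∀ i j, i ≠ j → Disjoint (Icc (A i) (B i)) (Icc (A j) (B j)))
    {u : Fin d → ℝ → ℝ} (hui : ∀ i, Integrable (u i) (arcsineMeasure (A i) (B i)))
    (hu : ∀ i, ∀ x ∈ Icc (A i) (B i), u i x = calH d A B u i x) (p : ℂ[X]) :
    ∀ z w, (z ∉ ⋃ i, cutS (A i) (B i)) → (w ∉ ⋃ i, cutS (A i) (B i)) →
      p.eval (∑ k, fH (A k) (B k) (u k) z) + ∑ k, p.eval (-fH (A k) (B k) (u k) z) =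
      p.eval (∑ k, fH (A k) (B k) (u k) w) + ∑ k, p.eval (-fH (A k) (B k) (u k) w) := by
  have hKc : IsClosed (⋃ i, cutS (A i) (B i)) := isClosed_iUnion_of_finite fun i => isClosed_cutS _ _
  have hfd : ∀ k, DifferentiableOn ℂ (fH (A k) (B k) (u k)) (cutS (A k) (B k))ᶜ :=
    fun k => fH_differentiableOn (hAB k) (hui k)
  have hpd : ∀ {f : ℂ → ℂ} {s : Set ℂ}, DifferentiableOn ℂ f s →
      DifferentiableOn ℂ (fun z => p.eval (f z)) s := fun hf =>
    p.differentiable.comp_differentiableOn hf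
  have hdense : Dense (⋃ i, cutS (A i) (B i))ᶜ := by
    have h0 : Dense {z : ℂ | z.im = 0}ᶜ := by
      rw [← interior_eq_empty_iff_dense_compl]
      have := Complex.interior_preimage_im {0}
      rw [interior_singleton, preimage_empty] at this
      exact this
    apply h0.mono
    intro z hz hz'
    obtain ⟨i, hi⟩ := mem_iUnion.1 hz'
    exact hz (mem_cutS.1 hi).1
  choose R C hRC using fun k => fH_bdd_infty (hAB k) (hui k)
  obtain ⟨C1, hC1⟩ := poly_bound p (∑ k, |C k|)
  have hRk : ∀ k, R k ≤ ∑ k, |R k| := fun k => (le_abs_self _).trans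
    (Finset.single_le_sum (f := fun k => |R k|) (fun i _ => abs_nonneg _) (Finset.mem_univ k))
  have hCk : ∀ k, |C k| ≤ ∑ k, |C k| := fun k =>
    Finset.single_le_sum (f := fun k => |C k|) (fun i _ => abs_nonneg _) (Finset.mem_univ k)
  refine glue_liouville (S := fun z => p.eval (∑ k, fH (A k) (B k) (u k) z) +
    ∑ k, p.eval (-fH (A k) (B k) (u k) z)) hdense ?_ (R := ∑ k, |R k|)
    (C := C1 + ∑ _k : Fin d, C1) ?_
  · intro z₀
    by_cases hz₀ : z₀ ∈ ⋃ i, cutS (A i) (B i)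
    · obtain ⟨j, hj⟩ := mem_iUnion.1 hz₀
      let V : Set ℂ := ⋂ k : {k // k ≠ j}, (cutS (A k) (B k))ᶜ
      have hVo : IsOpen V := isOpen_iInter_of_finite fun k => (isClosed_cutS _ _).isOpen_compl
      have hVk : ∀ k, k ≠ j → V ⊆ (cutS (A k) (B k))ᶜ := fun k hk =>
        iInter_subset (fun k : {k // k ≠ j} => (cutS (A k) (B k))ᶜ) ⟨k, hk⟩
      have hcV : cutS (A j) (B j) ⊆ V := by
        intro z hz
        rw [mem_iInter]
        intro k
        exact cut_disj hdisj k.2.symm hz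
      have hUd : DifferentiableOn ℂ (FH d A B u j) V := by
        unfold FH
        apply DifferentiableOn.const_mul
        apply DifferentiableOn.fun_sum
        intro k hk
        exact (hfd k).mono (hVk k (Finset.ne_of_mem_erase hk))
      have hUu : ∀ t ∈ Icc (A j) (B j), FH d A B u j t = u j t := by
        intro t ht
        rw [FH_real hAB u j, ← hu j t ht]
        intro k hk h
        exact Set.disjoint_left.1 (hdisj k j hk) h ht
      obtain ⟨N, hNo, hcN, hNV, G, hGd, hG⟩ := exists_G (hAB j) hVo hcV hUd (hui j) hUu
      obtain ⟨q, hqd, hq⟩ := even_poly p (N := N) (α := fun z => -FH d A B u j z)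
        (γ := fun z => (z - A j) * (z - B j) * G z ^ 2) ((hUd.mono hNV).neg)
        (DifferentiableOn.mul (by fun_prop) (hGd.pow 2))
      refine ⟨N, hNo, hcN hj, fun z => q z + ∑ k ∈ Finset.univ.erase j,
        p.eval (-fH (A k) (B k) (u k) z), ?_, ?_⟩
      · apply hqd.add
        apply DifferentiableOn.fun_sum
        intro k hk
        exact hpd ((hfd k).mono (hNV.trans (hVk k (Finset.ne_of_mem_erase hk)))).neg
      · intro z hz hzK
        have hzj : z ∉ cutS (A j) (B j) := fun h => hzK (mem_iUnion.2 ⟨j, h⟩)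
        have := hq z (fH (A j) (B j) (u j) z - FH d A B u j z) (hG z hz hzj)
        simp only [this]
        rw [← Finset.add_sum_erase _ (fun k => p.eval (-fH (A k) (B k) (u k) z))
          (Finset.mem_univ j), ← Finset.add_sum_erase _ (fun k => fH (A k) (B k) (u k) z)
          (Finset.mem_univ j)]
        have hs : ∑ k ∈ Finset.univ.erase j, fH (A k) (B k) (u k) z = -2 * FH d A B u j z := by
          unfold FH; ring
        rw [hs]
        have e1 : fH (A j) (B j) (u j) z + -2 * FH d A B u j z =
          -FH d A B u j z + (fH (A j) (B j) (u j) z - FH d A B u j z) := by ring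
        have e2 : -fH (A j) (B j) (u j) z =
          -FH d A B u j z - (fH (A j) (B j) (u j) z - FH d A B u j z) := by ring
        rw [e1, ← e2]
        ring
    · have hsub : ∀ k, (⋃ i, cutS (A i) (B i))ᶜ ⊆ (cutS (A k) (B k))ᶜ := fun k =>
        compl_subset_compl.2 (subset_iUnion (fun i => cutS (A i) (B i)) k)
      refine ⟨(⋃ i, cutS (A i) (B i))ᶜ, hKc.isOpen_compl, hz₀, _, ?_, fun z _ _ => rfl⟩
      apply DifferentiableOn.add
      · apply hpd
        apply DifferentiableOn.fun_sum
        intro k _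
        exact (hfd k).mono (hsub k)
      · apply DifferentiableOn.fun_sum
        intro k _
        exact hpd ((hfd k).mono (hsub k)).neg
  · intro z _ hz
    have hk : ∀ k, ‖fH (A k) (B k) (u k) z‖ ≤ |C k| := fun k =>
      (hRC k z ((hRk k).trans hz)).trans (le_abs_self _)
    refine (norm_add_le _ _).trans (add_le_add (hC1 _ ?_) ?_)
    · exact (norm_sum_le _ _).trans (Finset.sum_le_sum fun k _ => hk k)
    · refine (norm_sum_le _ _).trans (Finset.sum_le_sum fun k _ => hC1 _ ?_)
      rw [norm_neg]
      exact (hk k).trans (hCk k)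

theorem ker_trivial {d : ℕ} {A B : Fin d → ℝ} (hAB : ∀ i, A i < B i)
    (hdisj : ∀ i j, i ≠ j → Disjoint (Icc (A i) (B i)) (Icc (A j) (B j)))
    {u : Fin d → ℝ → ℝ} (hui : ∀ i, Integrable (u i) (arcsineMeasure (A i) (B i)))
    (hu : ∀ i, ∀ x ∈ Icc (A i) (B i), u i x = calH d A B u i x) :
    ∀ i, ∀ x ∈ Icc (A i) (B i), u i x = 0 := by
  set R := ∑ k, |B k| with hR
  have hBR : ∀ k, B k ≤ R := fun k => (le_abs_self _).trans
    (Finset.single_le_sum (f := fun k => |B k|) (fun i _ => abs_nonneg _) (Finset.mem_univ k))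
  have hxn : ∀ x : ℝ, R < x → ∀ k, x ∉ Icc (A k) (B k) := fun x hx k h => by
    linarith [h.2, hBR k]
  have hxK : ∀ x : ℝ, R < x → (x : ℂ) ∉ ⋃ i, cutS (A i) (B i) := by
    intro x hx h
    obtain ⟨i, hi⟩ := mem_iUnion.1 h
    exact hxn x hx i (ofReal_mem_cutS.1 hi)
  let v : Fin d → ℝ → ℝ := fun k x => harmExt (A k) (B k) (u k) x
  have hv : ∀ x : ℝ, R < x → ∀ k, fH (A k) (B k) (u k) x = ((v k x : ℝ) : ℂ) := fun x hx k =>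
    fH_real (hAB k) (hxn x hx k) (u k)
  have hR1 : R < R + 1 := by linarith
  let ψ : ℝ[X] := (X - C (∑ k, v k (R + 1))) * ∏ k, (X - C (-v k (R + 1)))
  have hψ0 : ψ ≠ 0 := mul_ne_zero (X_sub_C_ne_zero _)
    (Finset.prod_ne_zero_iff.2 fun k _ => X_sub_C_ne_zero _)
  let p : ℂ[X] := (ψ.map (algebraMap ℝ ℂ)) ^ 2
  have hpe : ∀ y : ℝ, p.eval (y : ℂ) = ((ψ.eval y ^ 2 : ℝ) : ℂ) := by
    intro y
    simp only [p, eval_pow, eval_map]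
    have := eval₂_at_apply (p := ψ) (algebraMap ℝ ℂ) y
    rw [Complex.coe_algebraMap] at this
    rw [this]
    push_cast; rfl
  have hS : ∀ x : ℝ, R < x → p.eval (∑ k, fH (A k) (B k) (u k) x) +
      ∑ k, p.eval (-fH (A k) (B k) (u k) x) =
      ((ψ.eval (∑ k, v k x) ^ 2 + ∑ k, ψ.eval (-v k x) ^ 2 : ℝ) : ℂ) := by
    intro x hx
    simp only [hv x hx]
    push_cast
    congr 1
    · have := hpe (∑ k, v k x)
      push_cast at this
      exact this
    · apply Finset.sum_congr rfl
      intro k _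
      have := hpe (-v k x)
      push_cast at this
      exact this
  have hroot : ∀ x : ℝ, R < x → ∀ k, ψ.eval (-v k x) = 0 := by
    intro x hx k
    have h := sym_const hAB hdisj hui hu p x (R + 1 : ℝ) (hxK x hx) (hxK _ hR1)
    rw [hS x hx, hS _ hR1, Complex.ofReal_inj] at h
    have h0 : ψ.eval (∑ k, v k (R + 1)) = 0 := by
      simp only [ψ, eval_mul, eval_sub, eval_X, eval_C, sub_self, zero_mul]
    have hk : ∀ k, ψ.eval (-v k (R + 1)) = 0 := by
      intro k
      simp only [ψ, eval_mul, eval_prod, eval_sub, eval_X, eval_C]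
      rw [Finset.prod_eq_zero (Finset.mem_univ k) (by simp), mul_zero]
    rw [h0] at h
    simp only [hk] at h
    have hsq : ∑ k, ψ.eval (-v k x) ^ 2 = 0 := by
      have : 0 ≤ ∑ k, ψ.eval (-v k x) ^ 2 := Finset.sum_nonneg fun k _ => sq_nonneg _
      have : 0 ≤ ψ.eval (∑ k, v k x) ^ 2 := sq_nonneg _
      have : ψ.eval (∑ k, v k x) ^ 2 + ∑ k, ψ.eval (-v k x) ^ 2 = 0 := by rw [h]; simp
      linarith
    have := (Finset.sum_eq_zero_iff_of_nonneg (fun k _ => sq_nonneg _)).1 hsq k (Finset.mem_univ k)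
    exact pow_eq_zero_iff two_ne_zero |>.1 this
  -- constancy on the half line
  have hconst : ∀ k, ∀ x : ℝ, R < x → v k x = v k (R + 1) := by
    intro k x hx
    have hc : ContinuousOn (fun x => -v k x) (Ioi R) := by
      have h1 : ContinuousOn (fun x : ℝ => fH (A k) (B k) (u k) x) (Ioi R) :=
        (fH_differentiableOn (hAB k) (hui k)).continuousOn.comp
          Complex.continuous_ofReal.continuousOn
          (fun x hx h => hxn x hx k (ofReal_mem_cutS.1 h))
      exact (Complex.continuous_re.comp_continuousOn h1).neg
    have hfin : (ψ.rootSet ℝ).Finite := ψ.rootSet_finite ℝ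
    have : Finite (ψ.rootSet ℝ) := hfin
    have hmaps : MapsTo (fun x => -v k x) (Ioi R) (ψ.rootSet ℝ) := by
      intro x hx
      rw [mem_rootSet]
      exact ⟨hψ0, by simpa using hroot x hx k⟩
    have := isPreconnected_Ioi.constant_of_mapsTo (T := ψ.rootSet ℝ)
      (isDiscrete_iff_discreteTopology.2 inferInstance) hc hmaps
      (mem_Ioi.2 hx) (mem_Ioi.2 hR1)
    exact neg_injective this
  have hconst' : ∀ k, ∀ z, z ∉ cutS (A k) (B k) →
      fH (A k) (B k) (u k) z = ((v k (R + 1) : ℝ) : ℂ) := by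
    intro k z hz
    refine eqOn_of_halfline (hBR k) (fH_differentiableOn (hAB k) (hui k))
      (differentiableOn_const (c := ((v k (R + 1) : ℝ) : ℂ))) (fun x hx => ?_) hz
    rw [hv x hx, hconst k x hx]
  have huc : ∀ k, ∀ x ∈ Icc (A k) (B k),
      u k x = -(1 / 2) * ∑ j ∈ Finset.univ.erase k, v j (R + 1) := by
    intro k x hx
    rw [hu k x hx]
    unfold calH
    congr 1
    apply Finset.sum_congr rfl
    intro j hj
    have hne := Finset.ne_of_mem_erase hj
    rw [harmExt_eq, hconst' j x, Complex.ofReal_re]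
    exact cut_disj hdisj hne.symm (ofReal_mem_cutS.2 hx)
  have hcv : ∀ k, v k (R + 1) = -(1 / 2) * ∑ j ∈ Finset.univ.erase k, v j (R + 1) := by
    intro k
    have h1 := hv (R + 1) hR1 k
    rw [fH_congr_Icc (huc k), fH_const (hAB k)] at h1
    · exact (Complex.ofReal_inj.1 h1).symm
    · intro h
      exact hxn _ hR1 k (ofReal_mem_cutS.1 h)
  have hsum : ∀ k, v k (R + 1) = -∑ j, v j (R + 1) := by
    intro k
    have := hcv k
    rw [← Finset.add_sum_erase _ (fun j => v j (R + 1)) (Finset.mem_univ k)]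
    linarith
  have hs0 : ∑ j, v j (R + 1) = 0 := by
    have h : ∑ j, v j (R + 1) = ∑ j : Fin d, -∑ j, v j (R + 1) :=
      Finset.sum_congr rfl fun j _ => hsum j
    rw [Finset.sum_const, Finset.card_univ, Fintype.card_fin, nsmul_eq_mul] at h
    have hd : (0 : ℝ) ≤ d := Nat.cast_nonneg d
    have : (1 + (d : ℝ)) * ∑ j, v j (R + 1) = 0 := by linarith
    rcases mul_eq_zero.1 this with h' | h'
    · linarith
    · exact h'
  intro i x hx
  rw [huc i x hx, ← hcv i, hsum i, hs0, neg_zero]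

/-- Arzela-Ascoli for bounded Lipschitz functions -/
lemma isCompact_bddLip {X E : Type*} [MetricSpace X] [CompactSpace X] [NormedAddCommGroup E]
    [ProperSpace E] (M : ℝ) (L : NNReal) :
    IsCompact {g : C(X, E) | (∀ x, ‖g x‖ ≤ M) ∧ LipschitzWith L g} := by
  let e := (ContinuousMap.equivBoundedOfCompact X E)
  have key : IsCompact {g : BoundedContinuousFunction X E | (∀ x, ‖g x‖ ≤ M) ∧ LipschitzWith L g} := by
    apply BoundedContinuousFunction.arzela_ascoli₂ (Metric.closedBall (0 : E) M)
      (isCompact_closedBall 0 M)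
    · have h1 : {g : BoundedContinuousFunction X E | (∀ x, ‖g x‖ ≤ M) ∧ LipschitzWith L g} =
        (⋂ x, {g | ‖g x‖ ≤ M}) ∩ ⋂ x, ⋂ y, {g | dist (g x) (g y) ≤ L * dist x y} := by
        ext g
        simp [lipschitzWith_iff_dist_le_mul]
      rw [h1]
      have hev : ∀ x : X, Continuous fun g : BoundedContinuousFunction X E => g x := fun x =>
        continuous_eval_const x
      refine IsClosed.inter (isClosed_iInter fun x => ?_)
        (isClosed_iInter fun x => isClosed_iInter fun y => ?_)
      · exact isClosed_le (hev x).norm continuous_const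
      · exact isClosed_le ((hev x).dist (hev y)) continuous_const
    · intro f x hf
      simpa using hf.1 x
    · apply Metric.equicontinuous_of_continuity_modulus (fun t => L * t)
      · have : Tendsto (fun t : ℝ => (L : ℝ) * t) (𝓝 0) (𝓝 (L * 0)) :=
          (continuous_const.mul continuous_id).tendsto 0
        simpa using this
      · intro x y f
        exact f.2.2.dist_le_mul x y
  have hcont : Continuous (fun g : BoundedContinuousFunction X E => g.toContinuousMap) :=
    (ContinuousMap.isometryEquivBoundedOfCompact X E).symm.continuous
  have := key.image hcont
  convert this using 1
  ext g
  constructor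
  · intro hg
    exact ⟨e g, hg, by ext; rfl⟩
  · rintro ⟨f, hf, rfl⟩
    exact hf

lemma deriv_bd {K : Set ℂ} {F : ℂ → ℂ} {r M : ℝ} (hr : 0 < r)
    (hF : DifferentiableOn ℂ F (Metric.thickening r K))
    (hM : ∀ z ∈ Metric.thickening r K, ‖F z‖ ≤ M) :
    ∀ z ∈ Metric.thickening (r / 2) K, ‖deriv F z‖ ≤ M / (r / 2) := by
  intro z hz
  obtain ⟨k, hk, hzk⟩ := Metric.mem_thickening_iff.1 hz
  have hsub : Metric.closedBall z (r / 2) ⊆ Metric.thickening r K := by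
    intro w hw
    rw [Metric.mem_closedBall] at hw
    refine Metric.mem_thickening_iff.2 ⟨k, hk, ?_⟩
    have := dist_triangle w z k
    linarith
  apply Complex.norm_deriv_le_of_forall_mem_sphere_norm_le (by positivity)
  · apply DifferentiableOn.diffContOnCl
    rw [closure_ball _ (by positivity)]
    exact hF.mono hsub
  · intro w hw
    exact hM w (hsub (Metric.sphere_subset_closedBall hw))

lemma thick_mono {K : Set ℂ} {r s : ℝ} (h : r ≤ s) : Metric.thickening r K ⊆ Metric.thickening s K :=
  Metric.thickening_mono h K

lemma diffAt_thick {K : Set ℂ} {F : ℂ → ℂ} {r : ℝ}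
    (hF : DifferentiableOn ℂ F (Metric.thickening r K)) {z : ℂ} (hz : z ∈ Metric.thickening r K) :
    DifferentiableAt ℂ F z := hF.differentiableAt (Metric.isOpen_thickening.mem_nhds hz)

lemma lip_bd {K : Set ℂ} (hK : Convex ℝ K) {F : ℂ → ℂ} {r M : ℝ} (hr : 0 < r) (hM0 : 0 ≤ M)
    (hF : DifferentiableOn ℂ F (Metric.thickening r K))
    (hM : ∀ z ∈ Metric.thickening r K, ‖F z‖ ≤ M) :
    LipschitzOnWith (Real.toNNReal (M / (r / 2))) F (Metric.thickening (r / 2) K) := by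
  apply (hK.thickening (r / 2)).lipschitzOnWith_of_nnnorm_deriv_le (𝕜 := ℂ)
  · intro z hz
    exact diffAt_thick hF (thick_mono (by linarith) hz)
  · intro z hz
    rw [← NNReal.coe_le_coe, Real.coe_toNNReal _ (by positivity)]
    exact deriv_bd hr hF hM z hz

/-- Montel type lemma -/
lemma montel {d : ℕ} {K : Fin d → Set ℂ} (hK : ∀ i, IsCompact (K i)) (hKc : ∀ i, Convex ℝ (K i))
    {r M : ℝ} (hr : 0 < r) (hM0 : 0 ≤ M) {F : ℕ → Fin d → ℂ → ℂ}
    (hF : ∀ n i, DifferentiableOn ℂ (F n i) (Metric.thickening r (K i)))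
    (hM : ∀ n i, ∀ z ∈ Metric.thickening r (K i), ‖F n i z‖ ≤ M) :
    ∃ φ : ℕ → ℕ, StrictMono φ ∧ ∃ g : Fin d → ℂ → ℂ,
      (∀ i, DifferentiableOn ℂ (g i) (Metric.thickening (r / 4) (K i))) ∧
      ∀ η > 0, ∀ᶠ n in atTop, ∀ i, ∀ z ∈ Metric.thickening (r / 4) (K i),
        ‖F (φ n) i z - g i z‖ ≤ η := by
  classical
  let Y : Fin d → Set ℂ := fun i => Metric.cthickening (r / 4) (K i)
  have hYsub : ∀ i, Y i ⊆ Metric.thickening (r / 2) (K i) := fun i =>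
    Metric.cthickening_subset_thickening' (by positivity) (by linarith) _
  have hYc : ∀ i, CompactSpace (Y i) := fun i =>
    isCompact_iff_compactSpace.1 ((hK i).cthickening)
  have hlip : ∀ n i, LipschitzOnWith (Real.toNNReal (M / (r / 2))) (F n i) (Y i) := fun n i =>
    (lip_bd (hKc i) hr hM0 (hF n i) (hM n i)).mono (hYsub i)
  let G : ℕ → (i : Fin d) → C(Y i, ℂ) := fun n i =>
    ⟨(Y i).domRestrict (F n i), (hlip n i).continuousOn.domRestrict⟩
  have hc := isCompact_univ_pi (fun i : Fin d =>
    isCompact_bddLip (X := Y i) (E := ℂ) M (Real.toNNReal (M / (r / 2))))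
  obtain ⟨g, -, φ, hφ, hlim⟩ := hc.tendsto_subseq (x := G) (by
    intro n i _
    exact ⟨fun x => hM n i x (thick_mono (by linarith) (hYsub i x.2)),
      (lipschitzOnWith_iff_restrict.1 (hlip n i))⟩)
  refine ⟨φ, hφ, fun i z => if h : z ∈ Y i then g i ⟨z, h⟩ else 0, ?_⟩
  have hsub' : ∀ i, Metric.thickening (r / 4) (K i) ⊆ Y i := fun i =>
    Metric.thickening_subset_cthickening _ _
  have hun : ∀ η > 0, ∀ᶠ n in atTop, ∀ i, ∀ z ∈ Metric.thickening (r / 4) (K i),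
        ‖F (φ n) i z - (if h : z ∈ Y i then g i ⟨z, h⟩ else 0)‖ ≤ η := by
    intro η hη
    rw [eventually_all]
    intro i
    have hi := (tendsto_pi_nhds.1 hlim) i
    have := (Metric.tendsto_nhds.1 hi) η hη
    filter_upwards [this] with n hn z hz
    rw [dif_pos (hsub' i hz)]
    have h2 := ContinuousMap.dist_apply_le_dist (f := (G ∘ φ) n i) (g := g i) ⟨z, hsub' i hz⟩
    rw [dist_eq_norm] at h2
    exact h2.trans hn.le
  refine ⟨fun i => ?_, hun⟩
  have htl : TendstoLocallyUniformlyOn (fun n => F (φ n) i)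
      (fun z => if h : z ∈ Y i then g i ⟨z, h⟩ else 0) atTop (Metric.thickening (r / 4) (K i)) := by
    apply TendstoUniformlyOn.tendstoLocallyUniformlyOn
    rw [Metric.tendstoUniformlyOn_iff]
    intro ε hε
    filter_upwards [hun (ε / 2) (by positivity)] with n hn z hz
    rw [dist_comm, dist_eq_norm]
    have := hn i z hz
    linarith
  exact htl.differentiableOn (Eventually.of_forall fun n => (hF (φ n) i).mono
    (thick_mono (by linarith))) Metric.isOpen_thickening

lemma supIcc_le {a b M : ℝ} (hab : a < b) {f : ℝ → ℝ} (h : ∀ x ∈ Icc a b, |f x| ≤ M) :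
    supIcc a b f ≤ M := by
  apply csSup_le ((nonempty_Icc.2 hab.le).image _)
  rintro _ ⟨x, hx, rfl⟩
  exact h x hx

lemma supIcc_nonneg (a b : ℝ) (f : ℝ → ℝ) : 0 ≤ supIcc a b f := by
  apply Real.sSup_nonneg
  rintro _ ⟨x, hx, rfl⟩
  exact abs_nonneg _

lemma le_supIcc {a b : ℝ} {f : ℝ → ℝ} (hf : ContinuousOn f (Icc a b)) {x : ℝ} (hx : x ∈ Icc a b) :
    |f x| ≤ supIcc a b f := by
  apply le_csSup
  · exact (isCompact_Icc.image_of_continuousOn hf.abs).bddAbove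
  · exact ⟨x, hx, rfl⟩

lemma re_C1 {a b : ℝ} {F : ℂ → ℂ} {r : ℝ} (hr : 0 < r)
    (hF : DifferentiableOn ℂ F (Metric.thickening r (cutS a b))) :
    ContDiffOn ℝ 1 (fun x : ℝ => (F x).re) (Icc a b) := by
  have h1 : ContDiffOn ℝ 1 F (Metric.thickening r (cutS a b)) :=
    (hF.contDiffOn Metric.isOpen_thickening).restrict_scalars ℝ
  have h2 : ContDiffOn ℝ 1 (fun x : ℝ => F x) (Icc a b) :=
    h1.comp Complex.ofRealCLM.contDiff.contDiffOn (fun x hx =>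
      Metric.self_subset_thickening hr _ (ofReal_mem_cutS.2 hx))
  exact Complex.reCLM.contDiff.comp_contDiffOn h2

lemma re_sup {a b : ℝ} (hab : a < b) {F : ℂ → ℂ} {r M : ℝ} (hr : 0 < r)
    (hM : ∀ z ∈ Metric.thickening r (cutS a b), ‖F z‖ ≤ M) :
    supIcc a b (fun x : ℝ => (F x).re) ≤ M :=
  supIcc_le hab fun x hx => (Complex.abs_re_le_norm _).trans
    (hM x (Metric.self_subset_thickening hr _ (ofReal_mem_cutS.2 hx)))

lemma re_sup_deriv {a b : ℝ} (hab : a < b) {F : ℂ → ℂ} {r M : ℝ} (hr : 0 < r)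
    (hF : DifferentiableOn ℂ F (Metric.thickening r (cutS a b)))
    (hM : ∀ z ∈ Metric.thickening r (cutS a b), ‖F z‖ ≤ M) :
    supIcc a b (derivWithin (fun x : ℝ => (F x).re) (Icc a b)) ≤ M / (r / 2) := by
  apply supIcc_le hab
  intro x hx
  have hxm := ofReal_mem_cutS.2 hx
  have h := (diffAt_thick hF (Metric.self_subset_thickening hr _ hxm)).hasDerivAt.real_of_complex
  rw [h.hasDerivWithinAt.derivWithin (uniqueDiffOn_Icc hab x hx)]
  exact (Complex.abs_re_le_norm _).trans (deriv_bd hr hF hM _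
    (Metric.self_subset_thickening (by positivity) _ hxm))

/-- the `L¹` norm -/
def l1n (d : ℕ) (A B : Fin d → ℝ) (u : Fin d → ℝ → ℝ) : ℝ :=
  ∑ i, ∫ x, |u i x| ∂(arcsineMeasure (A i) (B i))

lemma l1n_nonneg (d : ℕ) (A B : Fin d → ℝ) (u : Fin d → ℝ → ℝ) : 0 ≤ l1n d A B u :=
  Finset.sum_nonneg fun i _ => integral_nonneg fun x => abs_nonneg _

lemma le_l1n (d : ℕ) (A B : Fin d → ℝ) (u : Fin d → ℝ → ℝ) (i : Fin d) :
    ∫ x, |u i x| ∂(arcsineMeasure (A i) (B i)) ≤ l1n d A B u :=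
  Finset.single_le_sum (f := fun i => ∫ x, |u i x| ∂(arcsineMeasure (A i) (B i)))
    (fun i _ => integral_nonneg fun x => abs_nonneg _) (Finset.mem_univ i)

lemma fH_unif_pair {a b p q a' b' : ℝ} (hab : a' < b') (ha : a ≤ a') (hb : b' ≤ b)
    (hd : Disjoint (Icc p q) (Icc a b)) :
    ∃ ε > 0, ∃ C ≥ 0, ∀ z ∈ Metric.thickening ε (cutS p q), z ∉ cutS a' b' ∧
      ∀ u : ℝ → ℝ, Integrable u (arcsineMeasure a' b') →
      ‖fH a' b' u z‖ ≤ C * ∫ x, |u x| ∂(arcsineMeasure a' b') := by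
  have hdis : Disjoint (cutS p q) (cutS a' b') := by
    rw [Set.disjoint_left]
    rintro _ ⟨t, ht, rfl⟩ h
    have := ofReal_mem_cutS.1 h
    exact Set.disjoint_left.1 hd ht ⟨ha.trans this.1, this.2.trans hb⟩
  obtain ⟨δ, hδ, hth⟩ := hdis.exists_thickenings (isCompact_cutS p q) (isClosed_cutS a' b')
  have hz1 : ∀ z ∈ Metric.thickening δ (cutS p q), ∀ t ∈ Icc a' b', δ ≤ ‖z - (t : ℂ)‖ := by
    intro z hz t ht
    by_contra hn
    refine Set.disjoint_left.1 hth hz (Metric.mem_thickening_iff.2 ⟨t, ofReal_mem_cutS.2 ht, ?_⟩)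
    rw [dist_eq_norm]
    exact not_le.1 hn
  have hz2 : ∀ z ∈ Metric.thickening δ (cutS p q), z ∉ cutS a' b' := by
    rintro z hz ⟨t, ht, rfl⟩
    have := hz1 _ hz t ht
    simp at this
    linarith
  have hsub : Metric.cthickening (δ / 2) (cutS p q) ⊆ Metric.thickening δ (cutS p q) :=
    Metric.cthickening_subset_thickening' hδ (by linarith) _
  obtain ⟨W, hW⟩ := (isCompact_cutS p q).cthickening.exists_bound_of_continuousOn
    ((wBranch_differentiableOn hab).continuousOn.mono
      (s := (cutS a' b')ᶜ) (t := Metric.cthickening (δ / 2) (cutS p q))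
      (fun z hz => hz2 z (hsub hz)))
  refine ⟨δ / 2, by positivity, |W| / δ, by positivity, fun z hz => ?_⟩
  have hzc := Metric.thickening_subset_cthickening _ _ hz
  have hzt := hsub hzc
  refine ⟨hz2 z hzt, fun u hu => (fH_bound hδ (hz1 z hzt) hu).trans ?_⟩
  have h0 : 0 ≤ ∫ x, |u x| ∂(arcsineMeasure a' b') := integral_nonneg fun x => abs_nonneg _
  have h1 : ‖wBranch a' b' z‖ ≤ |W| := (hW z hzc).trans (le_abs_self W)
  gcongr

lemma FH_unif {d : ℕ} {A B A' B' : Fin d → ℝ}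
    (hst : ∀ i, A i ≤ A' i ∧ A' i < B' i ∧ B' i ≤ B i)
    (hdisj : ∀ i j, i ≠ j → Disjoint (Icc (A i) (B i)) (Icc (A j) (B j))) :
    ∃ ε > 0, ∃ C ≥ 0, (∀ i j, i ≠ j → ∀ z ∈ Metric.thickening ε (cutS (A i) (B i)),
        z ∉ cutS (A' j) (B' j)) ∧ ∀ u : Fin d → ℝ → ℝ,
      (∀ i, Integrable (u i) (arcsineMeasure (A' i) (B' i))) → ∀ i,
      DifferentiableOn ℂ (FH d A' B' u i) (Metric.thickening ε (cutS (A i) (B i))) ∧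
      ∀ z ∈ Metric.thickening ε (cutS (A i) (B i)), ‖FH d A' B' u i z‖ ≤ C * l1n d A' B' u := by
  have h : ∀ i j : Fin d, ∃ ε > 0, ∃ C ≥ 0, i ≠ j →
      ∀ z ∈ Metric.thickening ε (cutS (A i) (B i)), z ∉ cutS (A' j) (B' j) ∧
      ∀ u : ℝ → ℝ, Integrable u (arcsineMeasure (A' j) (B' j)) →
      ‖fH (A' j) (B' j) u z‖ ≤ C * ∫ x, |u x| ∂(arcsineMeasure (A' j) (B' j)) := by
    intro i j
    by_cases hij : i = j
    · exact ⟨1, one_pos, 0, le_rfl, fun h => absurd hij h⟩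
    · obtain ⟨ε, hε, C, hC, H⟩ := fH_unif_pair (hst j).2.1 (hst j).1 (hst j).2.2 (hdisj i j hij)
      exact ⟨ε, hε, C, hC, fun _ => H⟩
  choose e he C hC H using h
  have hev : ∀ᶠ ε in 𝓝[>] (0 : ℝ), ∀ i j, ε ≤ e i j := by
    rw [eventually_all]; intro i
    rw [eventually_all]; intro j
    exact eventually_nhdsWithin_of_eventually_nhds ((eventually_lt_nhds (he i j)).mono
      fun _ h => h.le)
  obtain ⟨ε, hε, hε0⟩ := (hev.and self_mem_nhdsWithin).exists
  have hCC : ∀ i j, C i j ≤ ∑ i, ∑ j, C i j := fun i j =>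
    (Finset.single_le_sum (f := fun j => C i j) (fun j _ => hC i j) (Finset.mem_univ j)).trans
      (Finset.single_le_sum (f := fun i => ∑ j, C i j)
        (fun i _ => Finset.sum_nonneg fun j _ => hC i j) (Finset.mem_univ i))
  set CC := ∑ i, ∑ j, C i j with hCCdef
  have hCC0 : 0 ≤ CC := Finset.sum_nonneg fun i _ => Finset.sum_nonneg fun j _ => hC i j
  have hnot : ∀ i j, i ≠ j → ∀ z ∈ Metric.thickening ε (cutS (A i) (B i)),
        z ∉ cutS (A' j) (B' j) := fun i j hij z hz =>
    (H i j hij z (thick_mono (hε i j) hz)).1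
  refine ⟨ε, hε0, CC, hCC0, hnot, fun u hu i => ⟨?_, ?_⟩⟩
  · unfold FH
    apply DifferentiableOn.const_mul
    apply DifferentiableOn.fun_sum
    intro j hj
    exact (fH_differentiableOn (hst j).2.1 (hu j)).mono
      (fun z hz => hnot i j (Finset.ne_of_mem_erase hj).symm z hz)
  · intro z hz
    unfold FH
    rw [norm_mul]
    have h1 : ‖(-(1 / 2) : ℂ)‖ ≤ 1 := by norm_num
    have h2 : ‖∑ j ∈ Finset.univ.erase i, fH (A' j) (B' j) (u j) z‖ ≤ CC * l1n d A' B' u := by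
      refine (norm_sum_le _ _).trans ?_
      unfold l1n
      rw [Finset.mul_sum]
      refine (Finset.sum_le_sum (fun j hj => ?_)).trans
        (Finset.sum_le_sum_of_subset_of_nonneg (Finset.erase_subset i _) fun j _ _ => ?_)
      · refine ((H i j (Finset.ne_of_mem_erase hj).symm z (thick_mono (hε i j) hz)).2 _
          (hu j)).trans ?_
        exact mul_le_mul_of_nonneg_right (hCC i j) (integral_nonneg fun x => abs_nonneg _)
      · exact mul_nonneg hCC0 (integral_nonneg fun x => abs_nonneg _)
    calc _ ≤ 1 * ‖∑ j ∈ Finset.univ.erase i, fH (A' j) (B' j) (u j) z‖ := by gcongr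
      _ ≤ _ := by rw [one_mul]; exact h2

section pieces
variable {d : ℕ} {A B A' B' : Fin d → ℝ}
  {mem : (Fin d → ℝ → ℝ) → Prop} {nrm : (Fin d → ℝ → ℝ) → ℝ}

lemma bdd_piece (hst : ∀ i, A i ≤ A' i ∧ A' i < B' i ∧ B' i ≤ B i)
    (hdisj : ∀ i j, i ≠ j → Disjoint (Icc (A i) (B i)) (Icc (A j) (B j)))
    (h1 : ∃ c ≥ 0, ∀ u, mem u → (∀ i, Integrable (u i) (arcsineMeasure (A' i) (B' i))) ∧
      l1n d A' B' u ≤ c * nrm u)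
    (h2 : ∀ r > 0, ∃ D ≥ 0, ∀ (F : Fin d → ℂ → ℂ) (M : ℝ), 0 ≤ M →
      (∀ i, DifferentiableOn ℂ (F i) (Metric.thickening r (cutS (A i) (B i)))) →
      (∀ i, ∀ z ∈ Metric.thickening r (cutS (A i) (B i)), ‖F i z‖ ≤ M) →
      nrm (fun i x => (F i (x : ℂ)).re) ≤ D * M) :
    ∃ M : ℝ, ∀ u, mem u → nrm (fun i x => calH d A' B' u i x) ≤ M * nrm u := by
  obtain ⟨ε, hε, C, hC, -, H⟩ := FH_unif hst hdisj
  obtain ⟨c, hc, h1⟩ := h1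
  obtain ⟨D, hD, h2⟩ := h2 ε hε
  refine ⟨D * (C * c), fun u hu => ?_⟩
  obtain ⟨hi, hl⟩ := h1 u hu
  have := h2 (fun i => FH d A' B' u i) (C * l1n d A' B' u)
    (mul_nonneg hC (l1n_nonneg _ _ _ _)) (fun i => (H u hi i).1) (fun i => (H u hi i).2)
  simp only [calH_eq]
  refine this.trans ?_
  rw [mul_assoc, mul_assoc]
  gcongr

lemma cpt_piece (hst : ∀ i, A i ≤ A' i ∧ A' i < B' i ∧ B' i ≤ B i)
    (hdisj : ∀ i j, i ≠ j → Disjoint (Icc (A i) (B i)) (Icc (A j) (B j)))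
    (h0 : ∀ u, 0 ≤ nrm u)
    (h1 : ∃ c ≥ 0, ∀ u, mem u → (∀ i, Integrable (u i) (arcsineMeasure (A' i) (B' i))) ∧
      l1n d A' B' u ≤ c * nrm u)
    (h2 : ∀ r > 0, ∃ D ≥ 0, ∀ (F : Fin d → ℂ → ℂ) (M : ℝ), 0 ≤ M →
      (∀ i, DifferentiableOn ℂ (F i) (Metric.thickening r (cutS (A i) (B i)))) →
      (∀ i, ∀ z ∈ Metric.thickening r (cutS (A i) (B i)), ‖F i z‖ ≤ M) →
      nrm (fun i x => (F i (x : ℂ)).re) ≤ D * M)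
    (h3 : ∀ r > 0, ∀ (F : Fin d → ℂ → ℂ),
      (∀ i, DifferentiableOn ℂ (F i) (Metric.thickening r (cutS (A i) (B i)))) →
      mem (fun i x => (F i (x : ℂ)).re)) :
    ∀ u : ℕ → Fin d → ℝ → ℝ, (∀ n, mem (u n)) → (∀ n, nrm (u n) ≤ 1) →
    ∃ φ : ℕ → ℕ, StrictMono φ ∧ ∃ v : Fin d → ℝ → ℝ, mem v ∧
      Tendsto (fun n => nrm fun i x => calH d A' B' (u (φ n)) i x - v i x) atTop (𝓝 0) := by
  intro u hu hun
  obtain ⟨ε, hε, C, hC, -, H⟩ := FH_unif hst hdisj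
  obtain ⟨c, hc, h1⟩ := h1
  have hbd : ∀ n i, ∀ z ∈ Metric.thickening ε (cutS (A i) (B i)),
      ‖FH d A' B' (u n) i z‖ ≤ C * c := by
    intro n i z hz
    refine ((H (u n) (h1 _ (hu n)).1 i).2 z hz).trans ?_
    gcongr
    refine (h1 _ (hu n)).2.trans ?_
    have := hun n
    nlinarith
  obtain ⟨φ, hφ, g, hg, hlim⟩ := montel (K := fun i => cutS (A i) (B i))
    (fun i => isCompact_cutS _ _) (fun i => convex_cutS _ _) hε (mul_nonneg hC hc)
    (F := fun n i => FH d A' B' (u n) i) (fun n i => (H (u n) (h1 _ (hu n)).1 i).1) hbd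
  refine ⟨φ, hφ, fun i x => (g i x).re, h3 (ε / 4) (by positivity) g hg, ?_⟩
  obtain ⟨D, hD, h2⟩ := h2 (ε / 4) (by positivity)
  rw [Metric.tendsto_nhds]
  intro η hη
  filter_upwards [hlim (η / (2 * (D + 1))) (by positivity)] with n hn
  have h4 := h2 (fun i z => FH d A' B' (u (φ n)) i z - g i z) (η / (2 * (D + 1))) (by positivity)
    (fun i => (((H (u (φ n)) (h1 _ (hu (φ n))).1 i).1).mono (thick_mono (by linarith))).sub (hg i))
    hn
  simp only [Complex.sub_re, ← calH_eq] at h4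
  rw [Real.dist_eq, sub_zero, abs_of_nonneg (h0 _)]
  refine h4.trans_lt ?_
  rw [mul_div_assoc', div_lt_iff₀ (by positivity)]
  nlinarith

end pieces

lemma calH_add {d : ℕ} {A B : Fin d → ℝ} {u v : Fin d → ℝ → ℝ} {i : Fin d} {x : ℝ}
    (hx : ∀ j, j ≠ i → x ∉ Icc (A j) (B j))
    (hu : ∀ i, Integrable (u i) (arcsineMeasure (A i) (B i)))
    (hv : ∀ i, Integrable (v i) (arcsineMeasure (A i) (B i))) :
    calH d A B (fun i t => u i t + v i t) i x = calH d A B u i x + calH d A B v i x := by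
  unfold calH
  rw [← mul_add, ← Finset.sum_add_distrib]
  congr 1
  apply Finset.sum_congr rfl
  intro j hj
  rw [harmExt_eq, harmExt_eq, harmExt_eq, ← Complex.add_re, fH_add _ (hu j) (hv j)]
  exact fun h => hx j (Finset.ne_of_mem_erase hj) (ofReal_mem_cutS.1 h)

lemma calH_sub {d : ℕ} {A B : Fin d → ℝ} {u v : Fin d → ℝ → ℝ} {i : Fin d} {x : ℝ}
    (hx : ∀ j, j ≠ i → x ∉ Icc (A j) (B j))
    (hu : ∀ i, Integrable (u i) (arcsineMeasure (A i) (B i)))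
    (hv : ∀ i, Integrable (v i) (arcsineMeasure (A i) (B i))) :
    calH d A B (fun i t => u i t - v i t) i x = calH d A B u i x - calH d A B v i x := by
  unfold calH
  rw [← mul_sub, ← Finset.sum_sub_distrib]
  congr 1
  apply Finset.sum_congr rfl
  intro j hj
  rw [harmExt_eq, harmExt_eq, harmExt_eq, ← Complex.sub_re, fH_sub _ (hu j) (hv j)]
  exact fun h => hx j (Finset.ne_of_mem_erase hj) (ofReal_mem_cutS.1 h)

lemma calH_smul {d : ℕ} {A B : Fin d → ℝ} {u : Fin d → ℝ → ℝ} {i : Fin d} {x : ℝ} (c : ℝ) :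
    calH d A B (fun i t => c * u i t) i x = c * calH d A B u i x := by
  unfold calH
  rw [mul_left_comm c, Finset.mul_sum (a := c)]
  congr 1
  apply Finset.sum_congr rfl
  intro j hj
  rw [harmExt_eq, harmExt_eq, fH_smul, Complex.re_ofReal_mul]

lemma calH_congr {d : ℕ} {A B : Fin d → ℝ} {u v : Fin d → ℝ → ℝ}
    (h : ∀ j, ∀ᵐ t ∂(arcsineMeasure (A j) (B j)), u j t = v j t) (i : Fin d) (x : ℝ) :
    calH d A B u i x = calH d A B v i x := by
  unfold calH
  congr 1
  apply Finset.sum_congr rfl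
  intro j hj
  rw [harmExt_eq, harmExt_eq, fH_congr (h j)]

lemma calH_congr_Icc {d : ℕ} {A B : Fin d → ℝ} {u v : Fin d → ℝ → ℝ}
    (h : ∀ j, ∀ t ∈ Icc (A j) (B j), u j t = v j t) (i : Fin d) (x : ℝ) :
    calH d A B u i x = calH d A B v i x :=
  calH_congr (fun j => by filter_upwards [ars_ae_mem (A j) (B j)] with t ht using h j t ht) i x

section main
variable {d : ℕ} {A B A' B' : Fin d → ℝ}

lemma star_notMem (hst : ∀ i, A i ≤ A' i ∧ A' i < B' i ∧ B' i ≤ B i)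
    (hdisj : ∀ i j, i ≠ j → Disjoint (Icc (A i) (B i)) (Icc (A j) (B j)))
    {i : Fin d} {x : ℝ} (hx : x ∈ Icc (A i) (B i)) : ∀ j, j ≠ i → x ∉ Icc (A' j) (B' j) :=
  fun j hj h => Set.disjoint_left.1 (hdisj i j hj.symm) hx
    ⟨(hst j).1.trans h.1, h.2.trans (hst j).2.2⟩

lemma starIcc_sub (hst : ∀ i, A i ≤ A' i ∧ A' i < B' i ∧ B' i ≤ B i) (i : Fin d) :
    Icc (A' i) (B' i) ⊆ Icc (A i) (B i) := Icc_subset_Icc (hst i).1 (hst i).2.2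

lemma star_lt (hst : ∀ i, A i ≤ A' i ∧ A' i < B' i ∧ B' i ≤ B i) (i : Fin d) : A i < B i :=
  (hst i).1.trans_lt ((hst i).2.1.trans_le (hst i).2.2)

lemma star_int (hst : ∀ i, A i ≤ A' i ∧ A' i < B' i ∧ B' i ≤ B i) {u : Fin d → ℝ → ℝ}
    (hu : memVecC d A B u) (i : Fin d) : Integrable (u i) (arcsineMeasure (A' i) (B' i)) :=
  integrable_of_continuousOn (hst i).2.1 ((hu i).mono (starIcc_sub hst i))

lemma calH_C1 (hst : ∀ i, A i ≤ A' i ∧ A' i < B' i ∧ B' i ≤ B i)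
    (hdisj : ∀ i j, i ≠ j → Disjoint (Icc (A i) (B i)) (Icc (A j) (B j))) {u : Fin d → ℝ → ℝ}
    (hu : ∀ i, Integrable (u i) (arcsineMeasure (A' i) (B' i))) :
    memVecC1 d A B (fun i x => calH d A' B' u i x) := by
  intro i
  obtain ⟨ε, hε, C, hC, -, H⟩ := FH_unif hst hdisj
  simp only [calH_eq]
  exact re_C1 hε (H u hu i).1

lemma ker_star (hst : ∀ i, A i ≤ A' i ∧ A' i < B' i ∧ B' i ≤ B i)
    (hdisj : ∀ i j, i ≠ j → Disjoint (Icc (A i) (B i)) (Icc (A j) (B j))) {u : Fin d → ℝ → ℝ}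
    (hui : ∀ i, Integrable (u i) (arcsineMeasure (A' i) (B' i)))
    (hu : ∀ i, ∀ x ∈ Icc (A i) (B i), u i x = calH d A' B' u i x) :
    ∀ i, ∀ x ∈ Icc (A i) (B i), u i x = 0 := by
  have h := ker_trivial (fun i => (hst i).2.1)
    (fun i j hij => (hdisj i j hij).mono (starIcc_sub hst i) (starIcc_sub hst j)) hui
    (fun i x hx => hu i x (starIcc_sub hst i hx))
  intro i x hx
  rw [hu i x hx, calH_congr_Icc (v := fun i t => 0 * u i t) (fun j t ht => by rw [h j t ht]; simp),
    calH_smul, zero_mul]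

lemma uniq_star (hst : ∀ i, A i ≤ A' i ∧ A' i < B' i ∧ B' i ≤ B i)
    (hdisj : ∀ i j, i ≠ j → Disjoint (Icc (A i) (B i)) (Icc (A j) (B j))) {a u u' : Fin d → ℝ → ℝ}
    (hui : memVecC d A B u) (hui' : memVecC d A B u')
    (hu : ∀ i, ∀ x ∈ Icc (A i) (B i), u i x = calH d A' B' u i x + a i x)
    (hu' : ∀ i, ∀ x ∈ Icc (A i) (B i), u' i x = calH d A' B' u' i x + a i x) :
    ∀ i, ∀ x ∈ Icc (A i) (B i), u' i x = u i x := by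
  intro i x hx
  refine sub_eq_zero.1 (ker_star hst hdisj (u := fun i x => u' i x - u i x)
    (fun i => (star_int hst hui' i).sub (star_int hst hui i)) ?_ i x hx)
  intro i x hx
  rw [calH_sub (star_notMem hst hdisj hx) (star_int hst hui') (star_int hst hui),
    hu i x hx, hu' i x hx]
  ring

lemma l1_le_C (hst : ∀ i, A i ≤ A' i ∧ A' i < B' i ∧ B' i ≤ B i) :
    ∃ c ≥ 0, ∀ u, memVecC d A B u → (∀ i, Integrable (u i) (arcsineMeasure (A' i) (B' i))) ∧
      l1n d A' B' u ≤ c * vecCNorm d A B u := by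
  refine ⟨∑ i, (arcsineMeasure (A' i) (B' i)).real univ,
    Finset.sum_nonneg fun i _ => measureReal_nonneg, fun u hu => ⟨star_int hst hu, ?_⟩⟩
  unfold l1n vecCNorm
  rw [Finset.mul_sum]
  apply Finset.sum_le_sum
  intro i _
  have := ars_finite (hst i).2.1
  have h1 : ∫ x, |u i x| ∂(arcsineMeasure (A' i) (B' i)) ≤
      ∫ x, supIcc (A i) (B i) (u i) ∂(arcsineMeasure (A' i) (B' i)) := by
    apply integral_mono_ae (star_int hst hu i).abs (integrable_const _)
    filter_upwards [ars_ae_mem (A' i) (B' i)] with t ht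
    exact le_supIcc (hu i) (starIcc_sub hst i ht)
  rw [integral_const, smul_eq_mul] at h1
  refine h1.trans (mul_le_mul_of_nonneg_right ?_ (supIcc_nonneg _ _ _))
  exact Finset.single_le_sum (f := fun i => (arcsineMeasure (A' i) (B' i)).real univ)
    (fun i _ => measureReal_nonneg) (Finset.mem_univ i)

lemma C_le_C1 (u : Fin d → ℝ → ℝ) : vecCNorm d A B u ≤ vecC1Norm d A B u :=
  Finset.sum_le_sum fun _ _ => le_add_of_nonneg_right (supIcc_nonneg _ _ _)

lemma vecCNorm_nonneg (u : Fin d → ℝ → ℝ) : 0 ≤ vecCNorm d A B u :=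
  Finset.sum_nonneg fun _ _ => supIcc_nonneg _ _ _

lemma exists_sol (hst : ∀ i, A i ≤ A' i ∧ A' i < B' i ∧ B' i ≤ B i)
    (hdisj : ∀ i j, i ≠ j → Disjoint (Icc (A i) (B i)) (Icc (A j) (B j))) {a : Fin d → ℝ → ℝ}
    (ha : memVecC d A B a) : ∃ u, memVecC d A B u ∧
      ∀ i, ∀ x ∈ Icc (A i) (B i), u i x = calH d A' B' u i x + a i x := by
  have hAB := star_lt hst
  obtain ⟨ε, hε, C, hC, -, H⟩ := FH_unif hst hdisj
  obtain ⟨c, hc, h1⟩ := l1_le_C hst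
  let X := (i : Fin d) → C(Icc (A i) (B i), ℝ)
  let ex : X → Fin d → ℝ → ℝ := fun u i => IccExtend (hAB i).le (u i)
  have hexc : ∀ u, memVecC d A B (ex u) := fun u i => (u i).continuous.Icc_extend'.continuousOn
  have hexv : ∀ u i (x : Icc (A i) (B i)), ex u i x = u i x := fun u i x =>
    IccExtend_val _ _ _
  have hexi := fun u => star_int hst (hexc u)
  have hexn : ∀ u, l1n d A' B' (ex u) ≤ c * (d * ‖u‖) := by
    intro u
    refine (h1 _ (hexc u)).2.trans ?_
    gcongr
    have : vecCNorm d A B (ex u) ≤ ∑ _i : Fin d, ‖u‖ := by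
      apply Finset.sum_le_sum
      intro i _
      apply supIcc_le (hAB i)
      intro x hx
      rw [show ex u i x = u i ⟨x, hx⟩ from hexv u i ⟨x, hx⟩]
      exact ((u i).norm_coe_le_norm _).trans (norm_le_pi_norm u i)
    simpa using this
  let Tf : X → X := fun u i => ⟨fun x => calH d A' B' (ex u) i x,
    continuousOn_iff_continuous_domRestrict.1 ((calH_C1 hst hdisj (hexi u) i).continuousOn)⟩
  have hTv : ∀ u i (x : Icc (A i) (B i)), Tf u i x = calH d A' B' (ex u) i x := fun u i x => rfl
  let T0 : X →ₗ[ℝ] X :=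
    { toFun := Tf
      map_add' := by
        intro u v
        funext i
        ext x
        change calH d A' B' (ex (u + v)) i x = calH d A' B' (ex u) i x + calH d A' B' (ex v) i x
        rw [← calH_add (star_notMem hst hdisj x.2) (hexi u) (hexi v)]
        rfl
      map_smul' := by
        intro k u
        funext i
        ext x
        change calH d A' B' (ex (k • u)) i x = k * calH d A' B' (ex u) i x
        rw [← calH_smul]
        rfl }
  have hbd : ∀ u i, ∀ z ∈ Metric.thickening ε (cutS (A i) (B i)),
      ‖FH d A' B' (ex u) i z‖ ≤ C * (c * (d * ‖u‖)) := fun u i z hz =>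
    ((H (ex u) (hexi u) i).2 z hz).trans (mul_le_mul_of_nonneg_left (hexn u) hC)
  have hbd' : ∀ u i (x : Icc (A i) (B i)), ‖Tf u i x‖ ≤ C * (c * (d * ‖u‖)) := by
    intro u i x
    rw [hTv, calH_eq]
    exact (Complex.abs_re_le_norm _).trans
      (hbd u i x (Metric.self_subset_thickening hε _ (ofReal_mem_cutS.2 x.2)))
  let T : X →L[ℝ] X := T0.mkContinuous (C * (c * d)) (by
    intro u
    refine (pi_norm_le_iff_of_nonneg (by positivity)).2 fun i => ?_
    refine (ContinuousMap.norm_le _ (by positivity)).2 fun x => ?_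
    have := hbd' u i x
    calc _ ≤ _ := this
      _ = _ := by ring)
  have hTT : ∀ u, T u = Tf u := fun u => rfl
  have hcomp : IsCompactOperator T := by
    rw [isCompactOperator_iff_exists_mem_nhds_image_subset_compact]
    set M := C * (c * (d * 1)) with hM
    have hM0 : 0 ≤ M := by positivity
    refine ⟨Metric.closedBall 0 1, Metric.closedBall_mem_nhds _ one_pos, _,
      isCompact_univ_pi (fun i : Fin d =>
        isCompact_bddLip (X := Icc (A i) (B i)) (E := ℝ) M (Real.toNNReal (M / (ε / 2)))), ?_⟩
    rintro _ ⟨u, hu, rfl⟩ i -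
    have hun : ‖u‖ ≤ 1 := by simpa using hu
    have hle : C * (c * (d * ‖u‖)) ≤ M := by rw [hM]; gcongr
    refine ⟨fun x => (hbd' u i x).trans hle, ?_⟩
    have hl := lip_bd (convex_cutS (A i) (B i)) hε hM0 (H (ex u) (hexi u) i).1
      (fun z hz => (hbd u i z hz).trans hle)
    refine LipschitzWith.of_dist_le_mul fun x y => ?_
    rw [hTT, hTv, hTv, calH_eq, calH_eq, Real.dist_eq, ← Complex.sub_re]
    refine (Complex.abs_re_le_norm _).trans ?_
    have hm : ∀ x : Icc (A i) (B i), ((x : ℝ) : ℂ) ∈ Metric.thickening (ε / 2) (cutS (A i) (B i)) :=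
      fun x => Metric.self_subset_thickening (by positivity) _ (ofReal_mem_cutS.2 x.2)
    have := hl.dist_le_mul _ (hm x) _ (hm y)
    rw [dist_eq_norm, Complex.dist_of_im_eq (by simp)] at this
    rw [Complex.ofReal_re, Complex.ofReal_re] at this
    exact this
  have hres : (1 : ℝ) ∈ resolventSet ℝ T := by
    refine (hcomp.hasEigenvalue_or_mem_resolventSet one_ne_zero).resolve_left fun he => ?_
    obtain ⟨u, hu⟩ := he.exists_hasEigenvector
    have hu1 : T u = u := by simpa using hu.apply_eq_smul
    apply hu.2
    have hk := ker_star hst hdisj (u := ex u) (hexi u) (by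
      intro i x hx
      have h5 : ex u i x = u i ⟨x, hx⟩ := hexv u i ⟨x, hx⟩
      rw [h5]
      exact (congrArg (fun w : X => w i ⟨x, hx⟩) hu1).symm)
    funext i
    ext x
    rw [← hexv u i x, hk i x x.2]
    rfl
  rw [spectrum.mem_resolventSet_iff] at hres
  obtain ⟨U, hU⟩ := hres
  let a0 : X := fun i => ⟨(Icc (A i) (B i)).domRestrict (a i), (ha i).domRestrict⟩
  let u : X := (U⁻¹ : (X →L[ℝ] X)ˣ).val a0
  have hsol : u - T u = a0 := by
    have h6 : (U.val * (U⁻¹ : (X →L[ℝ] X)ˣ).val) a0 = a0 := by rw [Units.mul_inv]; rfl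
    rw [hU] at h6
    simpa [u] using h6
  refine ⟨ex u, hexc u, fun i x hx => ?_⟩
  have h7 := congrArg (fun w : X => w i ⟨x, hx⟩) hsol
  have h8 : u i ⟨x, hx⟩ - calH d A' B' (ex u) i x = a i x := h7
  rw [show ex u i x = u i ⟨x, hx⟩ from hexv u i ⟨x, hx⟩]
  linarith

lemma good_C (hst : ∀ i, A i ≤ A' i ∧ A' i < B' i ∧ B' i ≤ B i)
    (hdisj : ∀ i j, i ≠ j → Disjoint (Icc (A i) (B i)) (Icc (A j) (B j))) :
    OpGoodOn d A' B' A B (memVecC d A B) (vecCNorm d A B) := by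
  have hAB := star_lt hst
  have h2 : ∀ r > 0, ∃ D ≥ 0, ∀ (F : Fin d → ℂ → ℂ) (M : ℝ), 0 ≤ M →
      (∀ i, DifferentiableOn ℂ (F i) (Metric.thickening r (cutS (A i) (B i)))) →
      (∀ i, ∀ z ∈ Metric.thickening r (cutS (A i) (B i)), ‖F i z‖ ≤ M) →
      vecCNorm d A B (fun i x => (F i (x : ℂ)).re) ≤ D * M := by
    intro r hr
    refine ⟨d, Nat.cast_nonneg d, fun F M _ _ hM => ?_⟩
    have : vecCNorm d A B (fun i x => (F i (x : ℂ)).re) ≤ ∑ _i : Fin d, M :=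
      Finset.sum_le_sum fun i _ => re_sup (hAB i) hr (hM i)
    simpa using this
  refine ⟨bdd_piece hst hdisj (l1_le_C hst) h2, cpt_piece hst hdisj vecCNorm_nonneg
    (l1_le_C hst) h2 (fun r hr F hF i => (re_C1 hr (hF i)).continuousOn), fun a ha => ?_⟩
  obtain ⟨u, hu, hs⟩ := exists_sol hst hdisj ha
  exact ⟨u, hu, hs, fun u' hu' hs' => uniq_star hst hdisj hu hu' hs hs'⟩

lemma good_C1 (hst : ∀ i, A i ≤ A' i ∧ A' i < B' i ∧ B' i ≤ B i)
    (hdisj : ∀ i j, i ≠ j → Disjoint (Icc (A i) (B i)) (Icc (A j) (B j))) :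
    OpGoodOn d A' B' A B (memVecC1 d A B) (vecC1Norm d A B) := by
  have hAB := star_lt hst
  have h2 : ∀ r > 0, ∃ D ≥ 0, ∀ (F : Fin d → ℂ → ℂ) (M : ℝ), 0 ≤ M →
      (∀ i, DifferentiableOn ℂ (F i) (Metric.thickening r (cutS (A i) (B i)))) →
      (∀ i, ∀ z ∈ Metric.thickening r (cutS (A i) (B i)), ‖F i z‖ ≤ M) →
      vecC1Norm d A B (fun i x => (F i (x : ℂ)).re) ≤ D * M := by
    intro r hr
    refine ⟨d * (1 + 1 / (r / 2)), by positivity, fun F M _ hF hM => ?_⟩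
    have : vecC1Norm d A B (fun i x => (F i (x : ℂ)).re) ≤ ∑ _i : Fin d, (M + M / (r / 2)) :=
      Finset.sum_le_sum fun i _ => add_le_add (re_sup (hAB i) hr (hM i))
        (re_sup_deriv (hAB i) hr (hF i) (hM i))
    rw [Finset.sum_const, Finset.card_univ, Fintype.card_fin, nsmul_eq_mul] at this
    calc _ ≤ _ := this
      _ = _ := by ring
  have hCC : ∀ {u}, memVecC1 d A B u → memVecC d A B u := fun hu i => (hu i).continuousOn
  have h1 : ∃ c ≥ 0, ∀ u, memVecC1 d A B u →
      (∀ i, Integrable (u i) (arcsineMeasure (A' i) (B' i))) ∧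
      l1n d A' B' u ≤ c * vecC1Norm d A B u := by
    obtain ⟨c, hc, h⟩ := l1_le_C hst
    exact ⟨c, hc, fun u hu => ⟨(h u (hCC hu)).1,
      (h u (hCC hu)).2.trans (mul_le_mul_of_nonneg_left (C_le_C1 u) hc)⟩⟩
  refine ⟨bdd_piece hst hdisj h1 h2,
    cpt_piece hst hdisj (fun u => (vecCNorm_nonneg u).trans (C_le_C1 u))
    h1 h2 (fun r hr F hF i => re_C1 hr (hF i)), fun a ha => ?_⟩
  obtain ⟨u, hu, hs⟩ := exists_sol hst hdisj (hCC ha)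
  refine ⟨u, fun i => ?_, hs, fun u' hu' hs' => uniq_star hst hdisj hu (hCC hu') hs hs'⟩
  exact ((calH_C1 hst hdisj (star_int hst hu) i).add (ha i)).congr (hs i)

end main

/-- Lemma 3.6: `ℋ_{Δ⃗}` is a bounded compact linear operator on each of
`L¹(ω_{Δ⃗})`, `C(Δ⃗)`, `C¹(Δ⃗)` and `I − ℋ_{Δ⃗}` is invertible there; similarly for
`ℋ_{Δ⃗*,Δ⃗}` on `C(Δ⃗)` and `C¹(Δ⃗)`. -/
theorem calH_bounded_compact_invertible
    (d : ℕ) (A B : Fin d → ℝ) (hAB : ∀ i, A i < B i)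
    (hdisj : ∀ i j, i ≠ j → Disjoint (Set.Icc (A i) (B i)) (Set.Icc (A j) (B j))) :
    -- `L¹(ω_{Δ⃗})` version of boundedness, compactness and invertibility for `ℋ_{Δ⃗}`
    ((∃ M : ℝ, ∀ u : Fin d → ℝ → ℝ,
        (∀ i, Integrable (u i) (arcsineMeasure (A i) (B i))) →
        (∑ i, ∫ x, |calH d A B u i x| ∂(arcsineMeasure (A i) (B i))) ≤
          M * ∑ i, ∫ x, |u i x| ∂(arcsineMeasure (A i) (B i))) ∧
      (∀ u : ℕ → Fin d → ℝ → ℝ,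
        (∀ n i, Integrable (u n i) (arcsineMeasure (A i) (B i))) →
        (∀ n, (∑ i, ∫ x, |u n i x| ∂(arcsineMeasure (A i) (B i))) ≤ 1) →
        ∃ φ : ℕ → ℕ, StrictMono φ ∧ ∃ v : Fin d → ℝ → ℝ,
          (∀ i, Integrable (v i) (arcsineMeasure (A i) (B i))) ∧
          Tendsto (fun n => ∑ i, ∫ x, |calH d A B (u (φ n)) i x - v i x|
            ∂(arcsineMeasure (A i) (B i))) atTop (𝓝 0)) ∧
      (∀ a : Fin d → ℝ → ℝ,
        (∀ i, Integrable (a i) (arcsineMeasure (A i) (B i))) →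
        ∃ u : Fin d → ℝ → ℝ,
          (∀ i, Integrable (u i) (arcsineMeasure (A i) (B i))) ∧
          (∀ i, ∀ᵐ x ∂(arcsineMeasure (A i) (B i)), u i x = calH d A B u i x + a i x) ∧
          ∀ u' : Fin d → ℝ → ℝ,
            (∀ i, Integrable (u' i) (arcsineMeasure (A i) (B i))) →
            (∀ i, ∀ᵐ x ∂(arcsineMeasure (A i) (B i)), u' i x = calH d A B u' i x + a i x) →
            ∀ i, ∀ᵐ x ∂(arcsineMeasure (A i) (B i)), u' i x = u i x)) ∧
    -- `C(Δ⃗)` and `C¹(Δ⃗)` versions for `ℋ_{Δ⃗}`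
    OpGoodOn d A B A B (memVecC d A B) (vecCNorm d A B) ∧
    OpGoodOn d A B A B (memVecC1 d A B) (vecC1Norm d A B) ∧
    -- `C(Δ⃗)` and `C¹(Δ⃗)` versions for `ℋ_{Δ⃗*,Δ⃗}` with `Δ*_i ⊆ Δ_i`
    (∀ Astar Bstar : Fin d → ℝ,
      (∀ i, A i ≤ Astar i ∧ Astar i < Bstar i ∧ Bstar i ≤ B i) →
      OpGoodOn d Astar Bstar A B (memVecC d A B) (vecCNorm d A B) ∧
      OpGoodOn d Astar Bstar A B (memVecC1 d A B) (vecC1Norm d A B)) := by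
  have hst : ∀ i, A i ≤ A i ∧ A i < B i ∧ B i ≤ B i := fun i => ⟨le_rfl, hAB i, le_rfl⟩
  have hCI : ∀ {u}, memVecC d A B u → ∀ i, Integrable (u i) (arcsineMeasure (A i) (B i)) :=
    fun hu => star_int hst hu
  have hHC : ∀ {u : Fin d → ℝ → ℝ}, (∀ i, Integrable (u i) (arcsineMeasure (A i) (B i))) →
      memVecC d A B (fun i x => calH d A B u i x) :=
    fun hu i => (calH_C1 hst hdisj hu i).continuousOn
  have h1 : ∃ c ≥ 0, ∀ u : Fin d → ℝ → ℝ,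
      (∀ i, Integrable (u i) (arcsineMeasure (A i) (B i))) →
      (∀ i, Integrable (u i) (arcsineMeasure (A i) (B i))) ∧
      l1n d A B u ≤ c * l1n d A B u :=
    ⟨1, zero_le_one, fun u hu => ⟨hu, by rw [one_mul]⟩⟩
  have h3 : ∀ r > 0, ∀ (F : Fin d → ℂ → ℂ),
      (∀ i, DifferentiableOn ℂ (F i) (Metric.thickening r (cutS (A i) (B i)))) →
      ∀ i, Integrable (fun x : ℝ => (F i (x : ℂ)).re) (arcsineMeasure (A i) (B i)) :=
    fun r hr F hF i => integrable_of_continuousOn (hAB i) (re_C1 hr (hF i)).continuousOn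
  have h2 : ∀ r > 0, ∃ D ≥ 0, ∀ (F : Fin d → ℂ → ℂ) (M : ℝ), 0 ≤ M →
      (∀ i, DifferentiableOn ℂ (F i) (Metric.thickening r (cutS (A i) (B i)))) →
      (∀ i, ∀ z ∈ Metric.thickening r (cutS (A i) (B i)), ‖F i z‖ ≤ M) →
      l1n d A B (fun i x => (F i (x : ℂ)).re) ≤ D * M := by
    intro r hr
    refine ⟨∑ i, (arcsineMeasure (A i) (B i)).real univ,
      Finset.sum_nonneg fun i _ => measureReal_nonneg, fun F M _ hF hM => ?_⟩
    rw [Finset.sum_mul]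
    apply Finset.sum_le_sum
    intro i _
    have := ars_finite (hAB i)
    have h4 : ∫ x : ℝ, |(F i (x : ℂ)).re| ∂(arcsineMeasure (A i) (B i)) ≤
        ∫ _x, M ∂(arcsineMeasure (A i) (B i)) := by
      apply integral_mono_ae (h3 r hr F hF i).abs (integrable_const _)
      filter_upwards [ars_ae_mem (A i) (B i)] with t ht
      exact (Complex.abs_re_le_norm _).trans
        (hM i t (Metric.self_subset_thickening hr _ (ofReal_mem_cutS.2 ht)))
    rwa [integral_const, smul_eq_mul] at h4
  refine ⟨⟨bdd_piece hst hdisj h1 h2, cpt_piece hst hdisj (l1n_nonneg d A B) h1 h2 h3, ?_⟩,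
    good_C hst hdisj, good_C1 hst hdisj,
    fun As Bs hs => ⟨good_C hs hdisj, good_C1 hs hdisj⟩⟩
  intro a ha
  obtain ⟨g, hg, hgs⟩ := exists_sol hst hdisj (hHC ha)
  have hui : ∀ i, Integrable (fun x => g i x + a i x) (arcsineMeasure (A i) (B i)) :=
    fun i => (hCI hg i).add (ha i)
  have hus : ∀ i, ∀ᵐ x ∂(arcsineMeasure (A i) (B i)),
      g i x + a i x = calH d A B (fun i x => g i x + a i x) i x + a i x := by
    intro i
    filter_upwards [ars_ae_mem (A i) (B i)] with x hx
    rw [calH_add (star_notMem hst hdisj hx) (hCI hg) ha, hgs i x hx]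
  refine ⟨fun i x => g i x + a i x, hui, hus, fun u' hui' hus' i => ?_⟩
  let w : Fin d → ℝ → ℝ := fun i x => u' i x - (g i x + a i x)
  have hwi : ∀ i, Integrable (w i) (arcsineMeasure (A i) (B i)) := fun i => (hui' i).sub (hui i)
  have hw : ∀ i, ∀ᵐ x ∂(arcsineMeasure (A i) (B i)), w i x = calH d A B w i x := by
    intro i
    filter_upwards [ars_ae_mem (A i) (B i), hus i, hus' i] with x hx h5 h6
    have h7 := calH_sub (star_notMem hst hdisj hx) hui' hui
    change u' i x - (g i x + a i x) = calH d A B (fun i t => u' i t - (g i t + a i t)) i x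
    rw [h7, h5, h6]
    ring
  have hz := ker_trivial hAB hdisj (u := fun i x => calH d A B w i x) (hCI (hHC hwi))
    (fun i x _ => calH_congr hw i x)
  filter_upwards [ars_ae_mem (A i) (B i), hw i] with x hx h8
  have h9 : u' i x - (g i x + a i x) = 0 := h8.trans (hz i x hx)
  linarith

end
end
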